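/- arXiv:1507.06964 — 10 statements merged into one kernel-verified Lean document; each statement's English description precedes it below -/
import Mathlib

section
/- Let n ≥ 1, α > 0, ν > 0, and let v₀ ∈ H¹(ℝⁿ). Let v(t) be the solution of the linear Navier–Stokes–Voigt equation with datum v₀, i.e. v̂(ξ,t) = e^{tM(ξ)} v̂₀(ξ) with M(ξ) = −ν|ξ|²/(1+α²|ξ|²). Suppose that for some r ∈ (−n/2, ∞) one has liminf_{ρ→0⁺} ρ^{−2r−n} ∫_{|ξ|≤ρ} |v̂₀(ξ)|² dξ > 0. Then there exists a constant C > 0 such that for all t > 0, ‖v(t)‖²_{L²} + α²‖∇v(t)‖²_{L²} ≥ C (1+t)^{−(n/2+r)}. -/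
open MeasureTheory Filter Topology Metric

/-- **Lower decay bound for the linear Navier–Stokes–Voigt equation.**
If the decay indicator of `v₀` at `r` has positive liminf as `ρ → 0⁺`, then the `H¹_α`
energy of the solution `v̂(ξ,t) = e^{tM(ξ)} v̂₀(ξ)`, `M(ξ) = -ν|ξ|²/(1+α²|ξ|²)`, is bounded
below by `C (1+t)^{-(n/2+r)}`.  By Plancherel,
`‖v(t)‖²_{L²} + α²‖∇v(t)‖²_{L²} = ∫ (1+α²|ξ|²) e^{2tM(ξ)} |v̂₀(ξ)|² dξ`. -/
theorem linear_NSV_lower_decay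
    (n : ℕ) (hn : 1 ≤ n) (α ν : ℝ) (hα : 0 < α) (hν : 0 < ν)
    (F0 : EuclideanSpace ℝ (Fin n) → ℂ)
    (hH1 : Integrable (fun ξ : EuclideanSpace ℝ (Fin n) => (1 + ‖ξ‖ ^ 2) * ‖F0 ξ‖ ^ 2))
    (r : ℝ) (hr : -(n : ℝ) / 2 < r)
    (hliminf : ∃ c > (0:ℝ), ∀ᶠ ρ in 𝓝[>] (0:ℝ),
      c ≤ ρ ^ (-(2 * r) - (n : ℝ)) *
        ∫ ξ in closedBall (0 : EuclideanSpace ℝ (Fin n)) ρ, ‖F0 ξ‖ ^ 2) :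
    ∃ C > (0:ℝ), ∀ t > (0:ℝ),
      C * (1 + t) ^ (-((n : ℝ) / 2 + r)) ≤
        ∫ ξ : EuclideanSpace ℝ (Fin n),
          (1 + α ^ 2 * ‖ξ‖ ^ 2) *
            (Real.exp (2 * t * (-(ν * ‖ξ‖ ^ 2) / (1 + α ^ 2 * ‖ξ‖ ^ 2))) * ‖F0 ξ‖ ^ 2) := by
  obtain ⟨c, hc, hev⟩ := hliminf
  rw [eventually_nhdsWithin_iff, Metric.eventually_nhds_iff] at hev
  obtain ⟨ε, hε, hev⟩ := hev
  set δ := ε / 2 with hδ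
  have hδ0 : 0 < δ := by positivity
  have key : ∀ k : EuclideanSpace ℝ (Fin n) → ℝ, Continuous k →
      (∀ ξ, 0 ≤ k ξ) → (∃ B, ∀ ξ, k ξ ≤ B * (1 + ‖ξ‖ ^ 2)) →
      Integrable (fun ξ => k ξ * ‖F0 ξ‖ ^ 2) := by
    rintro k hk hk0 ⟨B, hB⟩
    have hpos : ∀ ξ : EuclideanSpace ℝ (Fin n), 0 < 1 + ‖ξ‖ ^ 2 := fun ξ => by positivity
    have h1 := hH1.bdd_mul (c := B) (f := fun ξ => k ξ / (1 + ‖ξ‖ ^ 2))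
      (Continuous.aestronglyMeasurable
        (hk.div (by fun_prop) (fun ξ => (hpos ξ).ne')))
      (Eventually.of_forall fun ξ => by
        rw [Real.norm_of_nonneg (div_nonneg (hk0 ξ) (hpos ξ).le), div_le_iff₀ (hpos ξ)]
        exact hB ξ)
    refine h1.congr (Eventually.of_forall fun ξ => ?_)
    have := (hpos ξ).ne'
    simp only
    field_simp
  have hF : Integrable (fun ξ => ‖F0 ξ‖ ^ 2) := by
    simpa using key (fun _ => 1) continuous_const (fun _ => zero_le_one)
      ⟨1, fun ξ => by nlinarith [sq_nonneg ‖ξ‖]⟩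
  have hd : ∀ ξ : EuclideanSpace ℝ (Fin n), 0 < 1 + α ^ 2 * ‖ξ‖ ^ 2 := fun ξ => by positivity
  refine ⟨Real.exp (-(2 * ν * δ ^ 2)) * (c * δ ^ (2 * r + n)), by positivity, fun t ht => ?_⟩
  have hG : Integrable (fun ξ : EuclideanSpace ℝ (Fin n) => (1 + α ^ 2 * ‖ξ‖ ^ 2) *
            (Real.exp (2 * t * (-(ν * ‖ξ‖ ^ 2) / (1 + α ^ 2 * ‖ξ‖ ^ 2))) * ‖F0 ξ‖ ^ 2)) := by
    simp only [← mul_assoc]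
    refine key _ ?_ (fun ξ => by positivity) ⟨1 + α ^ 2, fun ξ => ?_⟩
    · have : ∀ ξ : EuclideanSpace ℝ (Fin n), 1 + α ^ 2 * ‖ξ‖ ^ 2 ≠ 0 := fun ξ => (hd ξ).ne'
      fun_prop (disch := assumption)
    · have he : Real.exp (2 * t * (-(ν * ‖ξ‖ ^ 2) / (1 + α ^ 2 * ‖ξ‖ ^ 2))) ≤ 1 := by
        rw [Real.exp_le_one_iff]
        exact mul_nonpos_of_nonneg_of_nonpos (by positivity)
          (div_nonpos_of_nonpos_of_nonneg (by simp; positivity) (hd ξ).le)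
      calc _ ≤ (1 + α ^ 2 * ‖ξ‖ ^ 2) * 1 := mul_le_mul_of_nonneg_left he (hd ξ).le
        _ ≤ _ := by nlinarith [sq_nonneg ‖ξ‖, sq_nonneg α]
  have ht1 : 0 < 1 + t := by linarith
  set ρ := δ * (1 + t) ^ (-(1 / 2) : ℝ) with hρ
  have hρ0 : 0 < ρ := by positivity
  have hρle : ρ ≤ δ := by
    have : (1 + t) ^ (-(1 / 2) : ℝ) ≤ 1 :=
      Real.rpow_le_one_of_one_le_of_nonpos (by linarith) (by norm_num)
    nlinarith
  have hρ2 : ρ ^ 2 * (1 + t) = δ ^ 2 := by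
    have : ((1 + t) ^ (-(1 / 2) : ℝ)) ^ 2 = (1 + t)⁻¹ := by
      rw [← Real.rpow_natCast, ← Real.rpow_mul ht1.le, ← Real.rpow_neg_one]
      norm_num
    rw [hρ, mul_pow, this]
    field_simp
  have h := hev (y := ρ) (by rw [Real.dist_eq, sub_zero, abs_of_pos hρ0]; linarith) hρ0
  set I := ∫ ξ in closedBall (0 : EuclideanSpace ℝ (Fin n)) ρ, ‖F0 ξ‖ ^ 2 with hI
  have hIle : c * (δ ^ (2 * r + n) * (1 + t) ^ (-((n : ℝ) / 2 + r))) ≤ I := by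
    have e1 : ρ ^ (2 * r + n) = δ ^ (2 * r + n) * (1 + t) ^ (-((n : ℝ) / 2 + r)) := by
      rw [hρ, Real.mul_rpow hδ0.le (by positivity), ← Real.rpow_mul ht1.le]
      congr 2
      ring
    rw [← e1]
    have e2 : ρ ^ (-(2 * r) - (n : ℝ)) * ρ ^ (2 * r + n) = 1 := by
      rw [← Real.rpow_add hρ0]
      ring_nf
      simp
    calc c * ρ ^ (2 * r + n) ≤ (ρ ^ (-(2 * r) - (n : ℝ)) * I) * ρ ^ (2 * r + n) :=
          mul_le_mul_of_nonneg_right h (by positivity)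
      _ = (ρ ^ (-(2 * r) - (n : ℝ)) * ρ ^ (2 * r + n)) * I := by ring
      _ = I := by rw [e2, one_mul]
  calc _ = Real.exp (-(2 * ν * δ ^ 2)) *
        (c * (δ ^ (2 * r + n) * (1 + t) ^ (-((n : ℝ) / 2 + r)))) := by ring
    _ ≤ Real.exp (-(2 * ν * δ ^ 2)) * I := mul_le_mul_of_nonneg_left hIle (by positivity)
    _ = ∫ ξ in closedBall (0 : EuclideanSpace ℝ (Fin n)) ρ,
          Real.exp (-(2 * ν * δ ^ 2)) * ‖F0 ξ‖ ^ 2 := by rw [hI, integral_const_mul]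
    _ ≤ ∫ ξ in closedBall (0 : EuclideanSpace ℝ (Fin n)) ρ, (1 + α ^ 2 * ‖ξ‖ ^ 2) *
            (Real.exp (2 * t * (-(ν * ‖ξ‖ ^ 2) / (1 + α ^ 2 * ‖ξ‖ ^ 2))) * ‖F0 ξ‖ ^ 2) := by
        refine setIntegral_mono_on (hF.const_mul _).integrableOn hG.integrableOn
          measurableSet_closedBall (fun ξ hξ => ?_)
        rw [mem_closedBall_zero_iff] at hξ
        have hq : ‖ξ‖ ^ 2 ≤ ρ ^ 2 := by gcongr
        have he : Real.exp (-(2 * ν * δ ^ 2)) ≤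
            Real.exp (2 * t * (-(ν * ‖ξ‖ ^ 2) / (1 + α ^ 2 * ‖ξ‖ ^ 2))) := by
          rw [Real.exp_le_exp]
          have a1 : ν * ‖ξ‖ ^ 2 / (1 + α ^ 2 * ‖ξ‖ ^ 2) ≤ ν * ‖ξ‖ ^ 2 :=
            div_le_self (by positivity) (by nlinarith [mul_nonneg (sq_nonneg α) (sq_nonneg ‖ξ‖)])
          have a2 : ν * ‖ξ‖ ^ 2 ≤ ν * ρ ^ 2 := by gcongr
          have a3 : t * (ν * ‖ξ‖ ^ 2 / (1 + α ^ 2 * ‖ξ‖ ^ 2)) ≤ t * (ν * ρ ^ 2) :=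
            mul_le_mul_of_nonneg_left (a1.trans a2) ht.le
          have a4 : 0 ≤ ν * ρ ^ 2 := by positivity
          rw [neg_div, ← hρ2]
          nlinarith
        calc _ ≤ Real.exp (2 * t * (-(ν * ‖ξ‖ ^ 2) / (1 + α ^ 2 * ‖ξ‖ ^ 2))) * ‖F0 ξ‖ ^ 2 :=
              mul_le_mul_of_nonneg_right he (by positivity)
          _ ≤ _ := le_mul_of_one_le_left (by positivity)
              (by nlinarith [mul_nonneg (sq_nonneg α) (sq_nonneg ‖ξ‖)])
    _ ≤ _ := setIntegral_le_integral hG (Eventually.of_forall fun ξ => by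
        simp only [Pi.zero_apply]; positivity)
end

section
/- Let n ≥ 1 and α, ν > 0 with ν > α². Let v₀ ∈ H¹(ℝⁿ) and let v(t) be the solution of the linear Navier–Stokes–Voigt equation with datum v₀, i.e. v̂(ξ,t) = e^{tM(ξ)} v̂₀(ξ) with M(ξ) = −ν|ξ|²/(1+α²|ξ|²). Suppose that for some r ∈ (−n/2, ∞) one has limsup_{ρ→0⁺} ρ^{−2r−n} ∫_{|ξ|≤ρ} |v̂₀(ξ)|² dξ < ∞. Then there exist constants C₂, C₃ > 0 such that for all t > 0, ‖v(t)‖²_{L²} + α²‖∇v(t)‖²_{L²} ≤ C₂ (C₃+t)^{−(n/2+r)}. -/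
open MeasureTheory Filter Topology Metric

theorem nsv_exp_bound (α ν x m t : ℝ) (hν : 0 < ν) (ht : 0 < t)
    (h1 : m ≤ t * x ^ 2) (h2 : m * α ^ 2 ≤ t) :
    Real.exp (2 * t * (-(ν * x ^ 2) / (1 + α ^ 2 * x ^ 2))) ≤
      Real.exp (-(ν * m / 2)) *
        Real.exp (2 * (t / 2) * (-(ν * x ^ 2) / (1 + α ^ 2 * x ^ 2))) := by
  rw [← Real.exp_add]
  apply Real.exp_le_exp.2
  have hp : 0 < 1 + α ^ 2 * x ^ 2 := by positivity
  have key : t * (-(ν * x ^ 2) / (1 + α ^ 2 * x ^ 2)) ≤ -(ν * m / 2) := by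
    rw [mul_div_assoc', div_le_iff₀ hp]
    have h3 : m * α ^ 2 * x ^ 2 ≤ t * x ^ 2 := mul_le_mul_of_nonneg_right h2 (sq_nonneg x)
    have h4 : ν * (m + m * α ^ 2 * x ^ 2) ≤ ν * (2 * (t * x ^ 2)) :=
      mul_le_mul_of_nonneg_left (by linarith) hν.le
    nlinarith
  linarith

/-- **Upper decay bound for the linear Navier–Stokes–Voigt equation.**
If `ν > α²` and the decay indicator of `v₀` at `r` has finite limsup as `ρ → 0⁺`, then the
`H¹_α` energy of the solution `v̂(ξ,t) = e^{tM(ξ)} v̂₀(ξ)`, `M(ξ) = -ν|ξ|²/(1+α²|ξ|²)`, is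
bounded above by `C₂ (C₃+t)^{-(n/2+r)}`.  By Plancherel,
`‖v(t)‖²_{L²} + α²‖∇v(t)‖²_{L²} = ∫ (1+α²|ξ|²) e^{2tM(ξ)} |v̂₀(ξ)|² dξ`. -/
theorem linear_NSV_upper_decay
    (n : ℕ) (hn : 1 ≤ n) (α ν : ℝ) (hα : 0 < α) (hν : 0 < ν) (hνα : α ^ 2 < ν)
    (F0 : EuclideanSpace ℝ (Fin n) → ℂ)
    (hH1 : Integrable (fun ξ : EuclideanSpace ℝ (Fin n) => (1 + ‖ξ‖ ^ 2) * ‖F0 ξ‖ ^ 2))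
    (r : ℝ) (hr : -(n : ℝ) / 2 < r)
    (hlimsup : ∃ c : ℝ, ∀ᶠ ρ in 𝓝[>] (0:ℝ),
      ρ ^ (-(2 * r) - (n : ℝ)) *
        (∫ ξ in closedBall (0 : EuclideanSpace ℝ (Fin n)) ρ, ‖F0 ξ‖ ^ 2) ≤ c) :
    ∃ C₂ > (0:ℝ), ∃ C₃ > (0:ℝ), ∀ t > (0:ℝ),
      (∫ ξ : EuclideanSpace ℝ (Fin n),
          (1 + α ^ 2 * ‖ξ‖ ^ 2) *
            (Real.exp (2 * t * (-(ν * ‖ξ‖ ^ 2) / (1 + α ^ 2 * ‖ξ‖ ^ 2))) * ‖F0 ξ‖ ^ 2))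
        ≤ C₂ * (C₃ + t) ^ (-((n : ℝ) / 2 + r)) := by
  obtain ⟨c, hc⟩ := hlimsup
  obtain ⟨ρ₀, hρ₀, hball⟩ := (mem_nhdsGT_iff_exists_Ioo_subset (a := (0:ℝ))).1 hc
  have hρ₀ : 0 < ρ₀ := hρ₀
  set s : ℝ := (n : ℝ) / 2 + r with hs
  have hs0 : 0 < s := by rw [hs]; linarith
  set g : EuclideanSpace ℝ (Fin n) → ℝ := fun ξ => ‖F0 ξ‖ ^ 2 with hg
  have hg0 : ∀ ξ, 0 ≤ g ξ := fun ξ => by simp only [hg]; positivity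
  have hwc : Continuous (fun ξ : EuclideanSpace ℝ (Fin n) => (1 + ‖ξ‖ ^ 2)⁻¹) := by
    apply Continuous.inv₀ (by fun_prop)
    intro ξ; positivity
  have hgm : AEStronglyMeasurable g volume := by
    have h := hwc.aestronglyMeasurable (μ := volume) |>.mul hH1.aestronglyMeasurable
    refine h.congr (Eventually.of_forall fun ξ => ?_)
    have : (1 + ‖ξ‖ ^ 2) ≠ 0 := by positivity
    simp only [hg, Pi.mul_apply]
    field_simp
  have hgi : Integrable g volume := by
    refine hH1.mono' hgm (Eventually.of_forall fun ξ => ?_)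
    rw [Real.norm_of_nonneg (hg0 ξ)]
    have := mul_nonneg (sq_nonneg ‖ξ‖) (hg0 ξ)
    simp only [hg] at *
    linarith
  set e : ℝ → EuclideanSpace ℝ (Fin n) → ℝ := fun t ξ => (1 + α ^ 2 * ‖ξ‖ ^ 2) *
            (Real.exp (2 * t * (-(ν * ‖ξ‖ ^ 2) / (1 + α ^ 2 * ‖ξ‖ ^ 2))) * ‖F0 ξ‖ ^ 2) with he
  have he0 : ∀ t ξ, 0 ≤ e t ξ := fun t ξ => by simp only [he]; positivity
  have hwi : Integrable (fun ξ => (1 + α ^ 2 * ‖ξ‖ ^ 2) * g ξ) volume := by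
    refine (hH1.const_mul (1 + α ^ 2)).mono' (AEStronglyMeasurable.mul
      (Continuous.aestronglyMeasurable (by fun_prop)) hgm) (Eventually.of_forall fun ξ => ?_)
    rw [Real.norm_of_nonneg (mul_nonneg (by positivity) (hg0 ξ))]
    rw [← mul_assoc]
    refine mul_le_mul_of_nonneg_right ?_ (hg0 ξ)
    nlinarith [sq_nonneg ‖ξ‖, sq_nonneg α]
  have hexp1 : ∀ t, 0 ≤ t → ∀ ξ : EuclideanSpace ℝ (Fin n),
      Real.exp (2 * t * (-(ν * ‖ξ‖ ^ 2) / (1 + α ^ 2 * ‖ξ‖ ^ 2))) ≤ 1 := by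
    intro t ht ξ
    apply Real.exp_le_one_iff.2
    apply mul_nonpos_of_nonneg_of_nonpos (by positivity)
    apply div_nonpos_of_nonpos_of_nonneg
    · have : 0 ≤ ν * ‖ξ‖ ^ 2 := by positivity
      linarith
    · positivity
  have hew : ∀ t, 0 ≤ t → ∀ ξ, e t ξ ≤ (1 + α ^ 2 * ‖ξ‖ ^ 2) * g ξ := by
    intro t ht ξ
    refine mul_le_mul_of_nonneg_left ?_ (by positivity)
    exact mul_le_of_le_one_left (hg0 ξ) (hexp1 t ht ξ)
  have hei : ∀ t, 0 ≤ t → Integrable (e t) volume := by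
    intro t ht
    refine hwi.mono' ?_ (Eventually.of_forall fun ξ => ?_)
    · refine AEStronglyMeasurable.mul (Continuous.aestronglyMeasurable (by fun_prop))
        (AEStronglyMeasurable.mul (Continuous.aestronglyMeasurable ?_) hgm)
      apply Real.continuous_exp.comp
      apply Continuous.mul continuous_const
      apply Continuous.div (by fun_prop) (by fun_prop)
      intro ξ; positivity
    · rw [Real.norm_of_nonneg (he0 t ξ)]
      exact hew t ht ξ
  set W : ℝ := ∫ ξ, (1 + α ^ 2 * ‖ξ‖ ^ 2) * g ξ with hW
  have hW0 : 0 ≤ W := integral_nonneg fun ξ => mul_nonneg (by positivity) (hg0 ξ)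
  have hEW : ∀ t, 0 ≤ t → ∫ ξ, e t ξ ≤ W := fun t ht =>
    integral_mono (hei t ht) hwi (hew t ht)
  have hE0 : ∀ t, 0 ≤ ∫ ξ, e t ξ := fun t => integral_nonneg (he0 t)
  have hG : ∀ ρ, 0 < ρ → ρ < ρ₀ → ∫ ξ in closedBall 0 ρ, g ξ ≤ |c| * (ρ ^ 2) ^ s := by
    intro ρ h0 h1
    have h := hball ⟨h0, h1⟩
    have h : ρ ^ (-(2 * r) - (n : ℝ)) * (∫ ξ in closedBall 0 ρ, g ξ) ≤ c := h
    have e1 : (ρ ^ 2) ^ s = ρ ^ (2 * s) := by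
      rw [Real.rpow_mul h0.le]; norm_num
    have e2 : ρ ^ (-(2 * r) - (n : ℝ)) = (ρ ^ (2 * s))⁻¹ := by
      rw [← Real.rpow_neg h0.le]; congr 1; rw [hs]; ring
    rw [e1]
    rw [e2, inv_mul_le_iff₀ (by positivity), mul_comm] at h
    exact h.trans (mul_le_mul_of_nonneg_right (le_abs_self c) (by positivity))
  obtain ⟨m, hm, hmq⟩ : ∃ m : ℝ, 0 < m ∧ Real.exp (-(ν * m / 2)) * 2 ^ s = 1 / 2 := by
    have hl : 0 < Real.log 2 := Real.log_pos (by norm_num)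
    refine ⟨2 * (Real.log 2 * (s + 1)) / ν, by positivity, ?_⟩
    rw [Real.rpow_def_of_pos (by norm_num), ← Real.exp_add]
    have : -(ν * (2 * (Real.log 2 * (s + 1)) / ν) / 2) + Real.log 2 * s = - Real.log 2 := by
      field_simp; ring
    rw [this, Real.exp_neg, Real.exp_log (by norm_num)]
    norm_num
  set q : ℝ := Real.exp (-(ν * m / 2)) with hq
  have hq0 : 0 < q := Real.exp_pos _
  set T : ℝ := m * α ^ 2 + 2 * m / ρ₀ ^ 2 with hT
  have hT0 : 0 < T := by positivity
  have step : ∀ t, T ≤ t → ∫ ξ, e t ξ ≤ 2 * (|c| * (m / t) ^ s) + q * ∫ ξ, e (t / 2) ξ := by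
    intro t ht
    have ht0 : 0 < t := hT0.trans_le ht
    have hmt : 0 < m / t := by positivity
    have hsq : Real.sqrt (m / t) ^ 2 = m / t := Real.sq_sqrt hmt.le
    have hρ : 0 < Real.sqrt (m / t) := Real.sqrt_pos.2 hmt
    have hρ' : Real.sqrt (m / t) < ρ₀ := by
      rw [Real.sqrt_lt' hρ₀, div_lt_iff₀ ht0]
      have h1 : 2 * m / ρ₀ ^ 2 ≤ t := by
        have : 0 ≤ m * α ^ 2 := by positivity
        linarith
      rw [div_le_iff₀ (by positivity)] at h1
      linarith
    have h2 : m * α ^ 2 ≤ t := by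
      have : 0 ≤ 2 * m / ρ₀ ^ 2 := by positivity
      linarith
    have hGt := hG _ hρ hρ'
    rw [hsq] at hGt
    set B := closedBall (0 : EuclideanSpace ℝ (Fin n)) (Real.sqrt (m / t)) with hB
    have hBm : MeasurableSet B := isClosed_closedBall.measurableSet
    have hi1 : Integrable (fun ξ => 2 * B.indicator g ξ) volume :=
      (hgi.indicator hBm).const_mul 2
    have hi2 : Integrable (fun ξ => q * e (t / 2) ξ) volume :=
      (hei (t / 2) (by positivity)).const_mul q
    have hpt : ∀ ξ, e t ξ ≤ 2 * B.indicator g ξ + q * e (t / 2) ξ := by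
      intro ξ
      by_cases hξ : ξ ∈ B
      · rw [Set.indicator_of_mem hξ]
        have h3 : 0 ≤ q * e (t / 2) ξ := mul_nonneg hq0.le (he0 _ _)
        have h4 := hew t ht0.le ξ
        have h5 : ‖ξ‖ ≤ Real.sqrt (m / t) := by simpa [hB] using hξ
        have h6 : ‖ξ‖ ^ 2 ≤ m / t := by
          rw [← hsq]; gcongr
        have h7 : 1 + α ^ 2 * ‖ξ‖ ^ 2 ≤ 2 := by
          have : α ^ 2 * ‖ξ‖ ^ 2 ≤ α ^ 2 * (m / t) := by gcongr
          have h8 : α ^ 2 * (m / t) ≤ 1 := by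
            rw [mul_div_assoc', div_le_one ht0]; linarith
          linarith
        have := mul_le_mul_of_nonneg_right h7 (hg0 ξ)
        linarith
      · rw [Set.indicator_of_notMem hξ]
        have h5 : Real.sqrt (m / t) < ‖ξ‖ := by simpa [hB] using hξ
        have h6 : m / t ≤ ‖ξ‖ ^ 2 := by
          rw [← hsq]; gcongr
        rw [div_le_iff₀ ht0, mul_comm] at h6
        have h7 := nsv_exp_bound α ν ‖ξ‖ m t hν ht0 h6 h2
        have h8 := mul_le_mul_of_nonneg_left (mul_le_mul_of_nonneg_right h7 (hg0 ξ))
          (show 0 ≤ 1 + α ^ 2 * ‖ξ‖ ^ 2 by positivity)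
        simp only [he, hg, hq] at h8 ⊢
        refine h8.trans (le_of_eq ?_)
        ring
    calc ∫ ξ, e t ξ ≤ ∫ ξ, (2 * B.indicator g ξ + q * e (t / 2) ξ) :=
          integral_mono (hei t ht0.le) (hi1.add hi2) hpt
      _ = 2 * (∫ ξ in B, g ξ) + q * ∫ ξ, e (t / 2) ξ := by
          rw [integral_add hi1 hi2, integral_const_mul, integral_const_mul,
            integral_indicator hBm]
      _ ≤ _ := by linarith
  set D : ℝ := max (T ^ s * W) (4 * (|c| * m ^ s)) with hD
  have hD1 : T ^ s * W ≤ D := le_max_left _ _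
  have hD2 : 4 * (|c| * m ^ s) ≤ D := le_max_right _ _
  have hbase : ∀ t, 0 < t → t ≤ T → t ^ s * ∫ ξ, e t ξ ≤ D := by
    intro t h0 h1
    refine le_trans ?_ hD1
    exact mul_le_mul (Real.rpow_le_rpow h0.le h1 hs0.le) (hEW t h0.le) (hE0 t) (by positivity)
  have hind : ∀ k : ℕ, ∀ t, 0 < t → t ≤ 2 ^ k * T → t ^ s * ∫ ξ, e t ξ ≤ D := by
    intro k
    induction k with
    | zero => intro t h0 h1; exact hbase t h0 (by simpa using h1)
    | succ k ih =>
      intro t h0 h1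
      rcases le_total t T with h | h
      · exact hbase t h0 h
      have h3 := ih (t / 2) (by positivity) (by rw [pow_succ] at h1; linarith)
      have h4 := mul_le_mul_of_nonneg_left (step t h) (show 0 ≤ t ^ s by positivity)
      have e1 : (m / t) ^ s = m ^ s / t ^ s := Real.div_rpow hm.le h0.le s
      have e2 : (t / 2) ^ s = t ^ s / 2 ^ s := Real.div_rpow h0.le (by norm_num) s
      have hts : 0 < t ^ s := by positivity
      have h2s : (0:ℝ) < 2 ^ s := by positivity
      have e3 : t ^ s * (2 * (|c| * (m / t) ^ s) + q * ∫ ξ, e (t / 2) ξ)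
          = 2 * (|c| * m ^ s) + (q * 2 ^ s) * ((t / 2) ^ s * ∫ ξ, e (t / 2) ξ) := by
        rw [e1, e2]; field_simp
      rw [e3, hmq] at h4
      linarith
  have hall : ∀ t, 0 < t → t ^ s * ∫ ξ, e t ξ ≤ D := by
    intro t h0
    obtain ⟨k, hk⟩ := pow_unbounded_of_one_lt (t / T) (by norm_num : (1:ℝ) < 2)
    exact hind k t h0 ((div_lt_iff₀ hT0).1 hk).le
  have hD0 : 0 ≤ D := le_trans (by positivity) hD1
  refine ⟨2 ^ s * (W + D) + 1, by positivity, 1, one_pos, fun t ht => ?_⟩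
  have ht : 0 < t := ht
  rw [Real.rpow_neg (by positivity), ← div_eq_mul_inv, le_div_iff₀ (by positivity)]
  have h2s : (0:ℝ) < 2 ^ s := by positivity
  have hE := hE0 t
  rcases le_total t 1 with h | h
  · have h1 : (1 + t) ^ s ≤ 2 ^ s := Real.rpow_le_rpow (by positivity) (by linarith) hs0.le
    have h2 := mul_le_mul (hEW t ht.le) h1 (by positivity) hW0
    have h3 := mul_nonneg h2s.le hD0
    linarith
  · have h1 : (1 + t) ^ s ≤ (2 * t) ^ s := Real.rpow_le_rpow (by positivity) (by linarith) hs0.le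
    rw [Real.mul_rpow (by norm_num) ht.le] at h1
    have h2 := mul_le_mul_of_nonneg_left h1 hE
    have h3 := mul_le_mul_of_nonneg_left (hall t ht) h2s.le
    have h4 := mul_nonneg h2s.le hW0
    linarith
end

section
/- Let n ≥ 1, α > 0, ν > 0, and let v₀ ∈ H¹(ℝⁿ). Let v(t) be the solution of the linear Navier–Stokes–Voigt equation with datum v₀, i.e. v̂(ξ,t) = e^{tM(ξ)} v̂₀(ξ) with M(ξ) = −ν|ξ|²/(1+α²|ξ|²). Suppose the decay character of v₀ is r* = −n/2, i.e. for every r ∈ (−n/2, ∞), ρ^{−2r−n} ∫_{|ξ|≤ρ} |v̂₀(ξ)|² dξ → ∞ as ρ → 0⁺. Then for every ε > 0 there exists C = C(ε) > 0 such that for all t > 0, ‖v(t)‖²_{L²} + α²‖∇v(t)‖²_{L²} ≥ C (1+t)^{−ε}; that is, the decay of v is slower than any algebraic rate. -/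
open MeasureTheory Filter Topology Metric

/-- **Slow decay for the linear Navier–Stokes–Voigt equation when `r* = -n/2`.**
If for every `r ∈ (-n/2, ∞)` the decay indicator `ρ^{-2r-n} ∫_{|ξ|≤ρ} |v̂₀|² → ∞` as
`ρ → 0⁺`, then for every `ε > 0` there is `C > 0` with
`‖v(t)‖²_{L²} + α²‖∇v(t)‖²_{L²} ≥ C (1+t)^{-ε}` for all `t > 0`, where
`v̂(ξ,t) = e^{tM(ξ)} v̂₀(ξ)`, `M(ξ) = -ν|ξ|²/(1+α²|ξ|²)`, and by Plancherel
`‖v(t)‖²_{L²} + α²‖∇v(t)‖²_{L²} = ∫ (1+α²|ξ|²) e^{2tM(ξ)} |v̂₀(ξ)|² dξ`. -/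
theorem linear_NSV_slow_decay
    (n : ℕ) (hn : 1 ≤ n) (α ν : ℝ) (hα : 0 < α) (hν : 0 < ν)
    (F0 : EuclideanSpace ℝ (Fin n) → ℂ)
    (hH1 : Integrable (fun ξ : EuclideanSpace ℝ (Fin n) => (1 + ‖ξ‖ ^ 2) * ‖F0 ξ‖ ^ 2))
    (hchar : ∀ r : ℝ, -(n : ℝ) / 2 < r →
      Tendsto (fun ρ : ℝ => ρ ^ (-(2 * r) - (n : ℝ)) *
        ∫ ξ in closedBall (0 : EuclideanSpace ℝ (Fin n)) ρ, ‖F0 ξ‖ ^ 2)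
        (𝓝[>] (0:ℝ)) atTop) :
    ∀ ε > (0:ℝ), ∃ C > (0:ℝ), ∀ t > (0:ℝ),
      C * (1 + t) ^ (-ε) ≤
        ∫ ξ : EuclideanSpace ℝ (Fin n),
          (1 + α ^ 2 * ‖ξ‖ ^ 2) *
            (Real.exp (2 * t * (-(ν * ‖ξ‖ ^ 2) / (1 + α ^ 2 * ‖ξ‖ ^ 2))) * ‖F0 ξ‖ ^ 2) := by
  intro ε hε
  have hpos : ∀ ξ : EuclideanSpace ℝ (Fin n), 0 < 1 + ‖ξ‖ ^ 2 := fun ξ => by positivity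
  have hposa : ∀ ξ : EuclideanSpace ℝ (Fin n), 0 < 1 + α ^ 2 * ‖ξ‖ ^ 2 := fun ξ => by positivity
  have hbd : ∀ (φ : EuclideanSpace ℝ (Fin n) → ℝ) (K : ℝ), Continuous φ →
      (∀ ξ, 0 ≤ φ ξ) → (∀ ξ, φ ξ ≤ K * (1 + ‖ξ‖ ^ 2)) →
      Integrable (fun ξ => φ ξ * ‖F0 ξ‖ ^ 2) := by
    intro φ K hφ h0 hK
    refine (hH1.const_mul K).mono' ?_ ?_
    · have hc : Continuous (fun ξ : EuclideanSpace ℝ (Fin n) => φ ξ / (1 + ‖ξ‖ ^ 2)) :=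
        hφ.div (by fun_prop) (fun ξ => (hpos ξ).ne')
      refine (hc.aestronglyMeasurable.mul hH1.aestronglyMeasurable).congr ?_
      refine Eventually.of_forall fun ξ => ?_
      have := (hpos ξ).ne'
      simp only [Pi.mul_apply]
      field_simp
    · refine Eventually.of_forall fun ξ => ?_
      rw [Real.norm_of_nonneg (mul_nonneg (h0 ξ) (by positivity)), ← mul_assoc]
      exact mul_le_mul_of_nonneg_right (hK ξ) (by positivity)
  have hG : Integrable (fun ξ => ‖F0 ξ‖ ^ 2) := by
    have := hbd (fun _ => 1) 1 continuous_const (fun _ => zero_le_one)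
      (fun ξ => by nlinarith [sq_nonneg ‖ξ‖])
    simpa using this
  have hev := (hchar (-(n : ℝ) / 2 + ε) (by linarith)).eventually_ge_atTop 1
  rw [eventually_nhdsWithin_iff, Metric.eventually_nhds_iff] at hev
  obtain ⟨δ, hδ, hev⟩ := hev
  set d := δ / 2 with hd
  have hdpos : 0 < d := by positivity
  refine ⟨Real.exp (-(2 * ν * d ^ 2)) * d ^ (2 * ε), by positivity, fun t ht => ?_⟩
  have h1t : 0 < 1 + t := by linarith
  set ρ := d * (1 + t) ^ (-(1/2) : ℝ) with hρ
  have hρpos : 0 < ρ := by positivity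
  have hρle : ρ ≤ d := by
    have : (1 + t) ^ (-(1/2) : ℝ) ≤ 1 :=
      Real.rpow_le_one_of_one_le_of_nonpos (by linarith) (by norm_num)
    nlinarith
  have hρsq : ρ ^ 2 * (1 + t) = d ^ 2 := by
    have : ((1 + t) ^ (-(1/2) : ℝ)) ^ 2 = (1 + t)⁻¹ := by
      rw [← Real.rpow_natCast, ← Real.rpow_mul h1t.le, ← Real.rpow_neg_one]
      norm_num
    rw [hρ, mul_pow, this]
    field_simp
  have hρε : ρ ^ (2 * ε) = d ^ (2 * ε) * (1 + t) ^ (-ε) := by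
    rw [hρ, Real.mul_rpow hdpos.le (by positivity), ← Real.rpow_mul h1t.le]
    congr 2
    ring
  have hI := hev (y := ρ) (by
    rw [Real.dist_eq, sub_zero, abs_of_pos hρpos]; linarith) hρpos
  have hexp : -(2 * (-(n : ℝ) / 2 + ε)) - (n : ℝ) = -(2 * ε) := by ring
  rw [hexp, Real.rpow_neg hρpos.le] at hI
  have hρεpos : 0 < ρ ^ (2 * ε) := by positivity
  rw [inv_mul_eq_div, le_div_iff₀ hρεpos, one_mul] at hI
  have hint : Integrable (fun ξ : EuclideanSpace ℝ (Fin n) => (1 + α ^ 2 * ‖ξ‖ ^ 2) *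
      (Real.exp (2 * t * (-(ν * ‖ξ‖ ^ 2) / (1 + α ^ 2 * ‖ξ‖ ^ 2))) * ‖F0 ξ‖ ^ 2)) := by
    simp_rw [← mul_assoc (1 + α ^ 2 * ‖_‖ ^ 2)]
    refine hbd _ (1 + α ^ 2) ?_ (fun ξ => by positivity) (fun ξ => ?_)
    · have hc : Continuous (fun ξ : EuclideanSpace ℝ (Fin n) =>
          -(ν * ‖ξ‖ ^ 2) / (1 + α ^ 2 * ‖ξ‖ ^ 2)) :=
        Continuous.div (by fun_prop) (by fun_prop) (fun ξ => (hposa ξ).ne')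
      fun_prop
    · have he : Real.exp (2 * t * (-(ν * ‖ξ‖ ^ 2) / (1 + α ^ 2 * ‖ξ‖ ^ 2))) ≤ 1 := by
        rw [Real.exp_le_one_iff, neg_div]
        have : 0 ≤ ν * ‖ξ‖ ^ 2 / (1 + α ^ 2 * ‖ξ‖ ^ 2) := by positivity
        nlinarith
      calc _ ≤ (1 + α ^ 2 * ‖ξ‖ ^ 2) * 1 := mul_le_mul_of_nonneg_left he (hposa ξ).le
        _ ≤ _ := by nlinarith [sq_nonneg ‖ξ‖, sq_nonneg α]
  calc Real.exp (-(2 * ν * d ^ 2)) * d ^ (2 * ε) * (1 + t) ^ (-ε)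
      = Real.exp (-(2 * ν * d ^ 2)) * ρ ^ (2 * ε) := by rw [hρε, mul_assoc]
    _ ≤ Real.exp (-(2 * ν * d ^ 2)) *
        ∫ ξ in closedBall (0 : EuclideanSpace ℝ (Fin n)) ρ, ‖F0 ξ‖ ^ 2 :=
        mul_le_mul_of_nonneg_left hI (Real.exp_pos _).le
    _ = ∫ ξ in closedBall (0 : EuclideanSpace ℝ (Fin n)) ρ,
          Real.exp (-(2 * ν * d ^ 2)) * ‖F0 ξ‖ ^ 2 := (integral_const_mul _ _).symm
    _ ≤ ∫ ξ in closedBall (0 : EuclideanSpace ℝ (Fin n)) ρ, (1 + α ^ 2 * ‖ξ‖ ^ 2) *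
      (Real.exp (2 * t * (-(ν * ‖ξ‖ ^ 2) / (1 + α ^ 2 * ‖ξ‖ ^ 2))) * ‖F0 ξ‖ ^ 2) := by
        refine setIntegral_mono_on (hG.const_mul _).integrableOn hint.integrableOn
          measurableSet_closedBall fun ξ hξ => ?_
        rw [mem_closedBall_zero_iff] at hξ
        have hsq : ‖ξ‖ ^ 2 ≤ ρ ^ 2 := by gcongr
        have h1 : ν * ‖ξ‖ ^ 2 / (1 + α ^ 2 * ‖ξ‖ ^ 2) ≤ ν * ρ ^ 2 :=
          (div_le_self (by positivity) (by nlinarith [mul_nonneg (sq_nonneg α) (sq_nonneg ‖ξ‖)])).trans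
            (by gcongr)
        have h2 : t * (ν * ‖ξ‖ ^ 2 / (1 + α ^ 2 * ‖ξ‖ ^ 2)) ≤ ν * d ^ 2 := by
          calc _ ≤ t * (ν * ρ ^ 2) := mul_le_mul_of_nonneg_left h1 ht.le
            _ ≤ ν * d ^ 2 := by rw [← hρsq]; nlinarith [mul_nonneg hν.le (sq_nonneg ρ)]
        have h3 : Real.exp (-(2 * ν * d ^ 2)) ≤
            Real.exp (2 * t * (-(ν * ‖ξ‖ ^ 2) / (1 + α ^ 2 * ‖ξ‖ ^ 2))) := by
          rw [Real.exp_le_exp, neg_div]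
          linarith
        calc _ ≤ Real.exp (2 * t * (-(ν * ‖ξ‖ ^ 2) / (1 + α ^ 2 * ‖ξ‖ ^ 2))) * ‖F0 ξ‖ ^ 2 :=
              mul_le_mul_of_nonneg_right h3 (by positivity)
          _ ≤ _ := le_mul_of_one_le_left (by positivity)
              (by nlinarith [mul_nonneg (sq_nonneg α) (sq_nonneg ‖ξ‖)])
    _ ≤ _ := setIntegral_le_integral hint (Eventually.of_forall fun ξ => by
        have := hposa ξ
        simp only [Pi.zero_apply]
        positivity)
end

section
/- Let n ≥ 1 and α, ν > 0 with ν > α². Let v₀ ∈ H¹(ℝⁿ) and let v(t) be the solution of the linear Navier–Stokes–Voigt equation with datum v₀, i.e. v̂(ξ,t) = e^{tM(ξ)} v̂₀(ξ) with M(ξ) = −ν|ξ|²/(1+α²|ξ|²). Suppose the decay character of v₀ is r* = ∞, i.e. for every r ∈ (−n/2, ∞), ρ^{−2r−n} ∫_{|ξ|≤ρ} |v̂₀(ξ)|² dξ → 0 as ρ → 0⁺. Then for every m > 0 there exists C = C(m) > 0 such that for all t > 0, ‖v(t)‖²_{L²} + α²‖∇v(t)‖²_{L²} ≤ C (1+t)^{−m};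 that is, the decay of v is faster than any algebraic rate. -/
open MeasureTheory Filter Topology Metric

lemma rpow_exp_aux (p c s : ℝ) (hp : 0 < p) (hc : 0 < c) (hs : 0 < s) :
    Real.exp (-(c * s)) ≤ (p / c) ^ p * s ^ (-p) := by
  have h1 : s ^ p ≤ (p / c) ^ p * Real.exp (c * s) := by
    have h2 : s ≤ (p / c) * Real.exp (c * s / p) := by
      have := Real.add_one_le_exp (c * s / p)
      calc s = (p / c) * (c * s / p) := by field_simp
        _ ≤ _ := by gcongr; linarith
    calc s ^ p ≤ ((p / c) * Real.exp (c * s / p)) ^ p := by gcongr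
      _ = _ := by
        rw [Real.mul_rpow (by positivity) (by positivity), ← Real.exp_mul]
        congr 2; field_simp
  rw [Real.exp_neg, Real.rpow_neg hs.le, ← div_eq_mul_inv, le_div_iff₀ (by positivity),
    inv_mul_le_iff₀ (by positivity)]
  linarith


set_option maxHeartbeats 2000000

/-- **Fast decay for the linear Navier–Stokes–Voigt equation when `r* = ∞`.**
If `ν > α²` and for every `r ∈ (-n/2, ∞)` the decay indicator
`ρ^{-2r-n} ∫_{|ξ|≤ρ} |v̂₀|² → 0` as `ρ → 0⁺`, then for every `m > 0` there is `C > 0` with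
`‖v(t)‖²_{L²} + α²‖∇v(t)‖²_{L²} ≤ C (1+t)^{-m}` for all `t > 0`, where
`v̂(ξ,t) = e^{tM(ξ)} v̂₀(ξ)`, `M(ξ) = -ν|ξ|²/(1+α²|ξ|²)`, and by Plancherel
`‖v(t)‖²_{L²} + α²‖∇v(t)‖²_{L²} = ∫ (1+α²|ξ|²) e^{2tM(ξ)} |v̂₀(ξ)|² dξ`. -/
theorem linear_NSV_fast_decay
    (n : ℕ) (hn : 1 ≤ n) (α ν : ℝ) (hα : 0 < α) (hν : 0 < ν) (hνα : α ^ 2 < ν)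
    (F0 : EuclideanSpace ℝ (Fin n) → ℂ)
    (hH1 : Integrable (fun ξ : EuclideanSpace ℝ (Fin n) => (1 + ‖ξ‖ ^ 2) * ‖F0 ξ‖ ^ 2))
    (hchar : ∀ r : ℝ, -(n : ℝ) / 2 < r →
      Tendsto (fun ρ : ℝ => ρ ^ (-(2 * r) - (n : ℝ)) *
        ∫ ξ in closedBall (0 : EuclideanSpace ℝ (Fin n)) ρ, ‖F0 ξ‖ ^ 2)
        (𝓝[>] (0:ℝ)) (𝓝 0)) :
    ∀ m > (0:ℝ), ∃ C > (0:ℝ), ∀ t > (0:ℝ),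
      (∫ ξ : EuclideanSpace ℝ (Fin n),
          (1 + α ^ 2 * ‖ξ‖ ^ 2) *
            (Real.exp (2 * t * (-(ν * ‖ξ‖ ^ 2) / (1 + α ^ 2 * ‖ξ‖ ^ 2))) * ‖F0 ξ‖ ^ 2))
        ≤ C * (1 + t) ^ (-m) := by
  intro m hm
  have hF : Integrable (fun ξ : EuclideanSpace ℝ (Fin n) => ‖F0 ξ‖ ^ 2) := by
    have hc : Continuous (fun ξ : EuclideanSpace ℝ (Fin n) => (1 + ‖ξ‖ ^ 2)⁻¹) :=
      Continuous.inv₀ (by fun_prop) (fun x => by positivity)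
    have hm' : AEStronglyMeasurable (fun ξ : EuclideanSpace ℝ (Fin n) => ‖F0 ξ‖ ^ 2) := by
      refine (hc.aestronglyMeasurable.mul hH1.aestronglyMeasurable).congr ?_
      refine Eventually.of_forall fun ξ => ?_
      have : (1 + ‖ξ‖ ^ 2) ≠ 0 := by positivity
      simp only [Pi.mul_apply]
      field_simp
    refine hH1.mono' hm' (Eventually.of_forall fun ξ => ?_)
    rw [Real.norm_of_nonneg (by positivity)]
    nlinarith [mul_nonneg (sq_nonneg ‖ξ‖) (sq_nonneg ‖F0 ξ‖)]
  set I : ℝ → ℝ := fun ρ => ∫ ξ in closedBall (0 : EuclideanSpace ℝ (Fin n)) ρ, ‖F0 ξ‖ ^ 2 with hI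
  set T : ℝ := ∫ ξ : EuclideanSpace ℝ (Fin n), ‖F0 ξ‖ ^ 2 with hT
  set J : ℝ := ∫ ξ : EuclideanSpace ℝ (Fin n), (1 + ‖ξ‖ ^ 2) * ‖F0 ξ‖ ^ 2 with hJ
  have hT0 : 0 ≤ T := integral_nonneg fun ξ => by positivity
  have hJ0 : 0 ≤ J := integral_nonneg fun ξ => by positivity
  have hIT : ∀ ρ, I ρ ≤ T := fun ρ =>
    setIntegral_le_integral hF (Eventually.of_forall fun ξ => by positivity)
  obtain ⟨A, hA, hIA⟩ : ∃ A > 0, ∀ ρ > 0, I ρ ≤ A * ρ ^ (4 * m) := by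
    have h1 := hchar ((4 * m - n) / 2) (by linarith)
    have h2 := h1.eventually (gt_mem_nhds one_pos)
    obtain ⟨δ, hδ, h3⟩ := mem_nhdsGT_iff_exists_Ioo_subset.1 h2
    have hδ : 0 < δ := hδ
    refine ⟨1 + T * (δ ^ (4 * m))⁻¹, by positivity, fun ρ hρ => ?_⟩
    have hp : 0 < ρ ^ (4 * m) := by positivity
    rcases lt_or_ge ρ δ with h | h
    · have h4 : ρ ^ (-(2 * ((4 * m - n) / 2)) - (n : ℝ)) * I ρ < 1 := h3 ⟨hρ, h⟩
      rw [show -(2 * ((4 * m - n) / 2)) - (n : ℝ) = -(4 * m) by ring, Real.rpow_neg hρ.le,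
        inv_mul_lt_iff₀ hp] at h4
      have : 0 ≤ T * (δ ^ (4 * m))⁻¹ * ρ ^ (4 * m) := by positivity
      nlinarith
    · have h5 : δ ^ (4 * m) ≤ ρ ^ (4 * m) := by gcongr
      have h6 : 1 ≤ (δ ^ (4 * m))⁻¹ * ρ ^ (4 * m) := by
        rw [inv_mul_eq_div, one_le_div (by positivity)]; exact h5
      have := mul_le_mul_of_nonneg_left h6 hT0
      nlinarith [hIT ρ]
  set c : ℝ := 2 * ν / (1 + α ^ 2) with hc
  have hc0 : 0 < c := by positivity
  set B : ℝ := Real.exp c * ((2 * m) / c) ^ (2 * m) with hB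
  have hB0 : 0 < B := by positivity
  refine ⟨(1 + α ^ 2) * A + B * ((1 + α ^ 2) * J), by positivity, fun t ht => ?_⟩
  have ht1 : 0 < 1 + t := by linarith
  set ρ : ℝ := (1 + t) ^ (-(1/4) : ℝ) with hρ
  have hρ0 : 0 < ρ := by positivity
  have hρ1 : ρ ≤ 1 := Real.rpow_le_one_of_one_le_of_nonpos (by linarith) (by norm_num)
  set s : ℝ := (1 + t) ^ ((1/2) : ℝ) with hs
  have hs1 : 1 ≤ s := Real.one_le_rpow (by linarith) (by norm_num)
  have hρm : ρ ^ (4 * m) = (1 + t) ^ (-m) := by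
    rw [hρ, ← Real.rpow_mul ht1.le]; congr 1; ring
  have hsm : s ^ (-(2 * m)) = (1 + t) ^ (-m) := by
    rw [hs, ← Real.rpow_mul ht1.le]; congr 1; ring
  have hss : s ^ 2 = 1 + t := by
    rw [hs, ← Real.rpow_natCast, ← Real.rpow_mul ht1.le]; norm_num
  have hρs : ρ ^ 2 * s = 1 := by
    rw [hs, hρ, ← Real.rpow_natCast, ← Real.rpow_mul ht1.le, ← Real.rpow_add ht1]; norm_num
  have htρ : s - 1 ≤ t * ρ ^ 2 := by
    have : t * ρ ^ 2 = s - ρ ^ 2 := by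
      rw [show t = s ^ 2 - 1 by linarith]; linear_combination s * hρs
    rw [this]; nlinarith
  have hE : Real.exp (-(c * (t * ρ ^ 2))) ≤ B * (1 + t) ^ (-m) := by
    calc Real.exp (-(c * (t * ρ ^ 2))) ≤ Real.exp (c + -(c * s)) := by
          apply Real.exp_le_exp.2; nlinarith
      _ = Real.exp c * Real.exp (-(c * s)) := Real.exp_add _ _
      _ ≤ Real.exp c * (((2 * m) / c) ^ (2 * m) * s ^ (-(2 * m))) := by
          gcongr; exact rpow_exp_aux _ _ _ (by positivity) hc0 (by linarith)
      _ = _ := by rw [hsm, hB]; ring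
  set E : ℝ := B * (1 + t) ^ (-m) with hEdef
  have hE0 : 0 ≤ E := by positivity
  have hi1 : Integrable (fun ξ : EuclideanSpace ℝ (Fin n) => (1 + α ^ 2) *
      (closedBall (0 : EuclideanSpace ℝ (Fin n)) ρ).indicator (fun ξ => ‖F0 ξ‖ ^ 2) ξ) :=
    (hF.indicator measurableSet_closedBall).const_mul _
  have hi2 : Integrable (fun ξ : EuclideanSpace ℝ (Fin n) =>
      (E * (1 + α ^ 2)) * ((1 + ‖ξ‖ ^ 2) * ‖F0 ξ‖ ^ 2)) := hH1.const_mul _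
  calc _ ≤ ∫ ξ : EuclideanSpace ℝ (Fin n), ((1 + α ^ 2) *
      (closedBall (0 : EuclideanSpace ℝ (Fin n)) ρ).indicator (fun ξ => ‖F0 ξ‖ ^ 2) ξ +
      (E * (1 + α ^ 2)) * ((1 + ‖ξ‖ ^ 2) * ‖F0 ξ‖ ^ 2)) := by
        refine integral_mono_of_nonneg (Eventually.of_forall fun ξ => by positivity)
          (hi1.add hi2) (Eventually.of_forall fun ξ => ?_)
        have hq : 0 ≤ ‖F0 ξ‖ ^ 2 := by positivity
        have hx : 0 ≤ ‖ξ‖ := norm_nonneg ξ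
        have hD : 0 < 1 + α ^ 2 * ‖ξ‖ ^ 2 := by positivity
        show (1 + α ^ 2 * ‖ξ‖ ^ 2) *
            (Real.exp (2 * t * (-(ν * ‖ξ‖ ^ 2) / (1 + α ^ 2 * ‖ξ‖ ^ 2))) * ‖F0 ξ‖ ^ 2) ≤ _
        by_cases h : ξ ∈ closedBall (0 : EuclideanSpace ℝ (Fin n)) ρ
        · simp only [Set.indicator_of_mem h]
          have hle : ‖ξ‖ ≤ ρ := by simpa using h
          have h1 : ‖ξ‖ ^ 2 ≤ 1 := by nlinarith
          have h2 : Real.exp (2 * t * (-(ν * ‖ξ‖ ^ 2) / (1 + α ^ 2 * ‖ξ‖ ^ 2))) ≤ 1 := by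
            rw [Real.exp_le_one_iff, neg_div, mul_neg, neg_nonpos]; positivity
          have h3 : 0 ≤ (E * (1 + α ^ 2)) * ((1 + ‖ξ‖ ^ 2) * ‖F0 ξ‖ ^ 2) := by positivity
          calc _ ≤ (1 + α ^ 2 * 1) * (1 * ‖F0 ξ‖ ^ 2) := by gcongr
            _ ≤ _ := by linarith
        · simp only [Set.indicator_of_notMem h]
          have hlt : ρ < ‖ξ‖ := by simpa using h
          have h2 : Real.exp (2 * t * (-(ν * ‖ξ‖ ^ 2) / (1 + α ^ 2 * ‖ξ‖ ^ 2))) ≤ E := by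
            refine le_trans (Real.exp_le_exp.2 ?_) hE
            have h4 : ρ ^ 2 / (1 + α ^ 2) ≤ ‖ξ‖ ^ 2 / (1 + α ^ 2 * ‖ξ‖ ^ 2) := by
              rw [div_le_div_iff₀ (by positivity) hD]
              have h5 : ρ ^ 2 ≤ ‖ξ‖ ^ 2 := by gcongr
              have h6 : ρ ^ 2 ≤ 1 := by nlinarith
              have h7 : 0 ≤ α ^ 2 * ‖ξ‖ ^ 2 := by positivity
              nlinarith
            have h8 := mul_le_mul_of_nonneg_left h4 (show 0 ≤ 2 * t * ν by positivity)
            calc _ = -(2 * t * ν * (‖ξ‖ ^ 2 / (1 + α ^ 2 * ‖ξ‖ ^ 2))) := by ring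
              _ ≤ -(2 * t * ν * (ρ ^ 2 / (1 + α ^ 2))) := by linarith
              _ = _ := by rw [hc]; ring
          have h9 : 1 + α ^ 2 * ‖ξ‖ ^ 2 ≤ (1 + α ^ 2) * (1 + ‖ξ‖ ^ 2) := by
            nlinarith [sq_nonneg α, sq_nonneg ‖ξ‖]
          calc _ ≤ ((1 + α ^ 2) * (1 + ‖ξ‖ ^ 2)) * (E * ‖F0 ξ‖ ^ 2) := by gcongr
            _ = _ := by ring
    _ = (1 + α ^ 2) * I ρ + (E * (1 + α ^ 2)) * J := by
        rw [integral_add hi1 hi2, integral_const_mul, integral_const_mul,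
          integral_indicator measurableSet_closedBall]
    _ ≤ (1 + α ^ 2) * (A * (1 + t) ^ (-m)) + (E * (1 + α ^ 2)) * J := by
        gcongr; rw [← hρm]; exact hIA ρ hρ0
    _ = _ := by rw [hEdef]; ring
end

section
/- Let s > 0 and u₀ ∈ H^s(ℝⁿ). If there exists r ∈ (−n/2, ∞) such that the decay indicator P_r(u₀) = lim_{ρ→0⁺} ρ^{−2r−n} ∫_{|ξ|≤ρ} |û₀(ξ)|² dξ exists and satisfies 0 < P_r(u₀) < ∞, then the s-decay indicator at order s + r, namely P^s_{s+r}(u₀) = lim_{ρ→0⁺} ρ^{−2(s+r)−n} ∫_{|ξ|≤ρ} |ξ|^{2s} |û₀(ξ)|² dξ, exists and satisfies 0 < P^s_{s+r}(u₀) < ∞. In other words, if the decay character of u₀ is r* ∈ (−n/2, ∞), then the decay character of Λ^s u₀ is r*_s = s + r*. -/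
open MeasureTheory Filter Topology Metric

theorem aux_fubini (n : ℕ) (g : EuclideanSpace ℝ (Fin n) → ℝ) (hg : Integrable g)
    (b : ℝ) (hb : 0 < b) (ρ : ℝ) (hρ : 0 < ρ) :
    IntegrableOn (fun t : ℝ => b * t ^ (b - 1) *
      ∫ ξ in closedBall (0 : EuclideanSpace ℝ (Fin n)) t, g ξ) (Set.Ioc 0 ρ) ∧
    ∫ ξ in closedBall (0 : EuclideanSpace ℝ (Fin n)) ρ, ‖ξ‖ ^ b * g ξ
      = ρ ^ b * (∫ ξ in closedBall (0 : EuclideanSpace ℝ (Fin n)) ρ, g ξ)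
        - ∫ t in Set.Ioc 0 ρ, b * t ^ (b - 1) *
          ∫ ξ in closedBall (0 : EuclideanSpace ℝ (Fin n)) t, g ξ := by
  set B := closedBall (0 : EuclideanSpace ℝ (Fin n)) ρ with hB
  have hk : IntegrableOn (fun t : ℝ => b * t ^ (b - 1)) (Set.Ioc 0 ρ) := by
    have := (intervalIntegral.intervalIntegrable_rpow' (a := 0) (b := ρ)
      (show -1 < b - 1 by linarith)).const_mul b
    exact (intervalIntegrable_iff_integrableOn_Ioc_of_le hρ.le).1 this
  have hgB : Integrable g (volume.restrict B) := hg.restrict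
  let S : Set (EuclideanSpace ℝ (Fin n) × ℝ) := {z | ‖z.1‖ < z.2}
  have hS : MeasurableSet S := measurableSet_lt (by fun_prop) (by fun_prop)
  have hint : Integrable (S.indicator (fun z => g z.1 * (b * z.2 ^ (b - 1))))
      ((volume.restrict B).prod (volume.restrict (Set.Ioc 0 ρ))) :=
    (hgB.mul_prod hk).indicator hS
  have e1 : ∀ t ∈ Set.Ioc 0 ρ,
      ∫ ξ in B, S.indicator (fun z => g z.1 * (b * z.2 ^ (b - 1))) (ξ, t)
       = b * t ^ (b - 1) * ∫ ξ in closedBall (0 : EuclideanSpace ℝ (Fin n)) t, g ξ := by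
    intro t ht
    have h1 : ∀ ξ, S.indicator (fun z => g z.1 * (b * z.2 ^ (b - 1))) (ξ, t)
        = (ball (0 : EuclideanSpace ℝ (Fin n)) t).indicator
          (fun ξ => (b * t ^ (b - 1)) * g ξ) ξ := by
      intro ξ
      by_cases h : ‖ξ‖ < t
      · rw [Set.indicator_of_mem (show (ξ, t) ∈ S from h),
          Set.indicator_of_mem (by simpa using h)]
        simp only; ring
      · rw [Set.indicator_of_notMem (show (ξ, t) ∉ S from h),
          Set.indicator_of_notMem (by simpa using h)]
    simp_rw [h1]
    rw [setIntegral_indicator measurableSet_ball,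
      Set.inter_eq_right.2 ((ball_subset_ball ht.2).trans ball_subset_closedBall),
      integral_const_mul]
    congr 1
    apply setIntegral_congr_set
    refine (ae_eq_of_subset_of_measure_ge ball_subset_closedBall ?_
      measurableSet_ball.nullMeasurableSet measure_closedBall_lt_top.ne)
    rw [← ball_union_sphere]
    refine (measure_union_le _ _).trans ?_
    rw [Measure.addHaar_sphere_of_ne_zero _ _ ht.1.ne', add_zero]
  have e2 : ∀ ξ ∈ B,
      ∫ t in Set.Ioc 0 ρ, S.indicator (fun z => g z.1 * (b * z.2 ^ (b - 1))) (ξ, t)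
       = ρ ^ b * g ξ - ‖ξ‖ ^ b * g ξ := by
    intro ξ hξ
    have hξ' : ‖ξ‖ ≤ ρ := by simpa [hB] using hξ
    have h1 : ∀ t, S.indicator (fun z => g z.1 * (b * z.2 ^ (b - 1))) (ξ, t)
        = (Set.Ioi ‖ξ‖).indicator (fun t => (g ξ * b) * t ^ (b - 1)) t := by
      intro t
      by_cases h : ‖ξ‖ < t
      · rw [Set.indicator_of_mem (show (ξ, t) ∈ S from h),
          Set.indicator_of_mem (by simpa using h)]
        simp only; ring
      · rw [Set.indicator_of_notMem (show (ξ, t) ∉ S from h),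
          Set.indicator_of_notMem (by simpa using h)]
    simp_rw [h1]
    have h2 : Set.Ioc 0 ρ ∩ Set.Ioi ‖ξ‖ = Set.Ioc ‖ξ‖ ρ := by
      ext t
      simp only [Set.mem_inter_iff, Set.mem_Ioc, Set.mem_Ioi]
      have := norm_nonneg ξ
      constructor
      · rintro ⟨⟨_, h⟩, h'⟩; exact ⟨h', h⟩
      · rintro ⟨h, h'⟩; exact ⟨⟨by linarith, h'⟩, h⟩
    rw [setIntegral_indicator measurableSet_Ioi, h2, integral_const_mul,
      ← intervalIntegral.integral_of_le hξ', integral_rpow (Or.inl (by linarith))]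
    rw [sub_add_cancel]
    field_simp
  have hi := hint.integral_prod_right
  have hI : IntegrableOn (fun t : ℝ => b * t ^ (b - 1) *
      ∫ ξ in closedBall (0 : EuclideanSpace ℝ (Fin n)) t, g ξ) (Set.Ioc 0 ρ) :=
    (integrableOn_congr_fun e1 measurableSet_Ioc).1 hi
  refine ⟨hI, ?_⟩
  have hsw := integral_integral_swap (f := fun ξ t =>
    S.indicator (fun z => g z.1 * (b * z.2 ^ (b - 1))) (ξ, t)) hint
  rw [setIntegral_congr_fun measurableSet_closedBall e2,
    setIntegral_congr_fun measurableSet_Ioc e1, integral_sub, integral_const_mul] at hsw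
  · linarith
  · exact hgB.const_mul _
  · refine hgB.bdd_mul (c := ρ ^ b) ?_ ?_
    · exact (measurable_norm.pow_const b).aestronglyMeasurable
    · filter_upwards [ae_restrict_mem measurableSet_closedBall] with ξ hξ
      have hξ' : ‖ξ‖ ≤ ρ := by simpa using hξ
      rw [Real.norm_of_nonneg (by positivity)]
      gcongr

theorem aux_lim (m : ℝ → ℝ) (a b : ℝ) (ha : 0 < a) (hb : 0 < b) (P : ℝ)
    (hm : Tendsto (fun ρ : ℝ => ρ ^ (-a) * m ρ) (𝓝[>] 0) (𝓝 P))
    (hI : ∀ ρ, 0 < ρ → IntegrableOn (fun t : ℝ => b * t ^ (b - 1) * m t) (Set.Ioc 0 ρ)) :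
    Tendsto (fun ρ : ℝ => ρ ^ (-(a + b)) * ∫ t in Set.Ioc 0 ρ, b * t ^ (b - 1) * m t)
      (𝓝[>] 0) (𝓝 (P * (b / (a + b)))) := by
  have hpow : ∀ ρ, 0 < ρ → ∀ c : ℝ,
      IntegrableOn (fun t : ℝ => c * b * t ^ (a + b - 1)) (Set.Ioc 0 ρ) ∧
      ∫ t in Set.Ioc 0 ρ, c * b * t ^ (a + b - 1) = c * (b / (a + b)) * ρ ^ (a + b) := by
    intro ρ hρ c
    constructor
    · have := (intervalIntegral.intervalIntegrable_rpow' (a := 0) (b := ρ)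
        (show -1 < a + b - 1 by linarith)).const_mul (c * b)
      exact (intervalIntegrable_iff_integrableOn_Ioc_of_le hρ.le).1 this
    · rw [integral_const_mul, ← intervalIntegral.integral_of_le hρ.le,
        integral_rpow (Or.inl (by linarith)), sub_add_cancel,
        Real.zero_rpow (by positivity)]
      field_simp
      ring
  rw [Metric.tendsto_nhds]
  intro ε hε
  have h := (Metric.tendsto_nhds.1 hm) ε hε
  rw [eventually_nhdsWithin_iff, Metric.eventually_nhds_iff] at h
  obtain ⟨δ, hδ, h⟩ := h
  filter_upwards [Ioo_mem_nhdsGT hδ] with ρ hρ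
  obtain ⟨hρ0, hρδ⟩ := hρ
  have key : ∀ t ∈ Set.Ioc 0 ρ, (P - ε) * b * t ^ (a + b - 1) ≤ b * t ^ (b - 1) * m t ∧
      b * t ^ (b - 1) * m t ≤ (P + ε) * b * t ^ (a + b - 1) := by
    intro t ht
    have h0 : 0 < t := ht.1
    have h1 := h (y := t) (by rw [Real.dist_eq, sub_zero, abs_of_pos h0]; linarith [ht.2]) h0
    rw [Real.dist_eq, abs_lt] at h1
    have h2 : m t = t ^ a * (t ^ (-a) * m t) := by
      rw [← mul_assoc, ← Real.rpow_add h0]; simp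
    have h3 : t ^ (a + b - 1) = t ^ (b - 1) * t ^ a := by
      rw [← Real.rpow_add h0]; congr 1; ring
    have h4 : 0 < b * (t ^ (b - 1) * t ^ a) := by positivity
    rw [h2, h3]
    constructor <;> nlinarith
  have l1 := setIntegral_mono_on (hpow ρ hρ0 (P - ε)).1 (hI ρ hρ0) measurableSet_Ioc
    (fun t ht => (key t ht).1)
  have l2 := setIntegral_mono_on (hI ρ hρ0) (hpow ρ hρ0 (P + ε)).1 measurableSet_Ioc
    (fun t ht => (key t ht).2)
  rw [(hpow ρ hρ0 _).2] at l1 l2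
  have hq : 0 < ρ ^ (a + b) := by positivity
  rw [Real.rpow_neg hρ0.le, Real.dist_eq, abs_lt, inv_mul_eq_div]
  rw [← le_div_iff₀ hq] at l1
  rw [← div_le_iff₀ hq] at l2
  have hf : b / (a + b) < 1 := by rw [div_lt_one (by positivity)]; linarith
  constructor <;> nlinarith

/-- **The decay character shifts by `s` under `Λ^s`.**
Let `u₀ ∈ H^s(ℝⁿ)`, `s > 0` (encoded via Plancherel as integrability of
`(1+|ξ|²)^s |û₀(ξ)|²`).  If the decay indicator
`P_r(u₀) = lim_{ρ→0⁺} ρ^{-2r-n} ∫_{|ξ|≤ρ} |û₀|²` exists and lies in `(0,∞)` for some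
`r ∈ (-n/2, ∞)`, then the `s`-decay indicator at order `s + r`,
`P^s_{s+r}(u₀) = lim_{ρ→0⁺} ρ^{-2(s+r)-n} ∫_{|ξ|≤ρ} |ξ|^{2s} |û₀|²`,
exists and lies in `(0,∞)`; i.e. `r*_s(u₀) = s + r*(u₀)`. -/
theorem decay_character_shift
    (n : ℕ) (hn : 1 ≤ n) (s : ℝ) (hs : 0 < s)
    (F0 : EuclideanSpace ℝ (Fin n) → ℂ)
    (hHs : Integrable (fun ξ : EuclideanSpace ℝ (Fin n) =>
      (1 + ‖ξ‖ ^ 2) ^ s * ‖F0 ξ‖ ^ 2))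
    (r : ℝ) (hr : -(n : ℝ) / 2 < r)
    (P : ℝ) (hP : 0 < P)
    (hlim : Tendsto (fun ρ : ℝ => ρ ^ (-(2 * r) - (n : ℝ)) *
        ∫ ξ in closedBall (0 : EuclideanSpace ℝ (Fin n)) ρ, ‖F0 ξ‖ ^ 2)
      (𝓝[>] (0:ℝ)) (𝓝 P)) :
    ∃ Q : ℝ, 0 < Q ∧ Tendsto (fun ρ : ℝ => ρ ^ (-(2 * (s + r)) - (n : ℝ)) *
        ∫ ξ in closedBall (0 : EuclideanSpace ℝ (Fin n)) ρ, ‖ξ‖ ^ (2 * s) * ‖F0 ξ‖ ^ 2)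
      (𝓝[>] (0:ℝ)) (𝓝 Q) := by
  have hg : Integrable (fun ξ : EuclideanSpace ℝ (Fin n) => ‖F0 ξ‖ ^ 2) := by
    have hpos : ∀ ξ : EuclideanSpace ℝ (Fin n), 1 ≤ (1 + ‖ξ‖ ^ 2) ^ s := fun ξ =>
      Real.one_le_rpow (by nlinarith [sq_nonneg ‖ξ‖]) hs.le
    have := hHs.bdd_mul (c := 1) (f := fun ξ : EuclideanSpace ℝ (Fin n) =>
      ((1 + ‖ξ‖ ^ 2) ^ s)⁻¹) (Measurable.aestronglyMeasurable (by fun_prop))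
      (Eventually.of_forall fun ξ => by
        rw [norm_inv, Real.norm_of_nonneg (by linarith [hpos ξ])]
        exact inv_le_one_of_one_le₀ (hpos ξ))
    refine this.congr (Eventually.of_forall fun ξ => ?_)
    have := hpos ξ
    simp only
    rw [inv_mul_cancel_left₀ (by linarith)]
  have ha : 0 < 2 * r + n := by linarith
  have hb : 0 < 2 * s := by linarith
  have hlim' : Tendsto (fun ρ : ℝ => ρ ^ (-(2 * r + n)) *
        ∫ ξ in closedBall (0 : EuclideanSpace ℝ (Fin n)) ρ, ‖F0 ξ‖ ^ 2)
      (𝓝[>] (0:ℝ)) (𝓝 P) := by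
    have e : -(2 * r + (n : ℝ)) = -(2 * r) - n := by ring
    rw [e]; exact hlim
  have hL := aux_lim _ _ (2 * s) ha hb P hlim' (fun ρ hρ => (aux_fubini n _ hg _ hb ρ hρ).1)
  refine ⟨P - P * (2 * s / (2 * r + n + 2 * s)), ?_, (hlim'.sub hL).congr' ?_⟩
  · have : 2 * s / (2 * r + n + 2 * s) < 1 := by
      rw [div_lt_one (by positivity)]; linarith
    nlinarith
  · filter_upwards [self_mem_nhdsWithin] with ρ hρ
    have hρ : 0 < ρ := hρ
    rw [(aux_fubini n _ hg _ hb ρ hρ).2, mul_sub, ← mul_assoc, ← Real.rpow_add hρ]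
    congr 3 <;> ring
end

section
/- Let s > 0 and u₀ ∈ H^s(ℝⁿ). Then the following are equivalent: (a) for every r ∈ (−n/2, ∞), ρ^{−2r−n} ∫_{|ξ|≤ρ} |û₀(ξ)|² dξ → 0 as ρ → 0⁺; (b) for every r ∈ (−n/2 + s, ∞), ρ^{−2r−n} ∫_{|ξ|≤ρ} |ξ|^{2s} |û₀(ξ)|² dξ → 0 as ρ → 0⁺. In other words, the decay character of u₀ equals ∞ if and only if the decay character of Λ^s u₀ equals ∞. -/
open MeasureTheory Filter Topology Metric

theorem dyadic_iter (G : ℝ → ℝ) (a c ρ₀ : ℝ) (ha : 0 < a) (_hc : 0 ≤ c)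
    (hG : ∀ ρ : ℝ, 0 < ρ → Tendsto (fun k : ℕ => G (ρ * (1/2)^k)) atTop (𝓝 0))
    (h : ∀ ρ : ℝ, 0 < ρ → ρ < ρ₀ → G ρ ≤ G (ρ * (1/2)) + c * ρ ^ a)
    (ρ : ℝ) (hρ : 0 < ρ) (hρ0 : ρ < ρ₀) :
    G ρ ≤ c / (1 - (1/2:ℝ)^a) * ρ ^ a := by
  have hq : (1/2:ℝ)^a < 1 := Real.rpow_lt_one (by norm_num) (by norm_num) ha
  set K := c / (1 - (1/2:ℝ)^a) with hK
  have hKe : K * (1 - (1/2:ℝ)^a) = c := by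
    rw [hK]; exact div_mul_cancel₀ _ (by linarith)
  have hK0 : 0 ≤ K := div_nonneg _hc (by linarith)
  have step : ∀ k : ℕ, G ρ - K * ρ^a ≤ G (ρ * (1/2)^k) - K * (ρ * (1/2)^k)^a := by
    intro k
    induction k with
    | zero => simp
    | succ k ih =>
      refine ih.trans ?_
      have hp : 0 < ρ * (1/2:ℝ)^k := by positivity
      have hl : ρ * (1/2:ℝ)^k < ρ₀ := by
        refine lt_of_le_of_lt ?_ hρ0
        exact mul_le_of_le_one_right hρ.le (pow_le_one₀ (by norm_num) (by norm_num))
      have := h _ hp hl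
      rw [pow_succ, ← mul_assoc, Real.mul_rpow (x := ρ * (1/2)^k) hp.le (by norm_num)]
      rw [← hKe] at this
      linarith
  have : G ρ - K * ρ^a ≤ 0 := by
    refine ge_of_tendsto' (hG ρ hρ) (fun k => (step k).trans ?_)
    have : 0 ≤ K * (ρ * (1/2)^k)^a := by positivity
    linarith
  linarith

/-- **`r*(u₀) = ∞` iff `r*_s(u₀) = ∞`.**
For `u₀ ∈ H^s(ℝⁿ)`, `s > 0` (encoded via Plancherel as integrability of
`(1+|ξ|²)^s |û₀(ξ)|²`), all decay indicators of `u₀` vanish as `ρ → 0⁺` if and only if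
all `s`-decay indicators of `Λ^s u₀` vanish as `ρ → 0⁺`. -/
theorem decay_character_infty_iff
    (n : ℕ) (hn : 1 ≤ n) (s : ℝ) (hs : 0 < s)
    (F0 : EuclideanSpace ℝ (Fin n) → ℂ)
    (hHs : Integrable (fun ξ : EuclideanSpace ℝ (Fin n) =>
      (1 + ‖ξ‖ ^ 2) ^ s * ‖F0 ξ‖ ^ 2)) :
    (∀ r : ℝ, -(n : ℝ) / 2 < r →
      Tendsto (fun ρ : ℝ => ρ ^ (-(2 * r) - (n : ℝ)) *
          ∫ ξ in closedBall (0 : EuclideanSpace ℝ (Fin n)) ρ, ‖F0 ξ‖ ^ 2)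
        (𝓝[>] (0:ℝ)) (𝓝 0))
    ↔ (∀ r : ℝ, -(n : ℝ) / 2 + s < r →
      Tendsto (fun ρ : ℝ => ρ ^ (-(2 * r) - (n : ℝ)) *
          ∫ ξ in closedBall (0 : EuclideanSpace ℝ (Fin n)) ρ, ‖ξ‖ ^ (2 * s) * ‖F0 ξ‖ ^ 2)
        (𝓝[>] (0:ℝ)) (𝓝 0)) := by
  have hint : Integrable (fun ξ : EuclideanSpace ℝ (Fin n) => ‖F0 ξ‖ ^ 2) := by
    have hpos : ∀ ξ : EuclideanSpace ℝ (Fin n), 1 ≤ (1 + ‖ξ‖ ^ 2) ^ s := fun ξ =>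
      Real.one_le_rpow (by nlinarith [sq_nonneg ‖ξ‖]) hs.le
    have hcont : Continuous (fun ξ : EuclideanSpace ℝ (Fin n) => ((1 + ‖ξ‖ ^ 2) ^ s)⁻¹) := by
      refine Continuous.inv₀ ?_ (fun ξ => (lt_of_lt_of_le one_pos (hpos ξ)).ne')
      exact Continuous.rpow_const (by fun_prop) (fun _ => Or.inr hs.le)
    have hm : AEStronglyMeasurable (fun ξ : EuclideanSpace ℝ (Fin n) => ‖F0 ξ‖ ^ 2) volume := by
      refine (hcont.aestronglyMeasurable.mul hHs.1).congr (Eventually.of_forall fun ξ => ?_)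
      have : (1 + ‖ξ‖ ^ 2) ^ s ≠ 0 := (lt_of_lt_of_le one_pos (hpos ξ)).ne'
      simp only [Pi.mul_apply]
      exact inv_mul_cancel_left₀ this _
    refine hHs.mono' hm (Eventually.of_forall fun ξ => ?_)
    rw [Real.norm_of_nonneg (by positivity)]
    exact le_mul_of_one_le_left (by positivity) (hpos ξ)
  have hwc : Continuous (fun ξ : EuclideanSpace ℝ (Fin n) => ‖ξ‖ ^ (2 * s)) :=
    Continuous.rpow_const continuous_norm (fun _ => Or.inr (by positivity))
  have hint2 : ∀ ρ : ℝ, IntegrableOn (fun ξ : EuclideanSpace ℝ (Fin n) =>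
      ‖ξ‖ ^ (2 * s) * ‖F0 ξ‖ ^ 2) (closedBall 0 ρ) := fun ρ =>
    hint.integrableOn.continuousOn_mul hwc.continuousOn (isCompact_closedBall _ _)
  set G : ℝ → ℝ := fun ρ => ∫ ξ in closedBall (0 : EuclideanSpace ℝ (Fin n)) ρ, ‖F0 ξ‖ ^ 2 with hGdef
  set H : ℝ → ℝ := fun ρ => ∫ ξ in closedBall (0 : EuclideanSpace ℝ (Fin n)) ρ,
    ‖ξ‖ ^ (2 * s) * ‖F0 ξ‖ ^ 2 with hHdef
  have hG0 : ∀ ρ, 0 ≤ G ρ := fun ρ => integral_nonneg fun ξ => by positivity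
  have hH0 : ∀ ρ, 0 ≤ H ρ := fun ρ => integral_nonneg fun ξ => by positivity
  have hHG : ∀ ρ, 0 < ρ → H ρ ≤ ρ ^ (2 * s) * G ρ := by
    intro ρ hρ
    rw [hHdef, hGdef]
    simp only
    rw [← integral_const_mul]
    refine setIntegral_mono_on (hint2 ρ) (hint.integrableOn.const_mul _) measurableSet_closedBall ?_
    intro ξ hξ
    rw [mem_closedBall_zero_iff] at hξ
    gcongr
  have hstep : ∀ ρ, 0 < ρ → G ρ ≤ G (ρ * (1/2)) + (ρ * (1/2)) ^ (-(2 * s)) * H ρ := by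
    intro ρ hρ
    have hsub : closedBall (0 : EuclideanSpace ℝ (Fin n)) (ρ * (1/2)) ⊆ closedBall 0 ρ :=
      closedBall_subset_closedBall (by linarith)
    have e1 : G ρ = (∫ ξ in closedBall (0 : EuclideanSpace ℝ (Fin n)) ρ \ closedBall 0 (ρ * (1/2)),
        ‖F0 ξ‖ ^ 2) + G (ρ * (1/2)) := by
      rw [setIntegral_diff measurableSet_closedBall hint.integrableOn hsub]
      simp [hGdef]
    have e2 : (∫ ξ in closedBall (0 : EuclideanSpace ℝ (Fin n)) ρ \ closedBall 0 (ρ * (1/2)),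
        ‖F0 ξ‖ ^ 2) ≤ (ρ * (1/2)) ^ (-(2 * s)) * H ρ := by
      have hi : IntegrableOn (fun ξ : EuclideanSpace ℝ (Fin n) => (ρ * (1/2)) ^ (-(2 * s)) *
          (‖ξ‖ ^ (2 * s) * ‖F0 ξ‖ ^ 2)) (closedBall 0 ρ) := (hint2 ρ).const_mul _
      rw [hHdef]
      simp only
      rw [← integral_const_mul]
      refine le_trans (setIntegral_mono_on hint.integrableOn (hi.mono_set Set.diff_subset)
        (measurableSet_closedBall.diff measurableSet_closedBall) ?_)
        (setIntegral_mono_set hi (Eventually.of_forall fun ξ => ?_)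
          (Set.diff_subset.eventuallyLE))
      · intro ξ hξ
        have h1 : ρ * (1/2) < ‖ξ‖ := by
          have := hξ.2
          rwa [mem_closedBall_zero_iff, not_le] at this
        have hp : 0 < ρ * (1/2) := by positivity
        have h2 : (ρ * (1/2)) ^ (2 * s) ≤ ‖ξ‖ ^ (2 * s) := by gcongr
        rw [← mul_assoc]
        refine le_mul_of_one_le_left (by positivity) ?_
        rw [Real.rpow_neg hp.le, inv_mul_eq_div, one_le_div (by positivity)]
        exact h2
      · simp only [Pi.zero_apply]
        positivity
    linarith
  have hGlim : ∀ ρ : ℝ, 0 < ρ → Tendsto (fun k : ℕ => G (ρ * (1/2)^k)) atTop (𝓝 0) := by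
    intro ρ hρ
    haveI : Nonempty (Fin n) := ⟨⟨0, hn⟩⟩
    have hlim0 : Tendsto (fun k : ℕ => ρ * (1/2:ℝ)^k) atTop (𝓝 0) := by
      simpa using (tendsto_pow_atTop_nhds_zero_of_lt_one (r := (1/2:ℝ)) (by norm_num)
        (by norm_num)).const_mul ρ
    have hInter : (⋂ k : ℕ, closedBall (0 : EuclideanSpace ℝ (Fin n)) (ρ * (1/2)^k)) = {0} := by
      ext ξ
      simp only [Set.mem_iInter, mem_closedBall_zero_iff, Set.mem_singleton_iff]
      constructor
      · intro h
        exact norm_le_zero_iff.1 (ge_of_tendsto' hlim0 h)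
      · rintro rfl k
        rw [norm_zero]; positivity
    have hanti : Antitone (fun k : ℕ =>
        closedBall (0 : EuclideanSpace ℝ (Fin n)) (ρ * (1/2)^k)) := by
      intro i j hij
      refine closedBall_subset_closedBall ?_
      exact mul_le_mul_of_nonneg_left
        (pow_le_pow_of_le_one (by norm_num) (by norm_num) hij) hρ.le
    have := tendsto_setIntegral_of_antitone (μ := (volume : Measure (EuclideanSpace ℝ (Fin n))))
      (f := fun ξ => ‖F0 ξ‖ ^ 2) (fun k => measurableSet_closedBall) hanti
      ⟨0, hint.integrableOn⟩
    rw [hInter, setIntegral_measure_zero _ (by simp)] at this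
    exact this
  constructor
  · intro h r hr
    have h1 := h (r - s) (by linarith)
    refine squeeze_zero' ?_ ?_ h1
    · filter_upwards [self_mem_nhdsWithin] with ρ hρ
      have hρ : 0 < ρ := hρ
      exact mul_nonneg (by positivity) (hH0 ρ)
    · filter_upwards [self_mem_nhdsWithin] with ρ hρ
      have hρ : 0 < ρ := hρ
      have e : ρ ^ (-(2 * (r - s)) - (n:ℝ)) = ρ ^ (-(2 * r) - (n:ℝ)) * ρ ^ (2 * s) := by
        rw [← Real.rpow_add hρ]; congr 1; ring
      rw [e, mul_assoc]
      exact mul_le_mul_of_nonneg_left (hHG ρ hρ) (by positivity)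
  · intro h r hr
    have h1 := h (r + s) (by linarith)
    set a : ℝ := 2 * r + n with ha_def
    have ha : 0 < a := by rw [ha_def]; linarith
    have hq : (1/2:ℝ)^a < 1 := Real.rpow_lt_one (by norm_num) (by norm_num) ha
    set C : ℝ := (1/2:ℝ) ^ (-(2 * s)) / (1 - (1/2:ℝ)^a) with hC
    have hCpos : 0 < C := div_pos (by positivity) (by linarith)
    rw [Metric.tendsto_nhds]
    intro ε hε
    have h2 := (Metric.tendsto_nhds.1 h1) (ε / (2 * C)) (by positivity)
    obtain ⟨ρ₀, hρ₀, hb⟩ := mem_nhdsGT_iff_exists_Ioo_subset.1 h2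
    have hρ₀ : 0 < ρ₀ := hρ₀
    have hHb : ∀ ρ, 0 < ρ → ρ < ρ₀ → H ρ ≤ ε / (2 * C) * ρ ^ (a + 2 * s) := by
      intro ρ hp hl
      have h3 := hb ⟨hp, hl⟩
      simp only [Set.mem_setOf_eq, dist_zero_right] at h3
      have h4 := (le_abs_self _).trans_lt h3
      have e : ρ ^ (-(2 * (r + s)) - (n:ℝ)) = (ρ ^ (a + 2 * s))⁻¹ := by
        rw [← Real.rpow_neg hp.le]; congr 1; rw [ha_def]; ring
      rw [e, inv_mul_eq_div, div_lt_iff₀ (by positivity)] at h4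
      exact h4.le
    have hrec : ∀ ρ : ℝ, 0 < ρ → ρ < ρ₀ →
        G ρ ≤ G (ρ * (1/2)) + ((1/2:ℝ) ^ (-(2 * s)) * (ε / (2 * C))) * ρ ^ a := by
      intro ρ hp hl
      have h5 : (ρ * (1/2)) ^ (-(2 * s)) * H ρ ≤
          (ρ * (1/2)) ^ (-(2 * s)) * (ε / (2 * C) * ρ ^ (a + 2 * s)) :=
        mul_le_mul_of_nonneg_left (hHb ρ hp hl) (by positivity)
      have e : ρ ^ a = ρ ^ (-(2 * s)) * ρ ^ (a + 2 * s) := by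
        rw [← Real.rpow_add hp]; congr 1; ring
      have h6 := hstep ρ hp
      rw [Real.mul_rpow hp.le (by norm_num)] at h5 h6
      rw [e]
      linarith
    filter_upwards [Ioo_mem_nhdsGT hρ₀] with ρ hρ
    have h7 := dyadic_iter G a _ ρ₀ ha (by positivity) hGlim hrec ρ hρ.1 hρ.2
    have e2 : (1/2:ℝ) ^ (-(2 * s)) * (ε / (2 * C)) / (1 - (1/2:ℝ)^a) = ε / 2 := by
      rw [mul_div_right_comm, ← hC]
      field_simp
    rw [e2] at h7
    have hp : 0 < ρ := hρ.1
    have e : ρ ^ (-(2 * r) - (n:ℝ)) = (ρ ^ a)⁻¹ := by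
      rw [← Real.rpow_neg hp.le]; congr 1; rw [ha_def]; ring
    rw [dist_zero_right, Real.norm_of_nonneg (mul_nonneg (by positivity) (hG0 ρ)), e,
      inv_mul_eq_div, div_lt_iff₀ (by positivity)]
    have : 0 < ρ ^ a := by positivity
    nlinarith
end

section
/- Let α, ν > 0 with ν > α², and let u₀ ∈ H¹(ℝ³;ℝ³) be divergence-free. Let r* ∈ [−3/2, ∞) and assume limsup_{ρ→0⁺} ρ^{−2r*−3} ∫_{|ξ|≤ρ} |û₀(ξ)|² dξ < ∞ (no condition when r* = −3/2). Let u : [0,∞) → H¹(ℝ³;ℝ³) with u(0) = u₀ satisfy: (i) the energy inequality: t ↦ ‖u(t)‖²_{L²} + α²‖∇u(t)‖²_{L²} is locally absolutely continuous with derivative ≤ −2ν‖∇u(t)‖²_{L²} for almost every t; (ii) the Fourier-side Duhamel representation: there exist K > 0 and a measurable G with |G(ξ,τ)| ≤ K|ξ|‖u(τ)‖²_{L²} such that û(ξ,t) = e^{tM(ξ)} û₀(ξ) − ∫₀ᵗ e^{(t−τ)M(ξ)} G(ξ,τ) dτ for all t and almost every ξ, where M(ξ) = −ν|ξ|²/(1+α²|ξ|²).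 Then there exist constants C₁, C₂ > 0 such that for all t > 0, ‖u(t)‖²_{L²} + α²‖∇u(t)‖²_{L²} ≤ C₁ (C₂ + t)^{−min{3/2 + r*, 5/2}}. -/
open MeasureTheory Filter Topology Metric

abbrev V3 := EuclideanSpace ℝ (Fin 3)
abbrev W3 := EuclideanSpace ℂ (Fin 3)

lemma aux_doubling (E : ℝ → ℝ) (q H t0 : ℝ) (hq : 0 ≤ q) (hq2 : q ≤ 5/2) (hH : 0 ≤ H) (ht0 : 1 ≤ t0)
    (hanti : ∀ s t, 0 ≤ s → s ≤ t → E t ≤ E s) (hE0 : ∀ t, 0 ≤ t → 0 ≤ E t)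
    (hd : ∀ t, t0 ≤ t → E (2 * t) ≤ E t / 16 + H * t ^ (-q)) :
    ∃ C > (0:ℝ), ∀ t, 0 ≤ t → E t ≤ C * (1 + t) ^ (-q) := by
  have ht0p : 0 < t0 := by linarith
  have h2q : (2:ℝ) ^ q ≤ 8 := by
    calc (2:ℝ) ^ q ≤ (2:ℝ) ^ (3:ℝ) := Real.rpow_le_rpow_of_exponent_le (by norm_num) (by linarith)
      _ = 8 := by norm_num
  obtain ⟨A, hA1, hA2⟩ : ∃ A : ℝ, 16 * H ≤ A ∧ E 0 * (2 * t0) ^ q ≤ A :=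
    ⟨max _ _, le_max_left _ _, le_max_right _ _⟩
  have hA : 0 ≤ A := by linarith
  have base : ∀ t, 0 < t → t ≤ 2 * t0 → E t ≤ A * t ^ (-q) := by
    intro t h0 h1
    have h2 : E t ≤ E 0 := hanti 0 t le_rfl h0.le
    have h3 : t ^ q ≤ (2 * t0) ^ q := Real.rpow_le_rpow h0.le h1 hq
    have h4 : 0 < t ^ q := Real.rpow_pos_of_pos h0 q
    rw [Real.rpow_neg h0.le, ← div_eq_mul_inv, le_div_iff₀ h4]
    have := hE0 0 le_rfl
    calc E t * t ^ q ≤ E 0 * (2 * t0) ^ q := by gcongr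
      _ ≤ A := hA2
  have ind : ∀ n : ℕ, ∀ t, t0 ≤ t → t ≤ 2 ^ n * t0 → E t ≤ A * t ^ (-q) := by
    intro n
    induction n with
    | zero => intro t h1 h2; exact base t (by linarith) (by simp at h2; linarith)
    | succ n ih =>
      intro t h1 h2
      by_cases h3 : t ≤ 2 * t0
      · exact base t (by linarith) h3
      · push Not at h3
        have h4 := ih (t/2) (by linarith) (by rw [pow_succ] at h2; linarith)
        have h5 := hd (t/2) (by linarith)
        rw [show 2 * (t/2) = t by ring] at h5
        have htp : 0 < t := by linarith
        have h6 : (t/2) ^ (-q) = 2 ^ q * t ^ (-q) := by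
          rw [Real.div_rpow htp.le (by norm_num), Real.rpow_neg (by norm_num : (0:ℝ) ≤ 2)]
          field_simp
        have h7 : 0 < t ^ (-q) := Real.rpow_pos_of_pos htp _
        rw [h6] at h4 h5
        have h8 : 2 ^ q * t ^ (-q) ≤ 8 * t ^ (-q) := by gcongr
        have h9 : (A / 16 + H) * (2 ^ q * t ^ (-q)) ≤ (A/16 + H) * (8 * t ^ (-q)) := by gcongr
        have h10 : (A/16 + H) * 8 * t ^ (-q) ≤ A * t ^ (-q) := by
          gcongr; linarith
        nlinarith
  have hall : ∀ t, 0 < t → E t ≤ A * t ^ (-q) := by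
    intro t ht
    by_cases h : t ≤ 2 * t0
    · exact base t ht h
    · push Not at h
      obtain ⟨n, hn⟩ := pow_unbounded_of_one_lt t (by norm_num : (1:ℝ) < 2)
      exact ind n t (by linarith) (hn.le.trans (le_mul_of_one_le_right (by positivity) ht0))
  obtain ⟨C, hC1, hC2⟩ : ∃ C : ℝ, 8 * A + 1 ≤ C ∧ E 0 * 8 ≤ C :=
    ⟨max _ _, le_max_left _ _, le_max_right _ _⟩
  refine ⟨C, by linarith, fun t ht => ?_⟩
  have h1 : 0 < (1 + t) ^ q := Real.rpow_pos_of_pos (by linarith) q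
  rw [Real.rpow_neg (by linarith), ← div_eq_mul_inv, le_div_iff₀ h1]
  have := hE0 t ht
  by_cases h : t ≤ 1
  · have : (1 + t) ^ q ≤ 2 ^ q := Real.rpow_le_rpow (by linarith) (by linarith) hq
    calc E t * (1+t) ^ q ≤ E 0 * 8 := by
          gcongr
          · exact hE0 0 le_rfl
          · exact hanti 0 t le_rfl ht
          · linarith
      _ ≤ C := hC2
  · push Not at h
    have htp : 0 < t := by linarith
    have h3 : (1 + t) ^ q ≤ (2 * t) ^ q := Real.rpow_le_rpow (by linarith) (by linarith) hq
    rw [Real.mul_rpow (by norm_num) htp.le] at h3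
    have h4 := hall t htp
    have h5 : 0 < t ^ q := Real.rpow_pos_of_pos htp q
    rw [Real.rpow_neg htp.le, ← div_eq_mul_inv, le_div_iff₀ h5] at h4
    calc E t * (1+t) ^ q ≤ E t * (8 * t ^ q) := by
          gcongr
          exact h3.trans (by gcongr)
      _ = 8 * (E t * t ^ q) := by ring
      _ ≤ C := by linarith

lemma aux_integrable (f : V3 → W3) (hf : Integrable (fun ξ : V3 => (1 + ‖ξ‖ ^ 2) * ‖f ξ‖ ^ 2))
    (w : V3 → ℝ) (hw : Continuous w) (C : ℝ) (hC : ∀ ξ, |w ξ| ≤ C * (1 + ‖ξ‖ ^ 2)) :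
    Integrable (fun ξ : V3 => w ξ * ‖f ξ‖ ^ 2) := by
  have hc : Continuous (fun ξ : V3 => w ξ * (1 + ‖ξ‖ ^ 2)⁻¹) := by
    refine hw.mul (Continuous.inv₀ (by fun_prop) ?_)
    intro ξ; positivity
  have h := hf.bdd_mul (c := C) hc.aestronglyMeasurable (Eventually.of_forall (fun ξ => ?_))
  · refine h.congr (Eventually.of_forall (fun ξ => ?_))
    have : (1 + ‖ξ‖ ^ 2) ≠ 0 := by positivity
    simp only
    field_simp
  · have h1 : 0 < 1 + ‖ξ‖ ^ 2 := by positivity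
    rw [norm_mul, Real.norm_eq_abs, norm_inv, Real.norm_eq_abs, abs_of_pos h1,
      ← div_eq_mul_inv, div_le_iff₀ h1]
    exact hC ξ

lemma aux_int_sqrt (t : ℝ) (ht : 0 ≤ t) (q : ℝ) (hq : q ≠ 1) :
    IntervalIntegrable (fun τ : ℝ => (1 + τ) ^ (-q)) volume 0 t ∧
    ∫ τ in (0:ℝ)..t, (1 + τ) ^ (-q) = ((1 + t) ^ (1 - q) - 1) / (1 - q) := by
  constructor
  · apply ContinuousOn.intervalIntegrable
    intro x hx
    rw [Set.uIcc_of_le ht] at hx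
    apply ContinuousAt.continuousWithinAt
    refine ContinuousAt.rpow_const (by fun_prop) (Or.inl ?_)
    linarith [hx.1]
  · rw [intervalIntegral.integral_comp_add_left (fun x : ℝ => x ^ (-q)) 1, integral_rpow]
    · rw [show -q + 1 = 1 - q by ring]; simp
    · right
      refine ⟨fun h => hq (by linarith), ?_⟩
      rw [Set.uIcc_of_le (by linarith)]
      intro h; linarith [h.1]

/-- Fourier splitting at a fixed time. -/
lemma aux_split (α ρ : ℝ) (hρ : 0 < ρ) (hρ1 : ρ ≤ 1) (f : V3 → W3)
    (hf : Integrable (fun ξ : V3 => (1 + ‖ξ‖ ^ 2) * ‖f ξ‖ ^ 2)) :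
    ρ ^ 2 / (1 + α ^ 2) * ((∫ ξ : V3, (1 + α ^ 2 * ‖ξ‖ ^ 2) * ‖f ξ‖ ^ 2)
      - (1 + α ^ 2) * ∫ ξ in closedBall (0 : V3) ρ, ‖f ξ‖ ^ 2)
      ≤ ∫ ξ : V3, ‖ξ‖ ^ 2 * ‖f ξ‖ ^ 2 := by
  have h1 := aux_integrable f hf (fun ξ => 1 + α ^ 2 * ‖ξ‖ ^ 2) (by fun_prop) (1 + α ^ 2)
    (fun ξ => by rw [abs_of_nonneg (by positivity)]; nlinarith [sq_nonneg α, sq_nonneg ‖ξ‖])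
  have h2 := aux_integrable f hf (fun ξ => ‖ξ‖ ^ 2) (by fun_prop) 1
    (fun ξ => by rw [abs_of_nonneg (by positivity)]; nlinarith)
  have h3 := aux_integrable f hf (fun ξ => 1) (by fun_prop) 1
    (fun ξ => by rw [abs_of_nonneg (by positivity)]; nlinarith [sq_nonneg ‖ξ‖])
  simp only [one_mul] at h3
  have hm : MeasurableSet (closedBall (0 : V3) ρ) := measurableSet_closedBall
  rw [← integral_indicator hm, ← integral_const_mul, ← integral_sub h1 ((h3.indicator hm).const_mul _),
    ← integral_const_mul]
  refine integral_mono ((h1.sub ((h3.indicator hm).const_mul _)).const_mul _) h2 (fun ξ => ?_)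
  simp only
  have ha : 0 < 1 + α ^ 2 := by positivity
  rw [div_mul_eq_mul_div, div_le_iff₀ ha]
  have hN : 0 ≤ ‖f ξ‖ ^ 2 := by positivity
  have hρ2 : ρ ^ 2 ≤ 1 := by nlinarith
  by_cases hξ : ξ ∈ closedBall (0 : V3) ρ
  · rw [Set.indicator_of_mem hξ]
    have hξ' : ‖ξ‖ ≤ ρ := by simpa using hξ
    have h5 : ‖ξ‖ ^ 2 ≤ 1 := by nlinarith [norm_nonneg ξ]
    have h6 : (1 + α ^ 2 * ‖ξ‖ ^ 2) * ‖f ξ‖ ^ 2 - (1 + α ^ 2) * ‖f ξ‖ ^ 2 ≤ 0 := by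
      rw [← sub_mul]
      apply mul_nonpos_of_nonpos_of_nonneg _ hN
      nlinarith [sq_nonneg α]
    calc _ ≤ 0 := mul_nonpos_of_nonneg_of_nonpos (by positivity) h6
      _ ≤ _ := by positivity
  · rw [Set.indicator_of_notMem hξ]
    have hξ' : ρ < ‖ξ‖ := by simpa using hξ
    have h5 : ρ ^ 2 ≤ ‖ξ‖ ^ 2 := by gcongr
    have h6 : ρ ^ 2 * (1 + α ^ 2 * ‖ξ‖ ^ 2) ≤ ‖ξ‖ ^ 2 * (1 + α ^ 2) := by
      have : α ^ 2 * ‖ξ‖ ^ 2 * ρ ^ 2 ≤ α ^ 2 * ‖ξ‖ ^ 2 * 1 := by gcongr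
      nlinarith
    calc _ = ρ ^ 2 * (1 + α ^ 2 * ‖ξ‖ ^ 2) * ‖f ξ‖ ^ 2 := by ring
      _ ≤ ‖ξ‖ ^ 2 * (1 + α ^ 2) * ‖f ξ‖ ^ 2 := by gcongr
      _ = _ := by ring

/-- Low frequency bound. -/
lemma aux_low (ρ J : ℝ) (hρ : 0 < ρ) (hJ : 0 ≤ J) (f g : V3 → W3)
    (hf : Integrable (fun ξ : V3 => (1 + ‖ξ‖ ^ 2) * ‖f ξ‖ ^ 2))
    (hg : Integrable (fun ξ : V3 => (1 + ‖ξ‖ ^ 2) * ‖g ξ‖ ^ 2))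
    (h : ∀ᵐ ξ : V3, ‖f ξ‖ ≤ ‖g ξ‖ + ‖ξ‖ * J) :
    ∫ ξ in closedBall (0 : V3) ρ, ‖f ξ‖ ^ 2 ≤
      2 * (∫ ξ in closedBall (0 : V3) ρ, ‖g ξ‖ ^ 2)
      + 2 * (volume (closedBall (0 : V3) 1)).toReal * ρ ^ 5 * J ^ 2 := by
  have h3 := aux_integrable f hf (fun ξ => 1) (by fun_prop) 1
    (fun ξ => by rw [abs_of_nonneg (by positivity)]; nlinarith [sq_nonneg ‖ξ‖])
  have h4 := aux_integrable g hg (fun ξ => 1) (by fun_prop) 1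
    (fun ξ => by rw [abs_of_nonneg (by positivity)]; nlinarith [sq_nonneg ‖ξ‖])
  simp only [one_mul] at h3 h4
  have hm : MeasurableSet (closedBall (0 : V3) ρ) := measurableSet_closedBall
  have hfin : volume (closedBall (0 : V3) ρ) < ⊤ := measure_closedBall_lt_top
  have hcint : IntegrableOn (fun _ : V3 => 2 * (ρ ^ 2 * J ^ 2)) (closedBall (0 : V3) ρ) :=
    integrableOn_const hfin.ne
  have hle : ∫ ξ in closedBall (0 : V3) ρ, ‖f ξ‖ ^ 2 ≤
      ∫ ξ in closedBall (0 : V3) ρ, (2 * ‖g ξ‖ ^ 2 + 2 * (ρ ^ 2 * J ^ 2)) := by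
    refine setIntegral_mono_on_ae h3.integrableOn
      ((h4.integrableOn.const_mul 2).add hcint) hm ?_
    filter_upwards [h] with ξ h1 hξ
    have hξ' : ‖ξ‖ ≤ ρ := by simpa using hξ
    have h5 : ‖ξ‖ * J ≤ ρ * J := by gcongr
    have h6 : ‖f ξ‖ ^ 2 ≤ (‖g ξ‖ + ρ * J) ^ 2 := by
      gcongr; linarith
    nlinarith [sq_nonneg (‖g ξ‖ - ρ * J)]
  refine hle.trans (le_of_eq ?_)
  rw [integral_add (h4.integrableOn.const_mul 2) hcint, integral_const_mul, setIntegral_const]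
  have hv : volume.real (closedBall (0 : V3) ρ) =
      ρ ^ 3 * (volume (closedBall (0 : V3) 1)).toReal := by
    rw [Measure.real, Measure.addHaar_closedBall' _ _ hρ.le]
    simp [ENNReal.toReal_mul, ENNReal.toReal_ofReal, hρ.le]
  rw [hv, smul_eq_mul]
  ring

lemma aux_duhamel (α ν K s I : ℝ) (hν : 0 < ν) (hs : 0 ≤ s) (ξ : V3)
    (L : ℝ → ℝ) (hI : ∫ τ in (0:ℝ)..s, L τ ≤ I) (hK : 0 < K)
    (hL : IntervalIntegrable L volume 0 s) (G : ℝ → W3) (hG : ∀ τ, ‖G τ‖ ≤ K * ‖ξ‖ * L τ) (f g : W3)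
    (h : f = Real.exp (s * (-(ν * ‖ξ‖ ^ 2) / (1 + α ^ 2 * ‖ξ‖ ^ 2))) • g
        - ∫ τ in (0:ℝ)..s,
            Real.exp ((s - τ) * (-(ν * ‖ξ‖ ^ 2) / (1 + α ^ 2 * ‖ξ‖ ^ 2))) • G τ) :
    ‖f‖ ≤ ‖g‖ + ‖ξ‖ * (K * I) := by
  have hM : -(ν * ‖ξ‖ ^ 2) / (1 + α ^ 2 * ‖ξ‖ ^ 2) ≤ 0 :=
    div_nonpos_of_nonpos_of_nonneg (by have : 0 ≤ ν * ‖ξ‖ ^ 2 := by positivity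
                                       linarith) (by positivity)
  have he : ∀ a : ℝ, 0 ≤ a → ‖Real.exp (a * (-(ν * ‖ξ‖ ^ 2) / (1 + α ^ 2 * ‖ξ‖ ^ 2)))‖ ≤ 1 := by
    intro a ha
    rw [Real.norm_eq_abs, Real.abs_exp, Real.exp_le_one_iff]
    exact mul_nonpos_of_nonneg_of_nonpos ha hM
  rw [h]
  refine (norm_sub_le _ _).trans (add_le_add ?_ ?_)
  · rw [norm_smul]
    exact mul_le_of_le_one_left (norm_nonneg _) (he s hs)
  · calc _ ≤ ∫ τ in (0:ℝ)..s, K * ‖ξ‖ * L τ := by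
          refine intervalIntegral.norm_integral_le_of_norm_le hs (Eventually.of_forall ?_)
            (hL.const_mul _)
          intro τ hτ
          rw [norm_smul]
          exact (mul_le_of_le_one_left (norm_nonneg _) (he _ (by linarith [hτ.2]))).trans (hG τ)
      _ = ‖ξ‖ * (K * ∫ τ in (0:ℝ)..s, L τ) := by
          rw [intervalIntegral.integral_const_mul]; ring
      _ ≤ _ := by gcongr

set_option maxHeartbeats 2000000

/-- **Decay of weak solutions to the Navier–Stokes–Voigt equations** (final decay rate).
Here `û₀ = F0`, `û(t) = Uhat t`, `M(ξ) = -ν|ξ|²/(1+α²|ξ|²)`, and by Plancherel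
`‖u(t)‖²_{L²} + α²‖∇u(t)‖²_{L²} = ∫ (1+α²|ξ|²)‖û(ξ,t)‖² dξ`.  Hypothesis (i), the local
absolute continuity of the energy with a.e. derivative `≤ -2ν‖∇u(t)‖²_{L²}`, is encoded
by a locally integrable a.e. derivative `D`; hypothesis (ii) is the Fourier-side Duhamel
representation with `‖G(ξ,τ)‖ ≤ K|ξ|‖u(τ)‖²_{L²}`. -/
theorem NSV_decay
    (α ν K rstar : ℝ) (hα : 0 < α) (hν : 0 < ν) (hνα : α ^ 2 < ν) (hK : 0 < K)
    (hrstar : -(3:ℝ)/2 ≤ rstar)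
    (F0 : EuclideanSpace ℝ (Fin 3) → EuclideanSpace ℂ (Fin 3))
    (hH10 : Integrable (fun ξ : EuclideanSpace ℝ (Fin 3) => (1 + ‖ξ‖ ^ 2) * ‖F0 ξ‖ ^ 2))
    (hdiv : ∀ᵐ ξ ∂(volume : Measure (EuclideanSpace ℝ (Fin 3))),
      (∑ i : Fin 3, (ξ i : ℂ) * F0 ξ i) = 0)
    (hchar : rstar ≠ -(3:ℝ)/2 → ∃ c : ℝ, ∀ᶠ ρ in 𝓝[>] (0:ℝ),
      ρ ^ (-(2 * rstar) - 3) *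
        (∫ ξ in closedBall (0 : EuclideanSpace ℝ (Fin 3)) ρ, ‖F0 ξ‖ ^ 2) ≤ c)
    (Uhat : ℝ → EuclideanSpace ℝ (Fin 3) → EuclideanSpace ℂ (Fin 3))
    (hU0 : ∀ᵐ ξ ∂(volume : Measure (EuclideanSpace ℝ (Fin 3))), Uhat 0 ξ = F0 ξ)
    (hUH1 : ∀ t : ℝ, 0 ≤ t →
      Integrable (fun ξ : EuclideanSpace ℝ (Fin 3) => (1 + ‖ξ‖ ^ 2) * ‖Uhat t ξ‖ ^ 2))
    (D : ℝ → ℝ)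
    (hDint : ∀ t : ℝ, 0 ≤ t → IntervalIntegrable D volume 0 t)
    (hE : ∀ t : ℝ, 0 ≤ t →
      (∫ ξ : EuclideanSpace ℝ (Fin 3), (1 + α ^ 2 * ‖ξ‖ ^ 2) * ‖Uhat t ξ‖ ^ 2)
        = (∫ ξ : EuclideanSpace ℝ (Fin 3), (1 + α ^ 2 * ‖ξ‖ ^ 2) * ‖Uhat 0 ξ‖ ^ 2)
          + ∫ s in (0:ℝ)..t, D s)
    (hEderiv : ∀ᵐ s ∂(volume.restrict (Set.Ioi (0:ℝ))),
      D s ≤ -(2 * ν) * ∫ ξ : EuclideanSpace ℝ (Fin 3), ‖ξ‖ ^ 2 * ‖Uhat s ξ‖ ^ 2)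
    (G : EuclideanSpace ℝ (Fin 3) → ℝ → EuclideanSpace ℂ (Fin 3))
    (hGmeas : StronglyMeasurable (Function.uncurry G))
    (hGbound : ∀ ξ : EuclideanSpace ℝ (Fin 3), ∀ τ : ℝ,
      ‖G ξ τ‖ ≤ K * ‖ξ‖ * ∫ η : EuclideanSpace ℝ (Fin 3), ‖Uhat τ η‖ ^ 2)
    (hL2loc : ∀ t : ℝ, 0 ≤ t →
      IntervalIntegrable (fun τ => ∫ η : EuclideanSpace ℝ (Fin 3), ‖Uhat τ η‖ ^ 2)
        volume 0 t)
    (hDuhamel : ∀ t : ℝ, 0 ≤ t → ∀ᵐ ξ ∂(volume : Measure (EuclideanSpace ℝ (Fin 3))),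
      Uhat t ξ = Real.exp (t * (-(ν * ‖ξ‖ ^ 2) / (1 + α ^ 2 * ‖ξ‖ ^ 2))) • F0 ξ
        - ∫ τ in (0:ℝ)..t,
            Real.exp ((t - τ) * (-(ν * ‖ξ‖ ^ 2) / (1 + α ^ 2 * ‖ξ‖ ^ 2))) • G ξ τ) :
    ∃ C₁ > (0:ℝ), ∃ C₂ > (0:ℝ), ∀ t > (0:ℝ),
      (∫ ξ : EuclideanSpace ℝ (Fin 3), (1 + α ^ 2 * ‖ξ‖ ^ 2) * ‖Uhat t ξ‖ ^ 2)
        ≤ C₁ * (C₂ + t) ^ (-(min (3/2 + rstar) (5/2))) := by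
  set E : ℝ → ℝ := fun t => ∫ ξ : V3, (1 + α ^ 2 * ‖ξ‖ ^ 2) * ‖Uhat t ξ‖ ^ 2 with hEdef
  set L : ℝ → ℝ := fun t => ∫ ξ : V3, ‖Uhat t ξ‖ ^ 2 with hLdef
  have hEnn : ∀ t, 0 ≤ t → 0 ≤ E t := fun t _ => integral_nonneg (fun ξ => by positivity)
  have hDii : ∀ s t, 0 ≤ s → s ≤ t → IntervalIntegrable D volume s t := fun s t hs hst =>
    (hDint s hs).symm.trans (hDint t (hs.trans hst))
  have hEdiff : ∀ s t, 0 ≤ s → s ≤ t → E t = E s + ∫ x in s..t, D x := by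
    intro s t hs hst
    have h1 := hE t (hs.trans hst)
    have h2 := hE s hs
    have h3 := intervalIntegral.integral_add_adjacent_intervals (hDint s hs) (hDii s t hs hst)
    simp only [hEdef]
    rw [h1, h2, ← h3]; ring
  have hDae : ∀ s t, 0 ≤ s → s ≤ t → ∀ᵐ x ∂(volume.restrict (Set.Ioc s t)),
      D x ≤ -(2 * ν) * ∫ ξ : V3, ‖ξ‖ ^ 2 * ‖Uhat x ξ‖ ^ 2 := by
    intro s t hs hst
    exact ae_restrict_of_ae_restrict_of_subset (fun x hx => lt_of_le_of_lt hs hx.1) hEderiv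
  have hDconst : ∀ s t B, 0 ≤ s → s ≤ t →
      (∀ x, s < x → x ≤ t → -(2 * ν) * (∫ ξ : V3, ‖ξ‖ ^ 2 * ‖Uhat x ξ‖ ^ 2) ≤ B) →
      E t ≤ E s + (t - s) * B := by
    intro s t B hs hst hB
    rw [hEdiff s t hs hst]
    have : ∫ x in s..t, D x ≤ ∫ x in s..t, B := by
      rw [intervalIntegral.integral_of_le hst, intervalIntegral.integral_of_le hst]
      refine integral_mono_ae ((intervalIntegrable_iff_integrableOn_Ioc_of_le hst).1 (hDii s t hs hst))
        (integrableOn_const measure_Ioc_lt_top.ne) ?_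
      filter_upwards [hDae s t hs hst, ae_restrict_mem measurableSet_Ioc] with x h1 h2
      exact h1.trans (hB x h2.1 h2.2)
    rw [intervalIntegral.integral_const, smul_eq_mul] at this
    linarith
  have hanti : ∀ s t, 0 ≤ s → s ≤ t → E t ≤ E s := by
    intro s t hs hst
    have := hDconst s t 0 hs hst (fun x _ _ => by
      have : 0 ≤ ∫ ξ : V3, ‖ξ‖ ^ 2 * ‖Uhat x ξ‖ ^ 2 := integral_nonneg (fun ξ => by positivity)
      nlinarith)
    linarith
  have hLE : ∀ t, 0 ≤ t → L t ≤ E t := by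
    intro t ht
    have h1 := aux_integrable (Uhat t) (hUH1 t ht) (fun ξ => 1 + α ^ 2 * ‖ξ‖ ^ 2) (by fun_prop)
      (1 + α ^ 2)
      (fun ξ => by rw [abs_of_nonneg (by positivity)]; nlinarith [sq_nonneg α, sq_nonneg ‖ξ‖])
    have h3 := aux_integrable (Uhat t) (hUH1 t ht) (fun ξ => 1) (by fun_prop) 1
      (fun ξ => by rw [abs_of_nonneg (by positivity)]; nlinarith [sq_nonneg ‖ξ‖])
    simp only [one_mul] at h3
    refine integral_mono h3 h1 (fun ξ => ?_)
    have : 0 ≤ α ^ 2 * ‖ξ‖ ^ 2 * ‖Uhat t ξ‖ ^ 2 := by positivity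
    simp only
    nlinarith
  have hLnn : ∀ t, 0 ≤ L t := fun t => integral_nonneg (fun ξ => by positivity)
  by_cases hr : rstar = -(3:ℝ)/2
  · refine ⟨E 0 + 1, by linarith [hEnn 0 le_rfl], 1, one_pos, fun t ht => ?_⟩
    have : min (3/2 + rstar) (5/2) = 0 := by
      rw [hr]; norm_num
    rw [this]
    simp only [neg_zero, Real.rpow_zero, mul_one]
    linarith [hanti 0 t le_rfl ht.le]
  obtain ⟨c0, hc0⟩ := hchar hr
  obtain ⟨c, hc, hcc⟩ : ∃ c : ℝ, 0 ≤ c ∧ c0 ≤ c := ⟨max 0 c0, le_max_left _ _, le_max_right _ _⟩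
  obtain ⟨δ, hδ, hδ2⟩ := mem_nhdsGT_iff_exists_Ioo_subset.1 hc0
  have hδ' : (0:ℝ) < δ := hδ
  set p : ℝ := 3/2 + rstar with hp
  have hp0 : 0 ≤ p := by rw [hp]; linarith
  have hlow : ∀ ρ, 0 < ρ → ρ < δ →
      ∫ ξ in closedBall (0 : V3) ρ, ‖F0 ξ‖ ^ 2 ≤ c * (ρ ^ 2) ^ p := by
    intro ρ h1 h2
    have h3 : ρ ^ (-(2 * rstar) - 3) *
        (∫ ξ in closedBall (0 : V3) ρ, ‖F0 ξ‖ ^ 2) ≤ c0 := hδ2 ⟨h1, h2⟩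
    have h4 : (ρ ^ 2) ^ p = ρ ^ (2 * p) := by
      rw [← Real.rpow_natCast ρ 2, ← Real.rpow_mul h1.le]; norm_num
    have h5 : ρ ^ (-(2 * rstar) - 3) = (ρ ^ (2 * p))⁻¹ := by
      rw [← Real.rpow_neg h1.le]; congr 1; rw [hp]; ring
    have h6 : 0 < ρ ^ (2 * p) := Real.rpow_pos_of_pos h1 _
    rw [h5, inv_mul_eq_div, div_le_iff₀ h6] at h3
    rw [h4]
    exact h3.trans (by gcongr)
  set a : ℝ := 15 * (1 + α ^ 2) / (2 * ν) with ha
  have hapos : 0 < a := by positivity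
  set v : ℝ := (volume (closedBall (0 : V3) 1)).toReal with hv
  have hvnn : 0 ≤ v := ENNReal.toReal_nonneg
  have step : ∀ q γ C, 0 ≤ q → q ≤ p → q ≤ 5/2 - 2 * γ → 0 ≤ γ → γ ≤ 1 → 0 ≤ C →
      (∀ t, 0 ≤ t → ∫ τ in (0:ℝ)..t, L τ ≤ C * (1 + t) ^ γ) →
      ∃ C' > (0:ℝ), ∀ t, 0 ≤ t → E t ≤ C' * (1 + t) ^ (-q) := by
    intro q γ C hq hqp hqγ hγ hγ1 hC hI
    obtain ⟨t0, ht01, ht0a, ht0δ⟩ : ∃ t0 : ℝ, 1 ≤ t0 ∧ a ≤ t0 ∧ a / δ ^ 2 + 1 ≤ t0 :=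
      ⟨max 1 (max a (a / δ ^ 2 + 1)), le_max_left _ _, (le_max_left _ _).trans (le_max_right _ _),
        (le_max_right _ _).trans (le_max_right _ _)⟩
    set H : ℝ := (1 + α ^ 2) * (2 * (c * a ^ p) + 2 * v * a ^ (5/2 : ℝ) * (K * (3 * C)) ^ 2) with hH
    refine aux_doubling E q H t0 hq (by linarith) (by positivity) ht01 hanti hEnn ?_
    intro t ht
    have ht1 : 1 ≤ t := ht01.trans ht
    have htp : 0 < t := by linarith
    set ρ : ℝ := Real.sqrt (a / t) with hρ
    have hρp : 0 < ρ := Real.sqrt_pos.2 (by positivity)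
    have hρ2 : ρ ^ 2 = a / t := Real.sq_sqrt (by positivity)
    have hρ1 : ρ ≤ 1 := by
      rw [hρ, Real.sqrt_le_iff, one_pow, div_le_one htp]; exact ⟨by norm_num, by linarith⟩
    have hρδ : ρ < δ := by
      rw [hρ, Real.sqrt_lt' hδ', div_lt_iff₀ htp]
      have : a / δ ^ 2 < t := by linarith
      rw [div_lt_iff₀ (by positivity)] at this
      linarith
    have hρ5 : ρ ^ 5 = a ^ (5/2 : ℝ) * t ^ (-(5/2) : ℝ) := by
      rw [hρ, Real.sqrt_eq_rpow, ← Real.rpow_natCast, ← Real.rpow_mul (by positivity),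
        Real.div_rpow hapos.le htp.le, Real.rpow_neg htp.le, div_eq_mul_inv]
      norm_num
    have hρp' : (ρ ^ 2) ^ p = a ^ p * t ^ (-p) := by
      rw [hρ2, Real.div_rpow hapos.le htp.le, Real.rpow_neg htp.le, div_eq_mul_inv]
    have htq : 0 < t ^ (-q) := Real.rpow_pos_of_pos htp _
    have hball : ∀ x, t < x → x ≤ 2 * t →
        (1 + α ^ 2) * ∫ ξ in closedBall (0 : V3) ρ, ‖Uhat x ξ‖ ^ 2 ≤ H * t ^ (-q) := by
      intro x hx1 hx2
      have hx0 : 0 ≤ x := by linarith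
      have hIx : ∫ τ in (0:ℝ)..x, L τ ≤ 3 * C * t ^ γ := by
        refine (hI x hx0).trans ?_
        have h1 : (1 + x) ^ γ ≤ (3 * t) ^ γ := Real.rpow_le_rpow (by linarith) (by linarith) hγ
        rw [Real.mul_rpow (by norm_num) htp.le] at h1
        have h2 : (3:ℝ) ^ γ ≤ 3 := by
          calc (3:ℝ) ^ γ ≤ 3 ^ (1:ℝ) := Real.rpow_le_rpow_of_exponent_le (by norm_num) hγ1
            _ = 3 := by norm_num
        calc C * (1 + x) ^ γ ≤ C * (3 * t ^ γ) := by
              gcongr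
              exact h1.trans (by gcongr)
          _ = _ := by ring
      have hdu : ∀ᵐ ξ : V3, ‖Uhat x ξ‖ ≤ ‖F0 ξ‖ + ‖ξ‖ * (K * (3 * C * t ^ γ)) := by
        filter_upwards [hDuhamel x hx0] with ξ hξ
        exact aux_duhamel α ν K x _ hν hx0 ξ L hIx hK (hL2loc x hx0) (G ξ) (hGbound ξ) _ _ hξ
      have h1 := aux_low ρ (K * (3 * C * t ^ γ)) hρp (by positivity) (Uhat x) F0 (hUH1 x hx0) hH10 hdu
      have h2 := hlow ρ hρp hρδ
      rw [hρp'] at h2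
      rw [hρ5] at h1
      have h3 : t ^ (-p) ≤ t ^ (-q) := Real.rpow_le_rpow_of_exponent_le ht1 (by linarith)
      have h4 : t ^ (-(5/2) : ℝ) * (t ^ γ) ^ 2 ≤ t ^ (-q) := by
        rw [← Real.rpow_natCast (t ^ γ), ← Real.rpow_mul htp.le, ← Real.rpow_add htp]
        exact Real.rpow_le_rpow_of_exponent_le ht1 (by push_cast; linarith)
      have h5 : c * (a ^ p * t ^ (-p)) ≤ c * (a ^ p * t ^ (-q)) := by gcongr
      have h6 : 2 * v * (a ^ (5/2 : ℝ) * t ^ (-(5/2) : ℝ)) * (K * (3 * C * t ^ γ)) ^ 2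
          ≤ 2 * v * a ^ (5/2 : ℝ) * (K * (3 * C)) ^ 2 * t ^ (-q) := by
        calc _ = 2 * v * a ^ (5/2 : ℝ) * (K * (3 * C)) ^ 2 * (t ^ (-(5/2) : ℝ) * (t ^ γ) ^ 2) := by ring
          _ ≤ _ := by gcongr
      rw [hH, mul_assoc]
      gcongr
      linarith
    have hfin := hDconst t (2 * t) (-(15 / t) * (E (2 * t) - H * t ^ (-q))) htp.le (by linarith) (by
      intro x hx1 hx2
      have hx0 : 0 ≤ x := by linarith
      have h1 := aux_split α ρ hρp hρ1 (Uhat x) (hUH1 x hx0)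
      have h2 := hball x hx1 hx2
      have h3 : E (2 * t) ≤ E x := hanti x (2 * t) hx0 hx2
      have h4 : ρ ^ 2 / (1 + α ^ 2) * (E (2 * t) - H * t ^ (-q)) ≤
          ∫ ξ : V3, ‖ξ‖ ^ 2 * ‖Uhat x ξ‖ ^ 2 := by
        refine le_trans ?_ h1
        gcongr
      have h5 : 2 * ν * (ρ ^ 2 / (1 + α ^ 2)) = 15 / t := by
        rw [hρ2, ha]; field_simp
      rw [← h5]
      have h6 := mul_le_mul_of_nonneg_left h4 (by linarith : 0 ≤ 2 * ν)
      rw [← mul_assoc] at h6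
      rw [neg_mul, neg_mul]
      exact neg_le_neg h6)
    have h7 : (2 * t - t) * (-(15 / t) * (E (2 * t) - H * t ^ (-q)))
        = -15 * (E (2 * t) - H * t ^ (-q)) := by
      field_simp; ring
    rw [h7] at hfin
    have : 0 ≤ H * t ^ (-q) := by positivity
    linarith
  have hint : ∀ q C, q ≠ 1 → (∀ t, 0 ≤ t → E t ≤ C * (1 + t) ^ (-q)) → ∀ t, 0 ≤ t →
      ∫ τ in (0:ℝ)..t, L τ ≤ C * (((1 + t) ^ (1 - q) - 1) / (1 - q)) := by
    intro q C hq h t ht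
    obtain ⟨h1, h2⟩ := aux_int_sqrt t ht q hq
    rw [← h2, ← intervalIntegral.integral_const_mul]
    refine intervalIntegral.integral_mono_on ht (hL2loc t ht) (h1.const_mul C) ?_
    intro x hx
    exact (hLE x hx.1).trans (h x hx.1)
  suffices hs : ∃ C' > (0:ℝ), ∀ t, 0 ≤ t → E t ≤ C' * (1 + t) ^ (-(min p (5/2))) by
    obtain ⟨C', hC', h⟩ := hs
    exact ⟨C', hC', 1, one_pos, fun t ht => h t ht.le⟩
  -- first step
  have s1 := step (min p (1/2)) 1 (E 0) (le_min hp0 (by norm_num)) (min_le_left _ _)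
    ((min_le_right _ _).trans (by norm_num)) (by norm_num) le_rfl (hEnn 0 le_rfl) (by
      intro t ht
      have := hint 0 (E 0) (by norm_num) (fun t ht => by simpa using hanti 0 t le_rfl ht) t ht
      refine this.trans ?_
      have h0 := hEnn 0 le_rfl
      simp only [sub_zero, Real.rpow_one, div_one]
      gcongr
      linarith)
  by_cases hp1 : p ≤ 1/2
  · rw [min_eq_left hp1] at s1
    rwa [min_eq_left (by linarith)]
  push Not at hp1
  rw [min_eq_right hp1.le] at s1
  obtain ⟨C1, hC1, s1⟩ := s1
  have s2 := step (min p (3/2)) (1/2) (2 * C1) (le_min hp0 (by norm_num)) (min_le_left _ _)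
    ((min_le_right _ _).trans (by norm_num)) (by norm_num) (by norm_num) (by positivity) (by
      intro t ht
      refine (hint (1/2) C1 (by norm_num) s1 t ht).trans ?_
      rw [show (1:ℝ) - 1/2 = 1/2 by norm_num, show ∀ x : ℝ, C1 * (x / (1/2)) = 2 * C1 * x by
        intro x; ring]
      gcongr
      linarith)
  by_cases hp2 : p ≤ 3/2
  · rw [min_eq_left hp2] at s2
    rwa [min_eq_left (by linarith)]
  push Not at hp2
  rw [min_eq_right hp2.le] at s2
  obtain ⟨C2, hC2, s2⟩ := s2
  exact step (min p (5/2)) 0 (2 * C2) (le_min hp0 (by norm_num)) (min_le_left _ _)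
    ((min_le_right _ _).trans (by norm_num)) (by norm_num) (by norm_num) (by positivity) (by
      intro t ht
      refine (hint (3/2) C2 (by norm_num) s2 t ht).trans ?_
      rw [show (1:ℝ) - 3/2 = -(1/2) by norm_num, Real.rpow_zero]
      have : 0 < (1 + t) ^ (-(1/2) : ℝ) := Real.rpow_pos_of_pos (by linarith) _
      rw [show ∀ x : ℝ, C2 * ((x - 1) / (-(1/2))) = 2 * C2 * (1 - x) by
        intro x; ring]
      gcongr
      linarith)
end

section
/- Let n ≥ 1, α, ν > 0, and v₀ ∈ H¹(ℝⁿ). Let v(t) be the solution of the linear Navier–Stokes–Voigt equation with datum v₀, defined on the Fourier side by v̂(ξ,t) = e^{tM(ξ)} v̂₀(ξ) with M(ξ) = −ν|ξ|²/(1+α²|ξ|²). Then v(t) ∈ H¹(ℝⁿ) for all t ≥ 0 and the energy equality holds: for every t ≥ 0, ‖v(t)‖²_{L²} + α²‖∇v(t)‖²_{L²} + 2ν ∫₀ᵗ ‖∇v(s)‖²_{L²} ds = ‖v₀‖²_{L²} + α²‖∇v₀‖²_{L²}. -/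
open MeasureTheory Filter Topology Metric

/-- **Energy equality for the linear Navier–Stokes–Voigt equation.**
For `v₀ ∈ H¹(ℝⁿ)` and `v̂(ξ,t) = e^{tM(ξ)} v̂₀(ξ)` with `M(ξ) = -ν|ξ|²/(1+α²|ξ|²)`,
the solution stays in `H¹` and
`‖v(t)‖²_{L²} + α²‖∇v(t)‖²_{L²} + 2ν ∫₀ᵗ ‖∇v(s)‖²_{L²} ds = ‖v₀‖²_{L²} + α²‖∇v₀‖²_{L²}`.
By Plancherel, all norms are expressed as weighted integrals of `e^{2sM(ξ)}|v̂₀(ξ)|²`. -/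
theorem linear_NSV_energy_equality
    (n : ℕ) (hn : 1 ≤ n) (α ν : ℝ) (hα : 0 < α) (hν : 0 < ν)
    (F0 : EuclideanSpace ℝ (Fin n) → ℂ)
    (hH1 : Integrable (fun ξ : EuclideanSpace ℝ (Fin n) => (1 + ‖ξ‖ ^ 2) * ‖F0 ξ‖ ^ 2)) :
    ∀ t : ℝ, 0 ≤ t →
      Integrable (fun ξ : EuclideanSpace ℝ (Fin n) =>
        (1 + ‖ξ‖ ^ 2) *
          (Real.exp (2 * t * (-(ν * ‖ξ‖ ^ 2) / (1 + α ^ 2 * ‖ξ‖ ^ 2))) * ‖F0 ξ‖ ^ 2))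
      ∧ (∫ ξ : EuclideanSpace ℝ (Fin n),
            (1 + α ^ 2 * ‖ξ‖ ^ 2) *
              (Real.exp (2 * t * (-(ν * ‖ξ‖ ^ 2) / (1 + α ^ 2 * ‖ξ‖ ^ 2))) * ‖F0 ξ‖ ^ 2))
          + 2 * ν * ∫ s in (0:ℝ)..t,
              ∫ ξ : EuclideanSpace ℝ (Fin n),
                ‖ξ‖ ^ 2 *
                  (Real.exp (2 * s * (-(ν * ‖ξ‖ ^ 2) / (1 + α ^ 2 * ‖ξ‖ ^ 2))) * ‖F0 ξ‖ ^ 2)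
        = ∫ ξ : EuclideanSpace ℝ (Fin n), (1 + α ^ 2 * ‖ξ‖ ^ 2) * ‖F0 ξ‖ ^ 2 := by
  intro t ht
  have hG : AEStronglyMeasurable (fun ξ : EuclideanSpace ℝ (Fin n) => ‖F0 ξ‖ ^ 2) := by
    have h1 : AEStronglyMeasurable (fun ξ : EuclideanSpace ℝ (Fin n) => (1 + ‖ξ‖ ^ 2)⁻¹) :=
      (by fun_prop : Measurable _).aestronglyMeasurable
    refine (h1.mul hH1.aestronglyMeasurable).congr (Eventually.of_forall fun ξ => ?_)
    have : (1 + ‖ξ‖ ^ 2) ≠ 0 := by positivity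
    simp only [Pi.mul_apply]
    field_simp
  have hexp : ∀ s : ℝ, 0 ≤ s → ∀ ξ : EuclideanSpace ℝ (Fin n),
      Real.exp (2 * s * (-(ν * ‖ξ‖ ^ 2) / (1 + α ^ 2 * ‖ξ‖ ^ 2))) ≤ 1 := by
    intro s hs ξ
    rw [Real.exp_le_one_iff]
    refine mul_nonpos_of_nonneg_of_nonpos (by positivity) ?_
    exact div_nonpos_of_nonpos_of_nonneg (neg_nonpos.2 (by positivity)) (by positivity)
  have hint : ∀ s : ℝ, 0 ≤ s → Integrable (fun ξ : EuclideanSpace ℝ (Fin n) =>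
        (1 + ‖ξ‖ ^ 2) *
          (Real.exp (2 * s * (-(ν * ‖ξ‖ ^ 2) / (1 + α ^ 2 * ‖ξ‖ ^ 2))) * ‖F0 ξ‖ ^ 2)) := by
    intro s hs
    refine hH1.mono ?_ (Eventually.of_forall fun ξ => ?_)
    · exact (by fun_prop : Measurable fun ξ : EuclideanSpace ℝ (Fin n) =>
        (1 + ‖ξ‖ ^ 2)).aestronglyMeasurable.mul
        ((by fun_prop : Measurable fun ξ : EuclideanSpace ℝ (Fin n) =>
          Real.exp (2 * s * (-(ν * ‖ξ‖ ^ 2) / (1 + α ^ 2 * ‖ξ‖ ^ 2)))).aestronglyMeasurable.mul hG)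
    · rw [Real.norm_of_nonneg (by positivity), Real.norm_of_nonneg (by positivity)]
      gcongr
      exact mul_le_of_le_one_left (by positivity) (hexp s hs ξ)
  have hA : ∀ s : ℝ, 0 ≤ s → Integrable (fun ξ : EuclideanSpace ℝ (Fin n) =>
        (1 + α ^ 2 * ‖ξ‖ ^ 2) *
          (Real.exp (2 * s * (-(ν * ‖ξ‖ ^ 2) / (1 + α ^ 2 * ‖ξ‖ ^ 2))) * ‖F0 ξ‖ ^ 2)) := by
    intro s hs
    refine ((hint s hs).const_mul (1 + α ^ 2)).mono ?_ (Eventually.of_forall fun ξ => ?_)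
    · exact (by fun_prop : Measurable fun ξ : EuclideanSpace ℝ (Fin n) =>
        (1 + α ^ 2 * ‖ξ‖ ^ 2)).aestronglyMeasurable.mul
        ((by fun_prop : Measurable fun ξ : EuclideanSpace ℝ (Fin n) =>
          Real.exp (2 * s * (-(ν * ‖ξ‖ ^ 2) / (1 + α ^ 2 * ‖ξ‖ ^ 2)))).aestronglyMeasurable.mul hG)
    · rw [Real.norm_of_nonneg (by positivity), Real.norm_of_nonneg (by positivity), ← mul_assoc (1 + α ^ 2)]
      refine mul_le_mul_of_nonneg_right ?_ (by positivity)
      nlinarith [sq_nonneg α, sq_nonneg ‖ξ‖]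
  refine ⟨hint t ht, ?_⟩
  have hprod : Integrable (Function.uncurry fun (s : ℝ) (ξ : EuclideanSpace ℝ (Fin n)) =>
      ‖ξ‖ ^ 2 * (Real.exp (2 * s * (-(ν * ‖ξ‖ ^ 2) / (1 + α ^ 2 * ‖ξ‖ ^ 2))) * ‖F0 ξ‖ ^ 2))
      ((volume.restrict (Set.Ioc 0 t)).prod volume) := by
    have h0 := hH1.comp_snd (volume.restrict (Set.Ioc (0:ℝ) t))
    refine h0.mono ?_ ?_
    · exact (by fun_prop : Measurable fun p : ℝ × EuclideanSpace ℝ (Fin n) =>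
        ‖p.2‖ ^ 2).aestronglyMeasurable.mul
        ((by fun_prop : Measurable fun p : ℝ × EuclideanSpace ℝ (Fin n) =>
          Real.exp (2 * p.1 * (-(ν * ‖p.2‖ ^ 2) / (1 + α ^ 2 * ‖p.2‖ ^ 2)))).aestronglyMeasurable.mul
            hG.comp_snd)
    · have h1 : ∀ᵐ s ∂(volume.restrict (Set.Ioc (0:ℝ) t)), 0 ≤ s :=
        (ae_restrict_mem measurableSet_Ioc).mono fun s hs => hs.1.le
      have h2 : ∀ᵐ p ∂((volume.restrict (Set.Ioc (0:ℝ) t)).prod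
          (volume : Measure (EuclideanSpace ℝ (Fin n)))), 0 ≤ p.1 :=
        Measure.quasiMeasurePreserving_fst.ae h1
      filter_upwards [h2] with p hp
      simp only [Function.uncurry]
      rw [Real.norm_of_nonneg (by positivity), Real.norm_of_nonneg (by positivity)]
      gcongr
      · linarith
      · exact mul_le_of_le_one_left (by positivity) (hexp p.1 hp p.2)
  have hpt : ∀ ξ : EuclideanSpace ℝ (Fin n),
      2 * ν * (∫ s in Set.Ioc 0 t, ‖ξ‖ ^ 2 *
        (Real.exp (2 * s * (-(ν * ‖ξ‖ ^ 2) / (1 + α ^ 2 * ‖ξ‖ ^ 2))) * ‖F0 ξ‖ ^ 2)) =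
      (1 + α ^ 2 * ‖ξ‖ ^ 2) * ‖F0 ξ‖ ^ 2 - (1 + α ^ 2 * ‖ξ‖ ^ 2) *
        (Real.exp (2 * t * (-(ν * ‖ξ‖ ^ 2) / (1 + α ^ 2 * ‖ξ‖ ^ 2))) * ‖F0 ξ‖ ^ 2) := by
    intro ξ
    rw [← intervalIntegral.integral_of_le ht, ← intervalIntegral.integral_const_mul]
    have hne : (1 + α ^ 2 * ‖ξ‖ ^ 2) ≠ 0 := by positivity
    rw [intervalIntegral.integral_eq_sub_of_hasDerivAt (f := fun s => -((1 + α ^ 2 * ‖ξ‖ ^ 2) *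
        (Real.exp (2 * s * (-(ν * ‖ξ‖ ^ 2) / (1 + α ^ 2 * ‖ξ‖ ^ 2))) * ‖F0 ξ‖ ^ 2)))]
    · simp
      ring
    · intro s _
      have h := (((((hasDerivAt_id s).const_mul 2).mul_const
        (-(ν * ‖ξ‖ ^ 2) / (1 + α ^ 2 * ‖ξ‖ ^ 2))).exp.mul_const (‖F0 ξ‖ ^ 2)).const_mul
          (1 + α ^ 2 * ‖ξ‖ ^ 2)).neg
      refine HasDerivAt.congr_deriv h ?_
      simp only [id]
      generalize Real.exp _ = E
      field_simp
    · exact (by fun_prop : Continuous _).intervalIntegrable _ _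
  have h0 := hA 0 le_rfl
  simp only [mul_zero, zero_mul, Real.exp_zero, one_mul] at h0
  rw [intervalIntegral.integral_of_le ht, integral_integral_swap hprod, ← integral_const_mul]
  simp_rw [hpt]
  rw [integral_sub h0 (hA t ht)]
  ring
end

section
/- Let α, ν > 0 with ν > α², let u₀ ∈ H¹(ℝ³;ℝ³) be divergence-free, let r* ∈ [−3/2, ∞) with limsup_{ρ→0⁺} ρ^{−2r*−3} ∫_{|ξ|≤ρ} |û₀(ξ)|² dξ < ∞ (no condition when r* = −3/2), and let u : [0,∞) → H¹(ℝ³;ℝ³), u(0) = u₀, satisfy: (i) t ↦ ‖u(t)‖²_{L²} + α²‖∇u(t)‖²_{L²} is locally absolutely continuous with derivative ≤ −2ν‖∇u(t)‖²_{L²} a.e.; (ii) û(ξ,t) = e^{tM(ξ)} û₀(ξ) − ∫₀ᵗ e^{(t−τ)M(ξ)} G(ξ,τ) dτ with M(ξ) = −ν|ξ|²/(1+α²|ξ|²) and |G(ξ,τ)| ≤ K|ξ|‖u(τ)‖²_{L²} for some K > 0. Then (first bootstrap step) there exist constants C₁, C₂ > 0 such that for all t > 0, ‖u(t)‖²_{L²}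 + α²‖∇u(t)‖²_{L²} ≤ C₁ (C₂ + t)^{−min{3/2 + r*, 1/2}}. -/
open MeasureTheory Filter Topology Metric

lemma ode_aux {E D : ℝ → ℝ} {C t A μ : ℝ} (hC : 1 ≤ C) (ht : 0 ≤ t) (hA : 0 ≤ A)
    (hμ : μ ≤ 1/2)
    (hD : IntervalIntegrable D volume 0 t)
    (hE : ∀ s, 0 ≤ s → E s = E 0 + ∫ x in (0:ℝ)..s, D x)
    (h : ∀ᵐ s ∂(volume.restrict (Set.Ioi (0:ℝ))), E s + (s + C) * D s ≤ A * (s + C) ^ (-μ)) :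
    E t * (t + C) ≤ C * E 0 + 2 * A * (t + C) ^ (1 - μ) := by
  set g : ℝ → ℝ := fun x => E 0 + ∫ y in (0:ℝ)..x, D y with hg
  have hgac : AbsolutelyContinuousOnInterval g 0 t := by
    have h1 := hD.absolutelyContinuousOnInterval_intervalIntegral (c := 0) (by simp)
    have h0 : AbsolutelyContinuousOnInterval (fun _ : ℝ => E 0) 0 t :=
      (LipschitzWith.const (E 0)).lipschitzOnWith.absolutelyContinuousOnInterval
    exact h0.add h1
  have hfac : AbsolutelyContinuousOnInterval (fun x : ℝ => x + C) 0 t := by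
    have : LipschitzWith 1 (fun x : ℝ => x + C) := by
      apply LipschitzWith.of_dist_le_mul; intro x y; simp
    exact this.lipschitzOnWith.absolutelyContinuousOnInterval
  have key := hfac.integral_deriv_mul_eq_sub hgac
  have hder : ∀ x : ℝ, deriv (fun x : ℝ => x + C) x = 1 := by intro x; simp
  simp only [hder, one_mul] at key
  have hgd : ∀ᵐ x, x ∈ Set.uIcc 0 t → deriv g x = D x := by
    filter_upwards [hD.ae_hasDerivAt_integral] with x hx hxt
    exact ((hx hxt 0 (by simp)).const_add (E 0)).deriv
  have hcont : ContinuousOn (fun x : ℝ => A * (x + C) ^ (-μ)) (Set.uIcc 0 t) := by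
    rw [Set.uIcc_of_le ht]
    refine continuousOn_const.mul (ContinuousOn.rpow_const (by fun_prop) ?_)
    intro x hx; left; linarith [hx.1]
  have hle : ∫ x in (0:ℝ)..t, (g x + (x + C) * deriv g x) ≤ ∫ x in (0:ℝ)..t, A * (x + C) ^ (-μ) := by
    rw [intervalIntegral.integral_of_le ht, intervalIntegral.integral_of_le ht]
    have i1 : IntervalIntegrable (fun x => g x + (x + C) * deriv g x) volume 0 t :=
      (hgac.continuousOn.intervalIntegrable).add
        (hgac.intervalIntegrable_deriv.continuousOn_mul hfac.continuousOn)
    apply setIntegral_mono_ae_restrict i1.1 hcont.intervalIntegrable.1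
    have h' := ae_restrict_of_ae_restrict_of_subset (s := Set.Ioc 0 t) (fun x hx => hx.1) h
    filter_upwards [h', ae_restrict_of_ae hgd, ae_restrict_mem measurableSet_Ioc] with x h1 h2 h3
    rw [h2 (by rw [Set.uIcc_of_le ht]; exact ⟨h3.1.le, h3.2⟩)]
    have : g x = E x := (hE x h3.1.le).symm
    rw [this]; exact h1
  have hint : ∫ x in (0:ℝ)..t, A * (x + C) ^ (-μ) ≤ 2 * A * (t + C) ^ (1 - μ) := by
    rw [intervalIntegral.integral_const_mul, intervalIntegral.integral_comp_add_right (fun x => x ^ (-μ)),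
      integral_rpow (Or.inl (by linarith))]
    have e : -μ + 1 = 1 - μ := by ring
    rw [e, zero_add]
    have p1 : 0 ≤ C ^ (1 - μ) := by positivity
    have p2 : 0 ≤ (t + C) ^ (1 - μ) := by positivity
    have : ((t + C) ^ (1 - μ) - C ^ (1 - μ)) / (1 - μ) ≤ 2 * (t + C) ^ (1 - μ) := by
      rw [div_le_iff₀ (by linarith)]
      nlinarith
    calc _ ≤ A * (2 * (t + C) ^ (1 - μ)) := by gcongr
      _ = _ := by ring
  have g0 : g 0 = E 0 := by simp [hg]
  have gt : g t = E t := (hE t ht).symm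
  rw [key, g0, gt] at hle
  nlinarith

lemma wint {V : Type*} [NormedAddCommGroup V] [MeasureSpace V] [OpensMeasurableSpace V] [SecondCountableTopology V]
    {h : V → ℝ}
    (hi : Integrable (fun ξ : V => (1 + ‖ξ‖ ^ 2) * h ξ)) (w : V → ℝ) (hw : Continuous w) (c : ℝ)
    (hwc : ∀ ξ, |w ξ| ≤ c * (1 + ‖ξ‖ ^ 2)) : Integrable (fun ξ => w ξ * h ξ) := by
  have hc : Continuous (fun ξ : V => w ξ / (1 + ‖ξ‖ ^ 2)) :=
    hw.div (by fun_prop) (fun ξ => by positivity)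
  have := hi.bdd_mul (c := c) hc.aestronglyMeasurable (Eventually.of_forall fun ξ => by
    have hp : 0 < 1 + ‖ξ‖ ^ 2 := by positivity
    rw [Real.norm_eq_abs, abs_div, abs_of_pos hp, div_le_iff₀ hp]; exact hwc ξ)
  refine this.congr (Eventually.of_forall fun ξ => ?_)
  have hp : 1 + ‖ξ‖ ^ 2 ≠ 0 := by positivity
  simp only
  field_simp

lemma split {α ν y ρ : ℝ} (hy : 0 < y) (hν : 0 < ν) (hαy : α ^ 2 ≤ ν * y)
    (hρ : 0 < ρ) (hρ2 : ρ ^ 2 * (ν * y) = 1)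
    {h : EuclideanSpace ℝ (Fin 3) → ℝ} (hh : ∀ ξ, 0 ≤ h ξ)
    (hi : Integrable (fun ξ : EuclideanSpace ℝ (Fin 3) => (1 + ‖ξ‖ ^ 2) * h ξ)) :
    ∫ ξ, (1 + α ^ 2 * ‖ξ‖ ^ 2) * h ξ ≤ 2 * ν * y * (∫ ξ, ‖ξ‖ ^ 2 * h ξ) +
      2 * ∫ ξ in closedBall 0 ρ, h ξ := by
  have i0 : Integrable h := by
    simpa using wint hi (fun _ => 1) continuous_const 1 (fun ξ => by simp; )
  have i2 : Integrable (fun ξ : EuclideanSpace ℝ (Fin 3) => ‖ξ‖ ^ 2 * h ξ) :=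
    wint hi (fun ξ => ‖ξ‖ ^ 2) (by fun_prop) 1 (fun ξ => by rw [abs_of_nonneg (by positivity)]; linarith)
  have i1 : Integrable (fun ξ : EuclideanSpace ℝ (Fin 3) => (1 + α ^ 2 * ‖ξ‖ ^ 2) * h ξ) := by
    refine (i0.add (i2.const_mul (α ^ 2))).congr (Eventually.of_forall fun ξ => ?_)
    simp only [Pi.add_apply]; ring
  rw [← integral_indicator measurableSet_closedBall, ← integral_const_mul, ← integral_const_mul,
    ← integral_add (i2.const_mul _) ((i0.indicator measurableSet_closedBall).const_mul _)]
  refine integral_mono i1 ((i2.const_mul _).add ((i0.indicator measurableSet_closedBall).const_mul _)) ?_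
  intro ξ
  simp only [Set.indicator, mem_closedBall, dist_zero_right]
  have hhξ := hh ξ
  have hny : 0 < ν * y := by positivity
  split_ifs with hξ
  · have : ‖ξ‖ ^ 2 ≤ ρ ^ 2 := by gcongr
    have h1 : α ^ 2 * ‖ξ‖ ^ 2 ≤ 1 := by
      rw [← hρ2]
      calc α ^ 2 * ‖ξ‖ ^ 2 ≤ (ν * y) * ρ ^ 2 := by gcongr
        _ = _ := by ring
    have h2 : 0 ≤ 2 * ν * y * (‖ξ‖ ^ 2 * h ξ) := by positivity
    nlinarith
  · have : ρ ^ 2 ≤ ‖ξ‖ ^ 2 := by gcongr; linarith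
    have h1 : 1 ≤ ‖ξ‖ ^ 2 * (ν * y) := by rw [← hρ2]; gcongr
    have h2 : α ^ 2 * ‖ξ‖ ^ 2 ≤ ν * y * ‖ξ‖ ^ 2 := by gcongr
    have h3 : (1 + α ^ 2 * ‖ξ‖ ^ 2) ≤ 2 * ν * y * ‖ξ‖ ^ 2 := by linarith
    nlinarith [mul_le_mul_of_nonneg_right h3 hhξ]

lemma lowfreq {ρ B : ℝ} (hρ : 0 < ρ) (hB : 0 ≤ B)
    {U F W : EuclideanSpace ℝ (Fin 3) → EuclideanSpace ℂ (Fin 3)}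
    (iU : Integrable (fun ξ => ‖U ξ‖ ^ 2)) (iF : Integrable (fun ξ => ‖F ξ‖ ^ 2))
    {e : EuclideanSpace ℝ (Fin 3) → ℝ} (he0 : ∀ ξ, 0 ≤ e ξ) (he1 : ∀ ξ, e ξ ≤ 1)
    (hU : ∀ᵐ ξ, U ξ = e ξ • F ξ - W ξ) (hW : ∀ ξ, ‖W ξ‖ ≤ B * ‖ξ‖) :
    ∫ ξ in closedBall 0 ρ, ‖U ξ‖ ^ 2 ≤ 2 * (∫ ξ in closedBall 0 ρ, ‖F ξ‖ ^ 2) +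
      2 * B ^ 2 * ρ ^ 5 * volume.real (ball (0 : EuclideanSpace ℝ (Fin 3)) 1) := by
  have hvol : volume.real (closedBall (0 : EuclideanSpace ℝ (Fin 3)) ρ) =
      ρ ^ 3 * volume.real (ball (0 : EuclideanSpace ℝ (Fin 3)) 1) := by
    rw [Measure.addHaar_real_closedBall _ _ hρ.le]; simp
  have ic : IntegrableOn (fun _ : EuclideanSpace ℝ (Fin 3) => 2 * (B * ρ) ^ 2) (closedBall 0 ρ) :=
    integrableOn_const (by exact measure_closedBall_lt_top.ne)
  calc ∫ ξ in closedBall 0 ρ, ‖U ξ‖ ^ 2 ≤ ∫ ξ in closedBall 0 ρ, (2 * ‖F ξ‖ ^ 2 + 2 * (B * ρ) ^ 2) := by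
        refine setIntegral_mono_ae_restrict iU.integrableOn
          ((iF.integrableOn.const_mul 2).add ic) ?_
        filter_upwards [ae_restrict_of_ae hU, ae_restrict_mem measurableSet_closedBall] with ξ h1 h2
        simp only [mem_closedBall, dist_zero_right] at h2
        have h3 : ‖W ξ‖ ≤ B * ρ := (hW ξ).trans (by gcongr)
        have h4 : ‖U ξ‖ ≤ ‖F ξ‖ + B * ρ := by
          rw [h1]
          refine (norm_sub_le _ _).trans (add_le_add ?_ h3)
          rw [norm_smul, Real.norm_of_nonneg (he0 ξ)]
          exact mul_le_of_le_one_left (norm_nonneg _) (he1 ξ)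
        calc ‖U ξ‖ ^ 2 ≤ (‖F ξ‖ + B * ρ) ^ 2 := by gcongr
          _ ≤ _ := by nlinarith [sq_nonneg (‖F ξ‖ - B * ρ)]
    _ = _ := by
      rw [integral_add (iF.integrableOn.const_mul 2) ic, integral_const_mul, setIntegral_const, hvol,
        smul_eq_mul]
      ring

lemma charF {rstar : ℝ} {F0 : EuclideanSpace ℝ (Fin 3) → EuclideanSpace ℂ (Fin 3)}
    (iF : Integrable (fun ξ => ‖F0 ξ‖ ^ 2))
    (hchar : rstar ≠ -(3:ℝ)/2 → ∃ c : ℝ, ∀ᶠ ρ in 𝓝[>] (0:ℝ),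
      ρ ^ (-(2 * rstar) - 3) *
        (∫ ξ in closedBall (0 : EuclideanSpace ℝ (Fin 3)) ρ, ‖F0 ξ‖ ^ 2) ≤ c) :
    ∃ c ≥ (0:ℝ), ∃ ρ₀ > (0:ℝ), ∀ ρ, 0 < ρ → ρ < ρ₀ →
      ∫ ξ in closedBall (0 : EuclideanSpace ℝ (Fin 3)) ρ, ‖F0 ξ‖ ^ 2 ≤ c * ρ ^ (2 * rstar + 3) := by
  by_cases hr : rstar = -(3:ℝ)/2
  · refine ⟨∫ ξ, ‖F0 ξ‖ ^ 2, integral_nonneg fun ξ => by positivity, 1, one_pos, fun ρ _ _ => ?_⟩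
    have : 2 * rstar + 3 = 0 := by rw [hr]; ring
    rw [this, Real.rpow_zero, mul_one]
    exact setIntegral_le_integral iF (Eventually.of_forall fun ξ => by positivity)
  · obtain ⟨c, hc⟩ := hchar hr
    rw [eventually_nhdsWithin_iff, Metric.eventually_nhds_iff] at hc
    obtain ⟨ρ₀, h0, hc⟩ := hc
    refine ⟨|c|, abs_nonneg c, ρ₀, h0, fun ρ hρ hρ0 => ?_⟩
    have h1 := (hc (y := ρ) (by simpa [abs_of_pos hρ] using hρ0) hρ).trans (le_abs_self c)
    have h2 : (0:ℝ) < ρ ^ (2 * rstar + 3) := by positivity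
    have h3 : ρ ^ (-(2 * rstar) - 3) * ρ ^ (2 * rstar + 3) = 1 := by
      rw [← Real.rpow_add hρ]; ring_nf; simp
    calc _ = (ρ ^ (-(2 * rstar) - 3) * ρ ^ (2 * rstar + 3)) *
          ∫ ξ in closedBall (0 : EuclideanSpace ℝ (Fin 3)) ρ, ‖F0 ξ‖ ^ 2 := by rw [h3, one_mul]
      _ = (ρ ^ (-(2 * rstar) - 3) *
          ∫ ξ in closedBall (0 : EuclideanSpace ℝ (Fin 3)) ρ, ‖F0 ξ‖ ^ 2) * ρ ^ (2 * rstar + 3) := by ring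
      _ ≤ _ := by gcongr


/-- **Decay of weak solutions to the Navier–Stokes–Voigt equations** (first bootstrap step).
Here `û₀ = F0`, `û(t) = Uhat t`, `M(ξ) = -ν|ξ|²/(1+α²|ξ|²)`, and by Plancherel
`‖u(t)‖²_{L²} + α²‖∇u(t)‖²_{L²} = ∫ (1+α²|ξ|²)‖û(ξ,t)‖² dξ`.  Hypothesis (i), the local
absolute continuity of the energy with a.e. derivative `≤ -2ν‖∇u(t)‖²_{L²}`, is encoded
by a locally integrable a.e. derivative `D`; hypothesis (ii) is the Fourier-side Duhamel
representation with `‖G(ξ,τ)‖ ≤ K|ξ|‖u(τ)‖²_{L²}`. -/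
theorem NSV_decay_first_bootstrap
    (α ν K rstar : ℝ) (hα : 0 < α) (hν : 0 < ν) (hνα : α ^ 2 < ν) (hK : 0 < K)
    (hrstar : -(3:ℝ)/2 ≤ rstar)
    (F0 : EuclideanSpace ℝ (Fin 3) → EuclideanSpace ℂ (Fin 3))
    (hH10 : Integrable (fun ξ : EuclideanSpace ℝ (Fin 3) => (1 + ‖ξ‖ ^ 2) * ‖F0 ξ‖ ^ 2))
    (hdiv : ∀ᵐ ξ ∂(volume : Measure (EuclideanSpace ℝ (Fin 3))),
      (∑ i : Fin 3, (ξ i : ℂ) * F0 ξ i) = 0)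
    (hchar : rstar ≠ -(3:ℝ)/2 → ∃ c : ℝ, ∀ᶠ ρ in 𝓝[>] (0:ℝ),
      ρ ^ (-(2 * rstar) - 3) *
        (∫ ξ in closedBall (0 : EuclideanSpace ℝ (Fin 3)) ρ, ‖F0 ξ‖ ^ 2) ≤ c)
    (Uhat : ℝ → EuclideanSpace ℝ (Fin 3) → EuclideanSpace ℂ (Fin 3))
    (hU0 : ∀ᵐ ξ ∂(volume : Measure (EuclideanSpace ℝ (Fin 3))), Uhat 0 ξ = F0 ξ)
    (hUH1 : ∀ t : ℝ, 0 ≤ t →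
      Integrable (fun ξ : EuclideanSpace ℝ (Fin 3) => (1 + ‖ξ‖ ^ 2) * ‖Uhat t ξ‖ ^ 2))
    (D : ℝ → ℝ)
    (hDint : ∀ t : ℝ, 0 ≤ t → IntervalIntegrable D volume 0 t)
    (hE : ∀ t : ℝ, 0 ≤ t →
      (∫ ξ : EuclideanSpace ℝ (Fin 3), (1 + α ^ 2 * ‖ξ‖ ^ 2) * ‖Uhat t ξ‖ ^ 2)
        = (∫ ξ : EuclideanSpace ℝ (Fin 3), (1 + α ^ 2 * ‖ξ‖ ^ 2) * ‖Uhat 0 ξ‖ ^ 2)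
          + ∫ s in (0:ℝ)..t, D s)
    (hEderiv : ∀ᵐ s ∂(volume.restrict (Set.Ioi (0:ℝ))),
      D s ≤ -(2 * ν) * ∫ ξ : EuclideanSpace ℝ (Fin 3), ‖ξ‖ ^ 2 * ‖Uhat s ξ‖ ^ 2)
    (G : EuclideanSpace ℝ (Fin 3) → ℝ → EuclideanSpace ℂ (Fin 3))
    (hGmeas : StronglyMeasurable (Function.uncurry G))
    (hGbound : ∀ ξ : EuclideanSpace ℝ (Fin 3), ∀ τ : ℝ,
      ‖G ξ τ‖ ≤ K * ‖ξ‖ * ∫ η : EuclideanSpace ℝ (Fin 3), ‖Uhat τ η‖ ^ 2)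
    (hL2loc : ∀ t : ℝ, 0 ≤ t →
      IntervalIntegrable (fun τ => ∫ η : EuclideanSpace ℝ (Fin 3), ‖Uhat τ η‖ ^ 2)
        volume 0 t)
    (hDuhamel : ∀ t : ℝ, 0 ≤ t → ∀ᵐ ξ ∂(volume : Measure (EuclideanSpace ℝ (Fin 3))),
      Uhat t ξ = Real.exp (t * (-(ν * ‖ξ‖ ^ 2) / (1 + α ^ 2 * ‖ξ‖ ^ 2))) • F0 ξ
        - ∫ τ in (0:ℝ)..t,
            Real.exp ((t - τ) * (-(ν * ‖ξ‖ ^ 2) / (1 + α ^ 2 * ‖ξ‖ ^ 2))) • G ξ τ) :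
    ∃ C₁ > (0:ℝ), ∃ C₂ > (0:ℝ), ∀ t > (0:ℝ),
      (∫ ξ : EuclideanSpace ℝ (Fin 3), (1 + α ^ 2 * ‖ξ‖ ^ 2) * ‖Uhat t ξ‖ ^ 2)
        ≤ C₁ * (C₂ + t) ^ (-(min (3/2 + rstar) (1/2))) := by
  have iU : ∀ t, 0 ≤ t → Integrable (fun ξ => ‖Uhat t ξ‖ ^ 2) := fun t ht => by
    simpa using wint (hUH1 t ht) (fun _ => 1) continuous_const 1 (fun ξ => by simp)
  have iF : Integrable (fun ξ => ‖F0 ξ‖ ^ 2) := by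
    simpa using wint hH10 (fun _ => 1) continuous_const 1 (fun ξ => by simp)
  obtain ⟨c, hc0, ρ₀, hρ₀, hc⟩ := charF iF hchar
  set E : ℝ → ℝ := fun t => ∫ ξ : EuclideanSpace ℝ (Fin 3), (1 + α ^ 2 * ‖ξ‖ ^ 2) * ‖Uhat t ξ‖ ^ 2 with hEdef
  have hE' : ∀ t, 0 ≤ t → E t = E 0 + ∫ s in (0:ℝ)..t, D s := hE
  have hE0 : 0 ≤ E 0 := integral_nonneg fun ξ => by positivity
  have hEle : ∀ t, 0 ≤ t → E t ≤ E 0 := fun t ht => by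
    rw [hE' t ht]
    have : ∫ s in (0:ℝ)..t, D s ≤ 0 := by
      rw [intervalIntegral.integral_of_le ht]
      apply integral_nonpos_of_ae
      have h' := ae_restrict_of_ae_restrict_of_subset (s := Set.Ioc 0 t) (fun x hx => hx.1) hEderiv
      filter_upwards [h'] with s hs
      refine hs.trans ?_
      have : 0 ≤ ∫ ξ : EuclideanSpace ℝ (Fin 3), ‖ξ‖ ^ 2 * ‖Uhat s ξ‖ ^ 2 :=
        integral_nonneg fun ξ => by positivity
      simp only [Pi.zero_apply]
      nlinarith
    linarith
  have hL2 : ∀ t, 0 ≤ t → ∫ ξ, ‖Uhat t ξ‖ ^ 2 ≤ E 0 := fun t ht => by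
    refine le_trans ?_ (hEle t ht)
    refine integral_mono (iU t ht) ?_ ?_
    · refine wint (hUH1 t ht) (fun ξ => 1 + α ^ 2 * ‖ξ‖ ^ 2) (by fun_prop) (1 + α ^ 2) (fun ξ => ?_)
      rw [abs_of_nonneg (by positivity)]
      nlinarith [sq_nonneg ‖ξ‖, sq_nonneg α]
    · intro ξ
      have : 0 ≤ α ^ 2 * ‖ξ‖ ^ 2 * ‖Uhat t ξ‖ ^ 2 := by positivity
      simp only
      nlinarith
  set C : ℝ := 1 + α ^ 2 / ν + 1 / (ν * ρ₀ ^ 2) with hCdef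
  have hC1 : 1 ≤ C := by
    have : 0 ≤ α ^ 2 / ν + 1 / (ν * ρ₀ ^ 2) := by positivity
    linarith
  have hCα : α ^ 2 ≤ ν * C := by
    have : α ^ 2 / ν ≤ C := by
      have : 0 ≤ 1 / (ν * ρ₀ ^ 2) := by positivity
      linarith
    rw [div_le_iff₀ hν] at this; linarith
  have hCρ : 1 < ν * C * ρ₀ ^ 2 := by
    have : 1 / (ν * ρ₀ ^ 2) < C := by
      have : 0 ≤ α ^ 2 / ν := by positivity
      linarith
    rw [div_lt_iff₀ (by positivity)] at this; linarith
  set μ : ℝ := min (3/2 + rstar) (1/2) with hμdef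
  have hμ1 : μ ≤ 3/2 + rstar := min_le_left _ _
  have hμ2 : μ ≤ 1/2 := min_le_right _ _
  set v : ℝ := volume.real (ball (0 : EuclideanSpace ℝ (Fin 3)) 1) with hv
  have hv0 : 0 ≤ v := measureReal_nonneg
  set A : ℝ := 4 * c * ν ^ (-(3/2 + rstar)) + 4 * (K * E 0) ^ 2 * v * ν ^ (-(5/2:ℝ)) with hAdef
  have hA : 0 ≤ A := by positivity
  have hdiff : ∀ᵐ s ∂(volume.restrict (Set.Ioi (0:ℝ))), E s + (s + C) * D s ≤ A * (s + C) ^ (-μ) := by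
    filter_upwards [hEderiv, ae_restrict_mem measurableSet_Ioi] with s hs hs0
    have hs0 : 0 < s := hs0
    set y : ℝ := s + C with hy
    have hy1 : 1 ≤ y := by linarith
    have hypos : 0 < y := by linarith
    have hνy : 0 < ν * y := by positivity
    set ρ : ℝ := (ν * y) ^ (-(1/2):ℝ) with hρdef
    have hρ : 0 < ρ := by positivity
    have hρ2' : ρ ^ 2 = (ν * y)⁻¹ := by
      rw [hρdef, ← Real.rpow_natCast, ← Real.rpow_mul hνy.le, ← Real.rpow_neg_one]; norm_num
    have hρ2 : ρ ^ 2 * (ν * y) = 1 := by rw [hρ2']; field_simp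
    have hρlt : ρ < ρ₀ := by
      apply lt_of_pow_lt_pow_left₀ 2 hρ₀.le
      have : 1 < ν * y * ρ₀ ^ 2 := hCρ.trans_le (by gcongr; linarith)
      rw [← hρ2] at this
      nlinarith
    have hsp := split (α := α) hypos hν (hCα.trans (by gcongr; linarith)) hρ hρ2
      (h := fun ξ => ‖Uhat s ξ‖ ^ 2) (fun ξ => by positivity) (hUH1 s hs0.le)
    have hlow := lowfreq (B := K * E 0 * s) hρ (by positivity) (iU s hs0.le) iF
      (e := fun ξ => Real.exp (s * (-(ν * ‖ξ‖ ^ 2) / (1 + α ^ 2 * ‖ξ‖ ^ 2))))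
      (W := fun ξ => ∫ τ in (0:ℝ)..s,
            Real.exp ((s - τ) * (-(ν * ‖ξ‖ ^ 2) / (1 + α ^ 2 * ‖ξ‖ ^ 2))) • G ξ τ)
      (fun ξ => (Real.exp_pos _).le) (fun ξ => by
        rw [Real.exp_le_one_iff]
        apply mul_nonpos_of_nonneg_of_nonpos hs0.le
        apply div_nonpos_of_nonpos_of_nonneg
        · have : 0 ≤ ν * ‖ξ‖ ^ 2 := by positivity
          linarith
        · positivity)
      (hDuhamel s hs0.le) (fun ξ => by
        have := intervalIntegral.norm_integral_le_of_norm_le_const (a := 0) (b := s)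
          (C := K * ‖ξ‖ * E 0)
          (f := fun τ => Real.exp ((s - τ) * (-(ν * ‖ξ‖ ^ 2) / (1 + α ^ 2 * ‖ξ‖ ^ 2))) • G ξ τ)
          (fun τ hτ => by
            rw [Set.uIoc_of_le hs0.le] at hτ
            rw [norm_smul, Real.norm_of_nonneg (Real.exp_pos _).le]
            have h1 : ‖G ξ τ‖ ≤ K * ‖ξ‖ * E 0 := (hGbound ξ τ).trans (by
              gcongr; exact hL2 τ hτ.1.le)
            refine (mul_le_of_le_one_left (norm_nonneg _) ?_).trans h1
            rw [Real.exp_le_one_iff]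
            apply mul_nonpos_of_nonneg_of_nonpos (by linarith [hτ.2])
            apply div_nonpos_of_nonpos_of_nonneg
            · have : 0 ≤ ν * ‖ξ‖ ^ 2 := by positivity
              linarith
            · positivity)
        refine this.trans (le_of_eq ?_)
        rw [sub_zero, abs_of_pos hs0]; ring)
    have hcρ := hc ρ hρ hρlt
    have e1 : ρ ^ (2 * rstar + 3) ≤ ν ^ (-(3/2 + rstar)) * y ^ (-μ) := by
      rw [hρdef, ← Real.rpow_mul hνy.le, show (-(1/2):ℝ) * (2 * rstar + 3) = -(3/2 + rstar) by ring,
        Real.mul_rpow hν.le hypos.le]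
      gcongr
    have e2 : s ^ 2 * ρ ^ 5 ≤ ν ^ (-(5/2:ℝ)) * y ^ (-μ) := by
      have : ρ ^ 5 = ν ^ (-(5/2:ℝ)) * y ^ (-(5/2:ℝ)) := by
        rw [← Real.mul_rpow hν.le hypos.le, hρdef, ← Real.rpow_natCast, ← Real.rpow_mul hνy.le]
        norm_num
      rw [this]
      calc s ^ 2 * (ν ^ (-(5/2:ℝ)) * y ^ (-(5/2:ℝ))) ≤ y ^ 2 * (ν ^ (-(5/2:ℝ)) * y ^ (-(5/2:ℝ))) := by
            gcongr; linarith
        _ = ν ^ (-(5/2:ℝ)) * (y ^ (2:ℝ) * y ^ (-(5/2:ℝ))) := by rw [Real.rpow_two]; ring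
        _ = ν ^ (-(5/2:ℝ)) * y ^ (-(1/2:ℝ)) := by rw [← Real.rpow_add hypos]; norm_num
        _ ≤ _ := by
          gcongr
    have hD : y * D s ≤ y * (-(2 * ν) * ∫ ξ : EuclideanSpace ℝ (Fin 3), ‖ξ‖ ^ 2 * ‖Uhat s ξ‖ ^ 2) := by
      gcongr
    have f1 := mul_le_mul_of_nonneg_left e1 hc0
    have f2 := mul_le_mul_of_nonneg_left e2 (show 0 ≤ (K * E 0) ^ 2 * v by positivity)
    have hsp' : E s ≤ _ := hsp
    rw [hAdef]
    linarith
  refine ⟨C * E 0 + 2 * A + 1, by positivity, C, by positivity, fun t ht => ?_⟩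
  have hode := ode_aux hC1 ht.le hA hμ2 (hDint t ht.le) hE' hdiff
  have hy : 0 < t + C := by linarith
  change E t ≤ _
  rw [add_comm C t]
  have hone : 1 ≤ (t + C) ^ (1 - μ) := Real.one_le_rpow (by linarith) (by linarith)
  have hmul : (t + C) ^ (1 - μ) = (t + C) ^ (-μ) * (t + C) := by
    rw [← Real.rpow_add_one hy.ne']; congr 1; ring
  refine le_of_mul_le_mul_right ?_ hy
  rw [mul_assoc, ← hmul]
  have : 0 ≤ C * E 0 := by positivity
  nlinarith
end

section
/- Let α, ν > 0 with ν > α², let u₀ ∈ H¹(ℝ³;ℝ³) be divergence-free, let r* ∈ [−3/2, ∞) with limsup_{ρ→0⁺} ρ^{−2r*−3} ∫_{|ξ|≤ρ} |û₀(ξ)|² dξ < ∞ (no condition when r* = −3/2), and let u : [0,∞) → H¹(ℝ³;ℝ³), u(0) = u₀, satisfy: (i) t ↦ ‖u(t)‖²_{L²} + α²‖∇u(t)‖²_{L²} is locally absolutely continuous with derivative ≤ −2ν‖∇u(t)‖²_{L²} a.e.; (ii) û(ξ,t) = e^{tM(ξ)} û₀(ξ) − ∫₀ᵗ e^{(t−τ)M(ξ)}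 G(ξ,τ) dτ with M(ξ) = −ν|ξ|²/(1+α²|ξ|²) and |G(ξ,τ)| ≤ K|ξ|‖u(τ)‖²_{L²} for some K > 0. Then (second bootstrap step) there exist constants C₁, C₂ > 0 such that for all t > 0, ‖u(t)‖²_{L²} + α²‖∇u(t)‖²_{L²} ≤ C₁ (C₂ + t)^{−min{3/2 + r*, 3/2}}. -/
open MeasureTheory Filter Topology Metric

/-- Comparison lemma. -/
theorem nsv_compare (E D φ φ' : ℝ → ℝ) (hD : ∀ t : ℝ, 0 ≤ t → IntervalIntegrable D volume 0 t)
    (hE : ∀ t : ℝ, 0 ≤ t → E t = E 0 + ∫ s in (0:ℝ)..t, D s)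
    (hφ : ∀ t : ℝ, 0 ≤ t → HasDerivAt φ (φ' t) t)
    (hφ' : ContinuousOn φ' (Set.Ici 0))
    (h0 : E 0 ≤ φ 0)
    (hae : ∀ᵐ s ∂(volume.restrict (Set.Ioi (0:ℝ))), φ s ≤ E s → D s ≤ φ' s) :
    ∀ t : ℝ, 0 ≤ t → E t ≤ φ t := by
  intro t ht
  by_contra hcon
  push Not at hcon
  have hEc : ContinuousOn E (Set.Icc 0 t) := by
    have h1 : ContinuousOn (fun x => ∫ s in (0:ℝ)..x, D s) (Set.Icc 0 t) := by
      have := intervalIntegral.continuousOn_primitive_interval (μ := volume) (f := D) (a := 0) (b := t)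
        (by
          have := (hD t ht)
          rw [intervalIntegrable_iff_integrableOn_Icc_of_le ht] at this
          rwa [Set.uIcc_of_le ht])
      rwa [Set.uIcc_of_le ht] at this
    refine (continuousOn_const.add h1).congr (fun x hx => hE x hx.1)
  have hφc : ContinuousOn φ (Set.Icc 0 t) := fun x hx =>
    (hφ x hx.1).continuousAt.continuousWithinAt
  set S : Set ℝ := {x ∈ Set.Icc 0 t | E x ≤ φ x} with hS
  have hSc : IsClosed S := isClosed_Icc.isClosed_le hEc hφc
  have hSne : S.Nonempty := ⟨0, ⟨⟨le_refl _, ht⟩, h0⟩⟩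
  have hSb : BddAbove S := ⟨t, fun x hx => hx.1.2⟩
  have hmem : sSup S ∈ S := hSc.csSup_mem hSne hSb
  set t0 := sSup S with ht0
  have h00 : 0 ≤ t0 := hmem.1.1
  have h0t : t0 ≤ t := hmem.1.2
  have habove : ∀ x, t0 < x → x ≤ t → φ x < E x := by
    intro x hx hxt
    by_contra hc
    push Not at hc
    have : x ≤ t0 := le_csSup hSb ⟨⟨h00.trans hx.le, hxt⟩, hc⟩
    linarith
  have hDi : IntervalIntegrable D volume t0 t := (hD t0 h00).symm.trans (hD t ht)
  have hsub : Set.uIcc t0 t ⊆ Set.Ici 0 := by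
    rw [Set.uIcc_of_le h0t]; intro x hx; exact h00.trans hx.1
  have hφi : IntervalIntegrable φ' volume t0 t := (hφ'.mono hsub).intervalIntegrable
  have hint : ∫ s in t0..t, D s ≤ ∫ s in t0..t, φ' s := by
    apply intervalIntegral.integral_mono_ae_restrict h0t hDi hφi
    have h1 : ∀ᵐ s ∂(volume.restrict (Set.Icc t0 t)), s ∈ Set.Ioc t0 t := by
      rw [← restrict_Ioc_eq_restrict_Icc]
      exact ae_restrict_mem measurableSet_Ioc
    have h2 : ∀ᵐ s ∂(volume.restrict (Set.Icc t0 t)), φ s ≤ E s → D s ≤ φ' s := by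
      rw [← restrict_Ioc_eq_restrict_Icc]
      refine ae_restrict_of_ae_restrict_of_subset ?_ hae
      intro x hx
      exact lt_of_le_of_lt h00 hx.1
    filter_upwards [h1, h2] with s hs1 hs2
    exact hs2 (habove s hs1.1 hs1.2).le
  have hF : ∫ s in t0..t, φ' s = φ t - φ t0 :=
    intervalIntegral.integral_eq_sub_of_hasDerivAt (fun x hx => hφ x (hsub hx)) hφi
  have hA : ∫ s in (0:ℝ)..t, D s = (∫ s in (0:ℝ)..t0, D s) + ∫ s in t0..t, D s :=
    (intervalIntegral.integral_add_adjacent_intervals (hD t0 h00) hDi).symm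
  have e1 := hE t ht
  have e2 := hE t0 h00
  have e3 := hmem.2
  linarith

theorem nsv_step (E D L : ℝ → ℝ) (C c0 c1 σ a b A : ℝ)
    (hC : 1 ≤ C) (hc0 : 0 ≤ c0) (hc1 : 0 ≤ c1) (ha0 : 0 ≤ a) (ha1 : a < 1)
    (hb0 : 0 ≤ b) (hb2 : b < 2) (hbσ : b ≤ σ) (hba : b ≤ 1/2 + 2 * a) (hA : 0 ≤ A)
    (hD : ∀ t : ℝ, 0 ≤ t → IntervalIntegrable D volume 0 t)
    (hL : ∀ t : ℝ, 0 ≤ t → IntervalIntegrable L volume 0 t)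
    (hL0 : ∀ t : ℝ, 0 ≤ t → 0 ≤ L t)
    (hLE : ∀ t : ℝ, 0 ≤ t → L t ≤ E t)
    (hE : ∀ t : ℝ, 0 ≤ t → E t = E 0 + ∫ s in (0:ℝ)..t, D s)
    (hEA : ∀ t : ℝ, 0 ≤ t → E t ≤ A * (C + t) ^ (-a))
    (hae : ∀ᵐ s ∂(volume.restrict (Set.Ioi (0:ℝ))),
      D s ≤ -(2 / (C + s)) * (E s - c0 * (C + s) ^ (-σ)
        - c1 * (C + s) ^ (-(5:ℝ)/2) * (∫ τ in (0:ℝ)..s, L τ) ^ 2)) :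
    ∃ B : ℝ, 0 < B ∧ ∀ t : ℝ, 0 ≤ t → E t ≤ B * (C + t) ^ (-b) := by
  have hLam : ∀ t : ℝ, 0 ≤ t → ∫ τ in (0:ℝ)..t, L τ ≤ A / (1 - a) * (C + t) ^ (1 - a) := by
    intro t ht
    have hd : ∀ x ∈ Set.uIcc 0 t, HasDerivAt (fun x => A / (1 - a) * (C + x) ^ (1 - a))
        (A * (C + x) ^ (-a)) x := by
      intro x hx
      rw [Set.uIcc_of_le ht] at hx
      have h1 : HasDerivAt (fun x => C + x) 1 x := (hasDerivAt_id x).const_add C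
      have h2 := (h1.rpow_const (p := 1 - a) (Or.inl (by linarith [hx.1]))).const_mul (A / (1 - a))
      have h3 : (1 - a) ≠ 0 := by linarith
      have h4 : A / (1 - a) * (1 * (1 - a) * (C + x) ^ (1 - a - 1)) = A * (C + x) ^ (-a) := by
        rw [show (1 - a - 1) = -a by ring]
        field_simp
      rw [h4] at h2
      exact h2
    have hcont : ContinuousOn (fun x => A * (C + x) ^ (-a)) (Set.uIcc 0 t) := by
      rw [Set.uIcc_of_le ht]
      refine continuousOn_const.mul (ContinuousOn.rpow_const (by fun_prop) ?_)
      intro x hx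
      left; linarith [hx.1]
    have hF := intervalIntegral.integral_eq_sub_of_hasDerivAt hd hcont.intervalIntegrable
    have hm : ∫ τ in (0:ℝ)..t, L τ ≤ ∫ τ in (0:ℝ)..t, A * (C + τ) ^ (-a) := by
      apply intervalIntegral.integral_mono_on ht (hL t ht) hcont.intervalIntegrable
      intro x hx
      exact (hLE x hx.1).trans (hEA x hx.1)
    have : 0 ≤ A / (1 - a) * (C + 0) ^ (1 - a) :=
      mul_nonneg (div_nonneg hA (by linarith)) (Real.rpow_nonneg (by linarith) _)
    linarith
  set B1 : ℝ := c0 + c1 * (A / (1 - a)) ^ 2 with hB1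
  have hB1n : 0 ≤ B1 := by positivity
  have hlow : ∀ s : ℝ, 0 ≤ s → c0 * (C + s) ^ (-σ)
        + c1 * (C + s) ^ (-(5:ℝ)/2) * (∫ τ in (0:ℝ)..s, L τ) ^ 2 ≤ B1 * (C + s) ^ (-b) := by
    intro s hs
    have hT : 1 ≤ C + s := by linarith
    have hT0 : 0 < C + s := by linarith
    have h1 : (C + s) ^ (-σ) ≤ (C + s) ^ (-b) :=
      Real.rpow_le_rpow_of_exponent_le hT (by linarith)
    have hn : 0 ≤ ∫ τ in (0:ℝ)..s, L τ :=
      intervalIntegral.integral_nonneg hs (fun u hu => hL0 u hu.1)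
    have h2 : (∫ τ in (0:ℝ)..s, L τ) ^ 2 ≤ (A / (1 - a)) ^ 2 * (C + s) ^ (2 - 2 * a) := by
      have := pow_le_pow_left₀ hn (hLam s hs) 2
      rw [mul_pow, ← Real.rpow_natCast ((C + s) ^ (1 - a)) 2, ← Real.rpow_mul hT0.le] at this
      rw [show (1 - a) * ((2:ℕ):ℝ) = 2 - 2 * a by push_cast; ring] at this
      exact this
    have h3 : (C + s) ^ (-(5:ℝ)/2) * (∫ τ in (0:ℝ)..s, L τ) ^ 2
        ≤ (A / (1 - a)) ^ 2 * (C + s) ^ (-b) := by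
      calc (C + s) ^ (-(5:ℝ)/2) * (∫ τ in (0:ℝ)..s, L τ) ^ 2
          ≤ (C + s) ^ (-(5:ℝ)/2) * ((A / (1 - a)) ^ 2 * (C + s) ^ (2 - 2 * a)) := by gcongr
        _ = (A / (1 - a)) ^ 2 * (C + s) ^ (-(5:ℝ)/2 + (2 - 2 * a)) := by
            rw [Real.rpow_add hT0]; ring
        _ ≤ (A / (1 - a)) ^ 2 * (C + s) ^ (-b) := by
            apply mul_le_mul_of_nonneg_left _ (sq_nonneg _)
            exact Real.rpow_le_rpow_of_exponent_le hT (by linarith)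
    rw [hB1, add_mul, mul_assoc, mul_assoc]
    gcongr
  set B : ℝ := max (2 * B1 / (2 - b)) (max (E 0 * C ^ b) 1) with hB
  have hBp : 0 < B := lt_of_lt_of_le one_pos ((le_max_right _ _).trans (le_max_right _ _))
  have hBb : 2 * B1 ≤ (2 - b) * B := by
    have : 2 * B1 / (2 - b) ≤ B := le_max_left _ _
    rw [div_le_iff₀ (by linarith)] at this
    linarith
  have hBE : E 0 * C ^ b ≤ B := (le_max_left _ _).trans (le_max_right _ _)
  refine ⟨B, hBp, ?_⟩
  apply nsv_compare E D (fun t => B * (C + t) ^ (-b)) (fun t => B * (-b * (C + t) ^ (-b - 1))) hD hE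
  · intro x hx
    have h1 : HasDerivAt (fun x => C + x) 1 x := (hasDerivAt_id x).const_add C
    have h2 := (h1.rpow_const (p := -b) (Or.inl (by linarith))).const_mul B
    rw [one_mul] at h2
    exact h2
  · refine continuousOn_const.mul (continuousOn_const.mul (ContinuousOn.rpow_const (by fun_prop) ?_))
    intro x hx
    left
    have : (0:ℝ) ≤ x := hx
    linarith
  · simp only [add_zero]
    rw [Real.rpow_neg (by linarith), ← div_eq_mul_inv, le_div_iff₀ (Real.rpow_pos_of_pos (by linarith) _)]
    exact hBE
  · filter_upwards [hae, ae_restrict_mem measurableSet_Ioi] with s hs hs0 hEs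
    have hs0' : (0:ℝ) < s := hs0
    have hT0 : 0 < C + s := by linarith
    refine hs.trans ?_
    have h1 := hlow s hs0'.le
    have hX : 0 < (C + s) ^ (-b) := Real.rpow_pos_of_pos hT0 _
    have h2 : (C + s) ^ (-b - 1) = (C + s) ^ (-b) / (C + s) := by
      rw [Real.rpow_sub hT0, Real.rpow_one]
    rw [h2]
    have h3 : (B - B1) * (C + s) ^ (-b) ≤ E s - c0 * (C + s) ^ (-σ)
        - c1 * (C + s) ^ (-(5:ℝ)/2) * (∫ τ in (0:ℝ)..s, L τ) ^ 2 := by linarith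
    have h4 : b * B * (C + s) ^ (-b) ≤ 2 * ((B - B1) * (C + s) ^ (-b)) := by
      rw [← mul_assoc]
      apply mul_le_mul_of_nonneg_right _ hX.le
      linarith
    calc _ = -((2 * (E s - c0 * (C + s) ^ (-σ)
        - c1 * (C + s) ^ (-(5:ℝ)/2) * (∫ τ in (0:ℝ)..s, L τ) ^ 2)) / (C + s)) := by ring
      _ ≤ -((b * B * (C + s) ^ (-b)) / (C + s)) := by
        apply neg_le_neg
        apply div_le_div_of_nonneg_right _ hT0.le
        linarith
      _ = _ := by ring

theorem nsv_integrable (f w : EuclideanSpace ℝ (Fin 3) → ℝ) (c : ℝ)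
    (hf : Integrable (fun ξ : EuclideanSpace ℝ (Fin 3) => (1 + ‖ξ‖ ^ 2) * f ξ))
    (hw : Continuous w) (hwc : ∀ ξ, |w ξ| ≤ c * (1 + ‖ξ‖ ^ 2)) :
    Integrable (fun ξ => w ξ * f ξ) := by
  have hp : ∀ ξ : EuclideanSpace ℝ (Fin 3), 0 < 1 + ‖ξ‖ ^ 2 := fun ξ => by positivity
  have hcont : Continuous (fun ξ => w ξ / (1 + ‖ξ‖ ^ 2)) :=
    hw.div (by fun_prop) (fun ξ => (hp ξ).ne')
  have := hf.bdd_mul (c := c) hcont.aestronglyMeasurable (Eventually.of_forall (fun ξ => by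
    rw [Real.norm_eq_abs, abs_div, abs_of_pos (hp ξ), div_le_iff₀ (hp ξ)]
    exact hwc ξ))
  refine this.congr (Eventually.of_forall (fun ξ => ?_))
  have := (hp ξ).ne'
  simp only
  field_simp

/-- Low frequency bound. -/
theorem nsv_low (U F : EuclideanSpace ℝ (Fin 3) → EuclideanSpace ℂ (Fin 3)) (K Λ ρ : ℝ)
    (hρ : 0 < ρ) (hK : 0 ≤ K) (hΛ : 0 ≤ Λ)
    (hF : Integrable (fun ξ => ‖F ξ‖ ^ 2)) (hU : Integrable (fun ξ => ‖U ξ‖ ^ 2))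
    (h : ∀ᵐ ξ, ‖U ξ‖ ≤ ‖F ξ‖ + K * ‖ξ‖ * Λ) :
    ∫ ξ in closedBall (0 : EuclideanSpace ℝ (Fin 3)) ρ, ‖U ξ‖ ^ 2 ≤
      2 * (∫ ξ in closedBall (0 : EuclideanSpace ℝ (Fin 3)) ρ, ‖F ξ‖ ^ 2) +
      2 * K ^ 2 * (volume.real (ball (0 : EuclideanSpace ℝ (Fin 3)) 1)) * ρ ^ 5 * Λ ^ 2 := by
  have hvol : volume.real (closedBall (0 : EuclideanSpace ℝ (Fin 3)) ρ)
      = ρ ^ 3 * volume.real (ball (0 : EuclideanSpace ℝ (Fin 3)) 1) := by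
    have := Measure.addHaar_real_closedBall (volume : Measure (EuclideanSpace ℝ (Fin 3))) 0 hρ.le
    simpa using this
  have hfin : volume (closedBall (0 : EuclideanSpace ℝ (Fin 3)) ρ) ≠ ⊤ :=
    measure_closedBall_lt_top.ne
  have hci : IntegrableOn (fun _ : EuclideanSpace ℝ (Fin 3) => 2 * (K * ρ * Λ) ^ 2)
      (closedBall (0 : EuclideanSpace ℝ (Fin 3)) ρ) := integrableOn_const hfin
  have hm : ∫ ξ in closedBall (0 : EuclideanSpace ℝ (Fin 3)) ρ, ‖U ξ‖ ^ 2 ≤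
      ∫ ξ in closedBall (0 : EuclideanSpace ℝ (Fin 3)) ρ, (2 * ‖F ξ‖ ^ 2 + 2 * (K * ρ * Λ) ^ 2) := by
    apply integral_mono_ae hU.integrableOn ((hF.const_mul 2).integrableOn.add hci)
    filter_upwards [ae_restrict_of_ae h, ae_restrict_mem measurableSet_closedBall] with ξ h1 h2
    have h3 : ‖ξ‖ ≤ ρ := by simpa using h2
    have h4 : ‖U ξ‖ ≤ ‖F ξ‖ + K * ρ * Λ := h1.trans (by gcongr)
    have h5 := pow_le_pow_left₀ (norm_nonneg _) h4 2
    show ‖U ξ‖ ^ 2 ≤ 2 * ‖F ξ‖ ^ 2 + 2 * (K * ρ * Λ) ^ 2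
    nlinarith [sq_nonneg (‖F ξ‖ - K * ρ * Λ)]
  refine hm.trans (le_of_eq ?_)
  rw [integral_add (hF.const_mul 2).integrableOn hci, integral_const_mul, setIntegral_const, hvol]
  simp only [smul_eq_mul]
  ring

/-- Fourier splitting. -/
theorem nsv_split (U : EuclideanSpace ℝ (Fin 3) → EuclideanSpace ℂ (Fin 3)) (α ν T ρ : ℝ)
    (hν : 0 < ν) (hνα : α ^ 2 < ν) (hT : 1 ≤ T) (hρ : 0 < ρ) (hρ2 : ρ ^ 2 = 1 / ((ν - α ^ 2) * T))
    (hU : Integrable (fun ξ => ‖U ξ‖ ^ 2))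
    (hU1 : Integrable (fun ξ => ‖ξ‖ ^ 2 * ‖U ξ‖ ^ 2))
    (hU2 : Integrable (fun ξ => (1 + α ^ 2 * ‖ξ‖ ^ 2) * ‖U ξ‖ ^ 2)) :
    (∫ ξ, (1 + α ^ 2 * ‖ξ‖ ^ 2) * ‖U ξ‖ ^ 2)
      - (1 + α ^ 2 / (ν - α ^ 2)) *
        ∫ ξ in closedBall (0 : EuclideanSpace ℝ (Fin 3)) ρ, ‖U ξ‖ ^ 2
      ≤ ν * T * ∫ ξ, ‖ξ‖ ^ 2 * ‖U ξ‖ ^ 2 := by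
  have hδ : 0 < ν - α ^ 2 := by linarith
  have hT0 : 0 < T := by linarith
  rw [← integral_indicator measurableSet_closedBall, ← integral_const_mul, ← integral_const_mul,
    ← integral_sub hU2 ((hU.indicator measurableSet_closedBall).const_mul _)]
  apply integral_mono (hU2.sub ((hU.indicator measurableSet_closedBall).const_mul _))
    (hU1.const_mul _)
  intro ξ
  show (1 + α ^ 2 * ‖ξ‖ ^ 2) * ‖U ξ‖ ^ 2 - (1 + α ^ 2 / (ν - α ^ 2)) *
    (closedBall (0 : EuclideanSpace ℝ (Fin 3)) ρ).indicator (fun ξ => ‖U ξ‖ ^ 2) ξ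
      ≤ ν * T * (‖ξ‖ ^ 2 * ‖U ξ‖ ^ 2)
  have hu : 0 ≤ ‖U ξ‖ ^ 2 := by positivity
  by_cases hξ : ξ ∈ closedBall (0 : EuclideanSpace ℝ (Fin 3)) ρ
  · rw [Set.indicator_of_mem hξ]
    have h3 : ‖ξ‖ ≤ ρ := by simpa using hξ
    have h4 : ‖ξ‖ ^ 2 ≤ 1 / (ν - α ^ 2) := by
      calc ‖ξ‖ ^ 2 ≤ ρ ^ 2 := pow_le_pow_left₀ (norm_nonneg _) h3 2
        _ = 1 / ((ν - α ^ 2) * T) := hρ2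
        _ ≤ 1 / (ν - α ^ 2) := by
          apply one_div_le_one_div_of_le hδ
          nlinarith
    have h5 : (1 + α ^ 2 * ‖ξ‖ ^ 2) ≤ (1 + α ^ 2 / (ν - α ^ 2)) := by
      rw [div_eq_mul_one_div (α ^ 2)]
      gcongr
    have h6 := mul_le_mul_of_nonneg_right h5 hu
    have : 0 ≤ ν * T * (‖ξ‖ ^ 2 * ‖U ξ‖ ^ 2) := by positivity
    linarith
  · rw [Set.indicator_of_notMem hξ]
    have h3 : ρ < ‖ξ‖ := by simpa using hξ
    have h4 : ρ ^ 2 ≤ ‖ξ‖ ^ 2 := pow_le_pow_left₀ hρ.le h3.le 2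
    rw [hρ2, div_le_iff₀ (by positivity)] at h4
    have h5 : 1 + α ^ 2 * ‖ξ‖ ^ 2 ≤ ν * T * ‖ξ‖ ^ 2 := by
      nlinarith [mul_nonneg (mul_nonneg (sq_nonneg α) (sq_nonneg ‖ξ‖)) (sub_nonneg.2 hT)]
    have h6 := mul_le_mul_of_nonneg_right h5 hu
    linarith

/-- Decay of the linear part at low frequency. -/
theorem nsv_char (F0 : EuclideanSpace ℝ (Fin 3) → EuclideanSpace ℂ (Fin 3)) (rstar δ : ℝ)
    (hδ : 0 < δ) (hF : Integrable (fun ξ => ‖F0 ξ‖ ^ 2))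
    (hchar : rstar ≠ -(3:ℝ)/2 → ∃ c : ℝ, ∀ᶠ ρ in 𝓝[>] (0:ℝ),
      ρ ^ (-(2 * rstar) - 3) *
        (∫ ξ in closedBall (0 : EuclideanSpace ℝ (Fin 3)) ρ, ‖F0 ξ‖ ^ 2) ≤ c) :
    ∃ C c : ℝ, 1 ≤ C ∧ 0 ≤ c ∧ ∀ T, C ≤ T → ∀ ρ, 0 < ρ → ρ ^ 2 = 1 / (δ * T) →
      ∫ ξ in closedBall (0 : EuclideanSpace ℝ (Fin 3)) ρ, ‖F0 ξ‖ ^ 2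
        ≤ c * T ^ (-(3/2 + rstar)) := by
  by_cases hr : rstar = -(3:ℝ)/2
  · refine ⟨1, ∫ ξ, ‖F0 ξ‖ ^ 2, le_refl _, integral_nonneg (fun _ => by positivity), ?_⟩
    intro T hT ρ hρ _
    rw [hr, show -(3/2 + -(3:ℝ)/2) = 0 by norm_num, Real.rpow_zero, mul_one]
    exact setIntegral_le_integral hF (Eventually.of_forall (fun _ => by positivity))
  · obtain ⟨c, hc⟩ := hchar hr
    obtain ⟨ε, hε, hc⟩ := (mem_nhdsGT_iff_exists_Ioo_subset).1 hc
    have hε0 : (0:ℝ) < ε := hε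
    refine ⟨max 1 (2 / (δ * ε ^ 2)), |c| * δ ^ (-(3/2 + rstar)), le_max_left _ _, by positivity, ?_⟩
    intro T hT ρ hρ hρ2
    have hT1 : 1 ≤ T := (le_max_left _ _).trans hT
    have hT0 : 0 < T := by linarith
    have hT2 : 2 / (δ * ε ^ 2) ≤ T := (le_max_right _ _).trans hT
    have hρε : ρ < ε := by
      apply lt_of_pow_lt_pow_left₀ 2 hε0.le
      rw [hρ2, div_lt_iff₀ (by positivity)]
      rw [div_le_iff₀ (by positivity)] at hT2
      nlinarith
    have h1 : ρ ^ (-(2 * rstar) - 3) *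
        (∫ ξ in closedBall (0 : EuclideanSpace ℝ (Fin 3)) ρ, ‖F0 ξ‖ ^ 2) ≤ c := hc ⟨hρ, hρε⟩
    have h2 : ρ ^ (-(2 * rstar) - 3) = (δ * T) ^ (3/2 + rstar) := by
      rw [show (-(2 * rstar) - 3) = 2 * (-(3/2 + rstar)) by ring, Real.rpow_mul hρ.le,
        Real.rpow_two, hρ2, one_div, Real.inv_rpow (by positivity), Real.rpow_neg (by positivity),
        inv_inv]
    rw [h2] at h1
    have hp : 0 < (δ * T) ^ (3/2 + rstar) := Real.rpow_pos_of_pos (by positivity) _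
    rw [mul_comm, ← le_div_iff₀ hp] at h1
    refine h1.trans ?_
    rw [mul_assoc, ← Real.mul_rpow hδ.le hT0.le, Real.rpow_neg (by positivity), ← div_eq_mul_inv]
    gcongr
    exact le_abs_self c

/-- **Decay of weak solutions to the Navier–Stokes–Voigt equations** (second bootstrap step).
Here `û₀ = F0`, `û(t) = Uhat t`, `M(ξ) = -ν|ξ|²/(1+α²|ξ|²)`, and by Plancherel
`‖u(t)‖²_{L²} + α²‖∇u(t)‖²_{L²} = ∫ (1+α²|ξ|²)‖û(ξ,t)‖² dξ`.  Hypothesis (i), the local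
absolute continuity of the energy with a.e. derivative `≤ -2ν‖∇u(t)‖²_{L²}`, is encoded
by a locally integrable a.e. derivative `D`; hypothesis (ii) is the Fourier-side Duhamel
representation with `‖G(ξ,τ)‖ ≤ K|ξ|‖u(τ)‖²_{L²}`. -/
theorem NSV_decay_second_bootstrap
    (α ν K rstar : ℝ) (hα : 0 < α) (hν : 0 < ν) (hνα : α ^ 2 < ν) (hK : 0 < K)
    (hrstar : -(3:ℝ)/2 ≤ rstar)
    (F0 : EuclideanSpace ℝ (Fin 3) → EuclideanSpace ℂ (Fin 3))
    (hH10 : Integrable (fun ξ : EuclideanSpace ℝ (Fin 3) => (1 + ‖ξ‖ ^ 2) * ‖F0 ξ‖ ^ 2))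
    (hdiv : ∀ᵐ ξ ∂(volume : Measure (EuclideanSpace ℝ (Fin 3))),
      (∑ i : Fin 3, (ξ i : ℂ) * F0 ξ i) = 0)
    (hchar : rstar ≠ -(3:ℝ)/2 → ∃ c : ℝ, ∀ᶠ ρ in 𝓝[>] (0:ℝ),
      ρ ^ (-(2 * rstar) - 3) *
        (∫ ξ in closedBall (0 : EuclideanSpace ℝ (Fin 3)) ρ, ‖F0 ξ‖ ^ 2) ≤ c)
    (Uhat : ℝ → EuclideanSpace ℝ (Fin 3) → EuclideanSpace ℂ (Fin 3))
    (hU0 : ∀ᵐ ξ ∂(volume : Measure (EuclideanSpace ℝ (Fin 3))), Uhat 0 ξ = F0 ξ)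
    (hUH1 : ∀ t : ℝ, 0 ≤ t →
      Integrable (fun ξ : EuclideanSpace ℝ (Fin 3) => (1 + ‖ξ‖ ^ 2) * ‖Uhat t ξ‖ ^ 2))
    (D : ℝ → ℝ)
    (hDint : ∀ t : ℝ, 0 ≤ t → IntervalIntegrable D volume 0 t)
    (hE : ∀ t : ℝ, 0 ≤ t →
      (∫ ξ : EuclideanSpace ℝ (Fin 3), (1 + α ^ 2 * ‖ξ‖ ^ 2) * ‖Uhat t ξ‖ ^ 2)
        = (∫ ξ : EuclideanSpace ℝ (Fin 3), (1 + α ^ 2 * ‖ξ‖ ^ 2) * ‖Uhat 0 ξ‖ ^ 2)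
          + ∫ s in (0:ℝ)..t, D s)
    (hEderiv : ∀ᵐ s ∂(volume.restrict (Set.Ioi (0:ℝ))),
      D s ≤ -(2 * ν) * ∫ ξ : EuclideanSpace ℝ (Fin 3), ‖ξ‖ ^ 2 * ‖Uhat s ξ‖ ^ 2)
    (G : EuclideanSpace ℝ (Fin 3) → ℝ → EuclideanSpace ℂ (Fin 3))
    (hGmeas : StronglyMeasurable (Function.uncurry G))
    (hGbound : ∀ ξ : EuclideanSpace ℝ (Fin 3), ∀ τ : ℝ,
      ‖G ξ τ‖ ≤ K * ‖ξ‖ * ∫ η : EuclideanSpace ℝ (Fin 3), ‖Uhat τ η‖ ^ 2)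
    (hL2loc : ∀ t : ℝ, 0 ≤ t →
      IntervalIntegrable (fun τ => ∫ η : EuclideanSpace ℝ (Fin 3), ‖Uhat τ η‖ ^ 2)
        volume 0 t)
    (hDuhamel : ∀ t : ℝ, 0 ≤ t → ∀ᵐ ξ ∂(volume : Measure (EuclideanSpace ℝ (Fin 3))),
      Uhat t ξ = Real.exp (t * (-(ν * ‖ξ‖ ^ 2) / (1 + α ^ 2 * ‖ξ‖ ^ 2))) • F0 ξ
        - ∫ τ in (0:ℝ)..t,
            Real.exp ((t - τ) * (-(ν * ‖ξ‖ ^ 2) / (1 + α ^ 2 * ‖ξ‖ ^ 2))) • G ξ τ) :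
    ∃ C₁ > (0:ℝ), ∃ C₂ > (0:ℝ), ∀ t > (0:ℝ),
      (∫ ξ : EuclideanSpace ℝ (Fin 3), (1 + α ^ 2 * ‖ξ‖ ^ 2) * ‖Uhat t ξ‖ ^ 2)
        ≤ C₁ * (C₂ + t) ^ (-(min (3/2 + rstar) (3/2))) := by
  have hiF : Integrable (fun ξ : EuclideanSpace ℝ (Fin 3) => ‖F0 ξ‖ ^ 2) := by
    have := nsv_integrable _ (fun _ => 1) 1 hH10 continuous_const
      (fun ξ => by rw [abs_one]; nlinarith [sq_nonneg ‖ξ‖])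
    simpa using this
  have hiU : ∀ t : ℝ, 0 ≤ t → Integrable (fun ξ : EuclideanSpace ℝ (Fin 3) => ‖Uhat t ξ‖ ^ 2) := by
    intro t ht
    have := nsv_integrable _ (fun _ => 1) 1 (hUH1 t ht) continuous_const
      (fun ξ => by rw [abs_one]; nlinarith [sq_nonneg ‖ξ‖])
    simpa using this
  have hiU1 : ∀ t : ℝ, 0 ≤ t →
      Integrable (fun ξ : EuclideanSpace ℝ (Fin 3) => ‖ξ‖ ^ 2 * ‖Uhat t ξ‖ ^ 2) := by
    intro t ht
    exact nsv_integrable _ (fun ξ => ‖ξ‖ ^ 2) 1 (hUH1 t ht) (by fun_prop)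
      (fun ξ => by rw [abs_of_nonneg (by positivity)]; linarith)
  have hiU2 : ∀ t : ℝ, 0 ≤ t →
      Integrable (fun ξ : EuclideanSpace ℝ (Fin 3) => (1 + α ^ 2 * ‖ξ‖ ^ 2) * ‖Uhat t ξ‖ ^ 2) := by
    intro t ht
    exact nsv_integrable _ (fun ξ => 1 + α ^ 2 * ‖ξ‖ ^ 2) (1 + α ^ 2) (hUH1 t ht) (by fun_prop)
      (fun ξ => by rw [abs_of_nonneg (by positivity)]; nlinarith [sq_nonneg ‖ξ‖, sq_nonneg α])
  have hδ : 0 < ν - α ^ 2 := by linarith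
  obtain ⟨C, c, hC, hc, hlin⟩ := nsv_char F0 rstar (ν - α ^ 2) hδ hiF hchar
  set E : ℝ → ℝ := fun t =>
    ∫ ξ : EuclideanSpace ℝ (Fin 3), (1 + α ^ 2 * ‖ξ‖ ^ 2) * ‖Uhat t ξ‖ ^ 2 with hEdef
  set L : ℝ → ℝ := fun t => ∫ ξ : EuclideanSpace ℝ (Fin 3), ‖Uhat t ξ‖ ^ 2 with hLdef
  have hL0 : ∀ t, 0 ≤ L t := fun t => integral_nonneg (fun _ => by positivity)
  have hLE : ∀ t : ℝ, 0 ≤ t → L t ≤ E t := by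
    intro t ht
    apply integral_mono (hiU t ht) (hiU2 t ht)
    intro ξ
    show ‖Uhat t ξ‖ ^ 2 ≤ (1 + α ^ 2 * ‖ξ‖ ^ 2) * ‖Uhat t ξ‖ ^ 2
    have : 0 ≤ α ^ 2 * ‖ξ‖ ^ 2 * ‖Uhat t ξ‖ ^ 2 := by positivity
    linarith
  have hpt : ∀ t : ℝ, 0 ≤ t → ∀ᵐ ξ ∂(volume : Measure (EuclideanSpace ℝ (Fin 3))),
      ‖Uhat t ξ‖ ≤ ‖F0 ξ‖ + K * ‖ξ‖ * ∫ τ in (0:ℝ)..t, L τ := by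
    intro t ht
    filter_upwards [hDuhamel t ht] with ξ hξ
    have hM : -(ν * ‖ξ‖ ^ 2) / (1 + α ^ 2 * ‖ξ‖ ^ 2) ≤ 0 :=
      div_nonpos_of_nonpos_of_nonneg (by nlinarith [sq_nonneg ‖ξ‖]) (by positivity)
    have hexp : ∀ s : ℝ, 0 ≤ s →
        ‖Real.exp (s * (-(ν * ‖ξ‖ ^ 2) / (1 + α ^ 2 * ‖ξ‖ ^ 2)))‖ ≤ 1 := by
      intro s hs
      rw [Real.norm_eq_abs, Real.abs_exp]
      exact Real.exp_le_one_iff.2 (mul_nonpos_of_nonneg_of_nonpos hs hM)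
    rw [hξ]
    refine (norm_sub_le _ _).trans (add_le_add ?_ ?_)
    · rw [norm_smul]
      exact mul_le_of_le_one_left (norm_nonneg _) (hexp t ht)
    · rw [← intervalIntegral.integral_const_mul]
      apply intervalIntegral.norm_integral_le_of_norm_le ht _ ((hL2loc t ht).const_mul _)
      refine Eventually.of_forall (fun τ hτ => ?_)
      rw [norm_smul]
      exact (mul_le_of_le_one_left (norm_nonneg _) (hexp _ (by linarith [hτ.2]))).trans
        (hGbound ξ τ)
  set κ : ℝ := 1 + α ^ 2 / (ν - α ^ 2) with hκ
  have hκ0 : 0 ≤ κ := by positivity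
  set V : ℝ := volume.real (ball (0 : EuclideanSpace ℝ (Fin 3)) 1) with hV
  have hV0 : 0 ≤ V := measureReal_nonneg
  set c1 : ℝ := κ * (2 * K ^ 2 * V * (ν - α ^ 2) ^ (-(5:ℝ)/2)) with hc1
  have hc10 : 0 ≤ c1 := by positivity
  have hkey : ∀ᵐ s ∂(volume.restrict (Set.Ioi (0:ℝ))),
      D s ≤ -(2 / (C + s)) * (E s - (κ * (2 * c)) * (C + s) ^ (-(3/2 + rstar))
        - c1 * (C + s) ^ (-(5:ℝ)/2) * (∫ τ in (0:ℝ)..s, L τ) ^ 2) := by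
    filter_upwards [hEderiv, ae_restrict_mem measurableSet_Ioi] with s hs hs0
    have hs0' : (0:ℝ) < s := hs0
    have hT : 1 ≤ C + s := by linarith
    have hT0 : 0 < C + s := by linarith
    have hx : 0 < (ν - α ^ 2) * (C + s) := by positivity
    set ρ : ℝ := ((ν - α ^ 2) * (C + s)) ^ (-(1:ℝ)/2) with hρdef
    have hρ : 0 < ρ := Real.rpow_pos_of_pos hx _
    have hρ2 : ρ ^ 2 = 1 / ((ν - α ^ 2) * (C + s)) := by
      rw [hρdef, ← Real.rpow_natCast, ← Real.rpow_mul hx.le, one_div, ← Real.rpow_neg_one]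
      norm_num
    have hρ5 : ρ ^ 5 = (ν - α ^ 2) ^ (-(5:ℝ)/2) * (C + s) ^ (-(5:ℝ)/2) := by
      rw [hρdef, ← Real.rpow_natCast, ← Real.rpow_mul hx.le, ← Real.mul_rpow hδ.le hT0.le]
      norm_num
    have hΛ : 0 ≤ ∫ τ in (0:ℝ)..s, L τ :=
      intervalIntegral.integral_nonneg hs0'.le (fun u _ => hL0 u)
    have h1 := nsv_split (Uhat s) α ν (C + s) ρ hν hνα hT hρ hρ2 (hiU s hs0'.le) (hiU1 s hs0'.le)
      (hiU2 s hs0'.le)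
    have h2 := nsv_low (Uhat s) F0 K _ ρ hρ hK.le hΛ hiF (hiU s hs0'.le) (hpt s hs0'.le)
    have h3 := hlin (C + s) (by linarith) ρ hρ hρ2
    rw [hρ5] at h2
    have h4 : κ * (∫ ξ in closedBall (0 : EuclideanSpace ℝ (Fin 3)) ρ, ‖Uhat s ξ‖ ^ 2) ≤
        (κ * (2 * c)) * (C + s) ^ (-(3/2 + rstar))
        + c1 * (C + s) ^ (-(5:ℝ)/2) * (∫ τ in (0:ℝ)..s, L τ) ^ 2 := by
      calc _ ≤ κ * (2 * (c * (C + s) ^ (-(3/2 + rstar))) + 2 * K ^ 2 * V *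
              ((ν - α ^ 2) ^ (-(5:ℝ)/2) * (C + s) ^ (-(5:ℝ)/2)) * (∫ τ in (0:ℝ)..s, L τ) ^ 2) := by
            apply mul_le_mul_of_nonneg_left _ hκ0
            linarith
        _ = _ := by rw [hc1]; ring
    have h5 : E s - (κ * (2 * c)) * (C + s) ^ (-(3/2 + rstar))
        - c1 * (C + s) ^ (-(5:ℝ)/2) * (∫ τ in (0:ℝ)..s, L τ) ^ 2 ≤
        ν * (C + s) * ∫ ξ : EuclideanSpace ℝ (Fin 3), ‖ξ‖ ^ 2 * ‖Uhat s ξ‖ ^ 2 := by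
      have h1' : E s - κ * (∫ ξ in closedBall (0 : EuclideanSpace ℝ (Fin 3)) ρ, ‖Uhat s ξ‖ ^ 2)
        ≤ ν * (C + s) * ∫ ξ : EuclideanSpace ℝ (Fin 3), ‖ξ‖ ^ 2 * ‖Uhat s ξ‖ ^ 2 := h1
      linarith
    refine hs.trans ?_
    rw [neg_mul, neg_mul, neg_le_neg_iff, div_mul_eq_mul_div, div_le_iff₀ hT0]
    linarith
  have hE0 : 0 ≤ E 0 := (hL0 0).trans (hLE 0 le_rfl)
  have hdec : ∀ t : ℝ, 0 ≤ t → E t ≤ E 0 * (C + t) ^ (-(0:ℝ)) := by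
    intro t ht
    rw [neg_zero, Real.rpow_zero, mul_one]
    refine nsv_compare E D (fun _ => E 0) (fun _ => 0) hDint hE (fun t _ => hasDerivAt_const _ _)
      continuousOn_const le_rfl ?_ t ht
    filter_upwards [hEderiv] with s hs _
    have : 0 ≤ ∫ ξ : EuclideanSpace ℝ (Fin 3), ‖ξ‖ ^ 2 * ‖Uhat s ξ‖ ^ 2 :=
      integral_nonneg (fun _ => by positivity)
    nlinarith
  have hσ : 0 ≤ 3/2 + rstar := by linarith
  have hstep1 := nsv_step E D L C (κ * (2 * c)) c1 (3/2 + rstar) 0 (min (3/2 + rstar) (1/2)) (E 0)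
    hC (by positivity) hc10 le_rfl one_pos (le_min hσ (by norm_num))
    (lt_of_le_of_lt (min_le_right _ _) (by norm_num)) (min_le_left _ _)
    ((min_le_right _ _).trans (by norm_num)) hE0 hDint hL2loc (fun t _ => hL0 t) hLE hE hdec hkey
  obtain ⟨B, hB, hEB⟩ := hstep1
  rcases le_total (3/2 + rstar) (1/2) with hr | hr
  · refine ⟨B, hB, C, by linarith, fun t ht => ?_⟩
    have := hEB t ht.le
    rw [min_eq_left hr] at this
    rw [min_eq_left (by linarith)]
    exact this
  · rw [min_eq_right hr] at hEB
    obtain ⟨B', hB', hEB'⟩ := nsv_step E D L C (κ * (2 * c)) c1 (3/2 + rstar) (1/2)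
      (min (3/2 + rstar) (3/2)) B
      hC (by positivity) hc10 (by norm_num) (by norm_num) (le_min hσ (by norm_num))
      (lt_of_le_of_lt (min_le_right _ _) (by norm_num)) (min_le_left _ _)
      ((min_le_right _ _).trans (by norm_num)) hB.le hDint hL2loc (fun t _ => hL0 t) hLE hE hEB hkey
    exact ⟨B', hB', C, by linarith, fun t ht => hEB' t ht.le⟩
end
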